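/- Let x → ∞. Then max_{n ≤ x} log δ(δ(n)) = (√(log x)/log₂ x)·( c/√2 + O(log₃ x / log₂ x) ), where c = (8·∑_{l=1}^∞ (log(1 + 1/l))²)^{1/2} and log_k denotes the k-fold iterated natural logarithm. -/

import Mathlib

open Filter

/-- `r2 n` counts the representations of `n` as a sum of two squares
(signs and order counted). -/
noncomputable def r2 (n : ℕ) : ℕ :=
  Nat.card {p : ℤ × ℤ // p.1 ^ 2 + p.2 ^ 2 = (n : ℤ)}

/- `delta` is the function `δ(n) = r₂(n)/4`, viewed as a real-valued function of a real
variable (taking the value `0` outside of the natural numbers) so that it can be iterated. -/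
open scoped Classical in
noncomputable def delta : ℝ → ℝ := fun x =>
  if h : ∃ n : ℕ, (n : ℝ) = x then (r2 h.choose : ℝ) / 4 else 0

/-- The constant `c = (8·∑_{l=1}^∞ (log(1 + 1/l))²)^{1/2}`. -/
noncomputable def cBEFS : ℝ :=
  Real.sqrt (8 * ∑' l : ℕ, (Real.log (1 + 1 / ((l : ℝ) + 1))) ^ 2)


/-! ### Growth of Dirichlet L-functions -/
namespace BEFS
set_option linter.unusedSectionVars false
open DirichletCharacter MeasureTheory Set Complex

variable {N : ℕ} [NeZero N]

noncomputable def chm (χ : DirichletCharacter ℂ N) : ℂ := (∑ k ∈ Finset.range N, χ (k : ZMod N)) / N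

lemma chP_periodic (χ : DirichletCharacter ℂ N) (m : ℕ) :
    ∑ k ∈ Finset.range (m + N), (χ (k : ZMod N) - chm χ) =
      ∑ k ∈ Finset.range m, (χ (k : ZMod N) - chm χ) := by
  rw [add_comm, Finset.sum_range_add]
  have hN : (N : ℂ) ≠ 0 := by exact_mod_cast NeZero.ne N
  have h0 : ∑ k ∈ Finset.range N, (χ (k : ZMod N) - chm χ) = 0 := by
    rw [Finset.sum_sub_distrib]; simp [chm]; field_simp; simp
  rw [h0, zero_add]
  apply Finset.sum_congr rfl
  intro k _
  simp

lemma chP_bdd (χ : DirichletCharacter ℂ N) :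
    ∃ B : ℝ, 0 ≤ B ∧ ∀ m : ℕ, ‖∑ k ∈ Finset.range m, (χ (k : ZMod N) - chm χ)‖ ≤ B := by
  refine ⟨∑ j ∈ Finset.range N, ‖∑ k ∈ Finset.range j, (χ (k : ZMod N) - chm χ)‖,
    by positivity, ?_⟩
  intro m
  induction m using Nat.strong_induction_on with
  | _ m ih =>
    by_cases h : m < N
    · exact Finset.single_le_sum (f := fun j => ‖∑ k ∈ Finset.range j, (χ (k : ZMod N) - chm χ)‖)
        (fun _ _ => norm_nonneg _) (Finset.mem_range.2 h)
    · have h2 : m = (m - N) + N := by omega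
      rw [h2, chP_periodic]
      apply ih
      have := NeZero.pos N
      omega

noncomputable def tl (χ : DirichletCharacter ℂ N) (M : ℕ) (k : ℕ) : ℂ :=
  if M < k then χ (k : ZMod N) else 0

noncomputable def RM (χ : DirichletCharacter ℂ N) (M : ℕ) (t : ℝ) : ℂ :=
  ∑ k ∈ Finset.Icc 1 ⌊t⌋₊, tl χ M k - chm χ * ((max (t - M) 0 : ℝ) : ℂ)

lemma sum_tl_of_le (χ : DirichletCharacter ℂ N) (M n : ℕ) (h : n ≤ M) :
    ∑ k ∈ Finset.Icc 1 n, tl χ M k = 0 := by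
  apply Finset.sum_eq_zero
  intro k hk
  rw [Finset.mem_Icc] at hk
  simp [tl]; intro; omega

lemma sum_tl (χ : DirichletCharacter ℂ N) (M n : ℕ) (h : M ≤ n) :
    ∑ k ∈ Finset.Icc 1 n, tl χ M k - chm χ * ((n : ℂ) - M) =
     ∑ k ∈ Finset.range (n+1), (χ (k : ZMod N) - chm χ) -
      ∑ k ∈ Finset.range (M+1), (χ (k : ZMod N) - chm χ) := by
  induction n, h using Nat.le_induction with
  | base => simp [sum_tl_of_le]
  | succ n hn ih =>
    rw [Finset.sum_Icc_succ_top (by omega), Finset.sum_range_succ _ (n+1)]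
    have : tl χ M (n+1) = χ ((n+1 : ℕ) : ZMod N) := by simp [tl]; intro; omega
    rw [this]
    push_cast at *
    linear_combination ih

lemma RM_of_le (χ : DirichletCharacter ℂ N) (M : ℕ) (t : ℝ) (h : t ≤ M) : RM χ M t = 0 := by
  have : max (t - M) 0 = 0 := max_eq_right (by linarith)
  simp only [RM, this]
  rw [sum_tl_of_le]; · simp
  exact Nat.floor_le_of_le h

lemma RM_bdd (χ : DirichletCharacter ℂ N) : ∃ B : ℝ, 0 < B ∧ ∀ M : ℕ, ∀ t : ℝ, ‖RM χ M t‖ ≤ B := by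
  obtain ⟨B, hB, h⟩ := chP_bdd χ
  refine ⟨B + B + ‖chm χ‖ + 1, by positivity, ?_⟩
  intro M t
  by_cases ht : t ≤ M
  · rw [RM_of_le _ _ _ ht]; simp; positivity
  push Not at ht
  have ht0 : 0 ≤ t := le_trans (by positivity) ht.le
  have hM : M ≤ ⌊t⌋₊ := Nat.le_floor ht.le
  have : max (t - M) 0 = t - M := max_eq_left (by linarith)
  have e : RM χ M t = (∑ k ∈ Finset.range (⌊t⌋₊+1), (χ (k : ZMod N) - chm χ) -
      ∑ k ∈ Finset.range (M+1), (χ (k : ZMod N) - chm χ)) - chm χ * ((t - ⌊t⌋₊ : ℝ) : ℂ) := by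
    rw [← sum_tl _ _ _ hM, RM, this]; push_cast; ring
  rw [e]
  have h3 : ‖((t - ⌊t⌋₊ : ℝ) : ℂ)‖ ≤ 1 := by
    rw [Complex.norm_real, Real.norm_eq_abs, abs_le]
    constructor <;> linarith [Nat.floor_le ht0, Nat.lt_floor_add_one t]
  have h4 : ‖chm χ * ((t - ⌊t⌋₊ : ℝ) : ℂ)‖ ≤ ‖chm χ‖ := by
    rw [norm_mul]; exact mul_le_of_le_one_right (norm_nonneg _) h3
  calc _ ≤ _ + _ := norm_sub_le _ _
    _ ≤ (_ + _) + _ := by gcongr; exact norm_sub_le _ _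
    _ ≤ B + B + ‖chm χ‖ + 1 := by linarith [h (⌊t⌋₊+1), h (M+1)]

lemma RM_meas (χ : DirichletCharacter ℂ N) (M : ℕ) : Measurable (RM χ M) := by
  unfold RM
  apply Measurable.sub
  · exact (measurable_from_nat (f := fun n => ∑ k ∈ Finset.Icc 1 n, tl χ M k)).comp Nat.measurable_floor
  · fun_prop

lemma RM_diff (χ : DirichletCharacter ℂ N) (M : ℕ) (hM : 1 ≤ M) {s : ℂ} (hs : 0 < s.re) :
    DifferentiableAt ℂ (fun s => mellin (RM χ M) (-s)) s := by
  obtain ⟨B, hB, h⟩ := RM_bdd χ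
  have : DifferentiableAt ℂ (mellin (RM χ M)) (-s) := by
    apply mellin_differentiableAt_of_isBigO_rpow (a := 0) (b := -s.re - 1)
    · apply LocallyIntegrable.locallyIntegrableOn
      exact (locallyIntegrable_const B).mono (RM_meas χ M).aestronglyMeasurable
        (ae_of_all _ fun t => by rw [Real.norm_of_nonneg hB.le]; exact h M t)
    · simp only [neg_zero, Real.rpow_zero]
      exact Asymptotics.isBigO_of_le' (c := B) _ (fun t => by simpa using h M t)
    · simpa using hs
    · apply Asymptotics.IsBigO.of_bound 0
      have : Iio (1 : ℝ) ∈ nhdsWithin (0 : ℝ) (Ioi 0) := mem_nhdsWithin_of_mem_nhds (Iio_mem_nhds one_pos)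
      filter_upwards [this] with t ht
      have ht : t < 1 := ht
      rw [RM_of_le _ _ _ (ht.le.trans (by exact_mod_cast hM))]; simp
    · simp
  exact DifferentiableAt.comp (g := mellin (RM χ M)) (f := fun s => -s) s this differentiable_neg.differentiableAt

lemma RM_norm (χ : DirichletCharacter ℂ N) {B : ℝ} (hB : ∀ M : ℕ, ∀ t : ℝ, ‖RM χ M t‖ ≤ B)
    (M : ℕ) (hM : 1 ≤ M) {s : ℂ} (hs : 0 < s.re) :
    ‖mellin (RM χ M) (-s)‖ ≤ B * ((M : ℝ) ^ (-s.re) / s.re) := by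
  have hM0 : (0 : ℝ) < M := by exact_mod_cast hM
  have e : mellin (RM χ M) (-s) = ∫ t in Ioi (M : ℝ), (t : ℂ) ^ (-s - 1) • RM χ M t := by
    rw [mellin]
    apply setIntegral_eq_of_subset_of_forall_sdiff_eq_zero measurableSet_Ioi
    · exact Ioi_subset_Ioi hM0.le
    · intro t ht
      have : t ≤ M := by simpa using ht.2
      rw [RM_of_le _ _ _ this, smul_zero]
  rw [e]
  have hint : IntegrableOn (fun t : ℝ => B * t ^ (-s.re - 1)) (Ioi (M : ℝ)) :=
    (integrableOn_Ioi_rpow_of_lt (by linarith) hM0).const_mul B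
  calc _ ≤ ∫ t in Ioi (M : ℝ), B * t ^ (-s.re - 1) := by
        apply norm_integral_le_of_norm_le hint
        filter_upwards [ae_restrict_mem measurableSet_Ioi] with t ht
        have ht0 : 0 < t := hM0.trans ht
        rw [norm_smul, Complex.norm_cpow_eq_rpow_re_of_pos ht0, mul_comm]
        simp only [sub_re, neg_re, one_re]
        gcongr; exact hB M t
    _ = _ := by
        rw [integral_const_mul, integral_Ioi_rpow_of_lt (by linarith) hM0]
        congr 1
        rw [show -s.re - 1 + 1 = -s.re by ring, neg_div_neg_eq]

lemma L_formula_right (χ : DirichletCharacter ℂ N) (M : ℕ) (hM : 1 ≤ M) {s : ℂ} (hs : 1 < s.re) :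
    LFunction χ s = ∑ n ∈ Finset.Icc 1 M, χ (n : ZMod N) * (n : ℂ) ^ (-s)
      + chm χ * ((M : ℂ) ^ (1 - s) / (s - 1)) + s * mellin (RM χ M) (-s) := by
  have hM0 : (0 : ℝ) < M := by exact_mod_cast hM
  have hs0 : s ≠ 0 := by rintro rfl; simp at hs; linarith
  have hs1 : s - 1 ≠ 0 := by intro h; have := congrArg Complex.re h; simp at this; linarith
  obtain ⟨B, hB, hb⟩ := RM_bdd χ
  -- decomposition of the series
  have hsumm : LSeriesSummable (fun n => χ (n : ZMod N)) s :=
    DirichletCharacter.LSeriesSummable_of_one_lt_re χ hs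
  have hsplit : (fun n : ℕ => χ (n : ZMod N)) = (fun n : ℕ => if n ≤ M then χ (n : ZMod N) else 0) + tl χ M := by
    funext n; simp only [Pi.add_apply, tl]
    by_cases h : n ≤ M
    · simp [h]
    · simp [h]
  have hfin : LSeriesHasSum (fun n : ℕ => if n ≤ M then χ (n : ZMod N) else 0) s
      (∑ n ∈ Finset.Icc 1 M, χ (n : ZMod N) * (n : ℂ) ^ (-s)) := by
    have h1 : ∑ n ∈ Finset.Icc 1 M, χ (n : ZMod N) * (n : ℂ) ^ (-s) =
      ∑ n ∈ Finset.Icc 1 M, LSeries.term (fun n : ℕ => if n ≤ M then χ (n : ZMod N) else 0) s n := by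
      apply Finset.sum_congr rfl
      intro n hn
      rw [Finset.mem_Icc] at hn
      rw [LSeries.term_of_ne_zero (by omega)]
      simp [hn.2, Complex.cpow_neg, div_eq_mul_inv]
    rw [h1]
    apply hasSum_sum_of_ne_finset_zero
    intro n hn
    rcases Nat.eq_zero_or_pos n with rfl | hn0
    · simp
    · rw [LSeries.term_of_ne_zero (by omega)]
      rw [Finset.mem_Icc] at hn
      have : ¬ (n ≤ M) := by omega
      simp [this]
  have htl : LSeriesSummable (tl χ M) s := by
    have : tl χ M = (fun n : ℕ => χ (n : ZMod N)) - (fun n : ℕ => if n ≤ M then χ (n : ZMod N) else 0) := by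
      rw [hsplit]; simp
    rw [this]
    exact hsumm.sub hfin.LSeriesSummable
  rw [DirichletCharacter.LFunction_eq_LSeries χ hs, hsplit, LSeries_add hfin.LSeriesSummable htl, hfin.LSeries_eq,
    add_assoc]
  congr 1
  rw [LSeries_eq_mul_integral' (tl χ M) (r := 1) zero_le_one hs]
  · have e1 : ∀ t : ℝ, (∑ k ∈ Finset.Icc 1 ⌊t⌋₊, tl χ M k) =
        RM χ M t + chm χ * ((max (t - M) 0 : ℝ) : ℂ) := by
      intro t; rw [RM]; ring
    have hi1 : IntegrableOn (fun t : ℝ => (t : ℂ) ^ (-s - 1) • RM χ M t) (Ioi (M : ℝ)) := by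
      have hint : IntegrableOn (fun t : ℝ => B * t ^ (-s.re - 1)) (Ioi (M : ℝ)) :=
        (integrableOn_Ioi_rpow_of_lt (by linarith) hM0).const_mul B
      apply Integrable.mono' hint
      · apply AEStronglyMeasurable.fun_smul
        · apply ContinuousOn.aestronglyMeasurable _ measurableSet_Ioi
          intro t ht
          have ht0 : 0 < t := hM0.trans ht
          exact (continuousAt_ofReal_cpow_const _ _ (Or.inr ht0.ne')).continuousWithinAt
        · exact (RM_meas χ M).aestronglyMeasurable
      · filter_upwards [ae_restrict_mem measurableSet_Ioi] with t ht
        have ht0 : 0 < t := hM0.trans ht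
        rw [norm_smul, Complex.norm_cpow_eq_rpow_re_of_pos ht0, mul_comm]
        simp only [sub_re, neg_re, one_re]
        gcongr; exact hb M t
    have hi2 : IntegrableOn (fun t : ℝ => (t : ℂ) ^ (-s)) (Ioi (M : ℝ)) :=
      integrableOn_Ioi_cpow_of_lt (by simpa using hs) hM0
    have hi3 : IntegrableOn (fun t : ℝ => (t : ℂ) ^ (-s - 1)) (Ioi (M : ℝ)) :=
      integrableOn_Ioi_cpow_of_lt (by simp; linarith) hM0
    have e2 : ∫ t in Ioi (1 : ℝ), (∑ k ∈ Finset.Icc 1 ⌊t⌋₊, tl χ M k) * (t : ℂ) ^ (-(s + 1)) =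
       ∫ t in Ioi (M : ℝ), (∑ k ∈ Finset.Icc 1 ⌊t⌋₊, tl χ M k) * (t : ℂ) ^ (-(s + 1)) := by
      apply setIntegral_eq_of_subset_of_forall_sdiff_eq_zero measurableSet_Ioi
      · exact Ioi_subset_Ioi (by exact_mod_cast hM)
      · intro t ht
        have : t ≤ M := by simpa using ht.2
        rw [sum_tl_of_le _ _ _ (Nat.floor_le_of_le this), zero_mul]
    have e3 : mellin (RM χ M) (-s) = ∫ t in Ioi (M : ℝ), (t : ℂ) ^ (-s - 1) • RM χ M t := by
      rw [mellin]
      apply setIntegral_eq_of_subset_of_forall_sdiff_eq_zero measurableSet_Ioi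
      · exact Ioi_subset_Ioi hM0.le
      · intro t ht
        have : t ≤ M := by simpa using ht.2
        rw [RM_of_le _ _ _ this, smul_zero]
    have e4 : ∫ t in Ioi (M : ℝ), (∑ k ∈ Finset.Icc 1 ⌊t⌋₊, tl χ M k) * (t : ℂ) ^ (-(s + 1)) =
      ∫ t in Ioi (M : ℝ), ((t : ℂ) ^ (-s - 1) • RM χ M t + chm χ * ((t : ℂ) ^ (-s) - M * (t : ℂ) ^ (-s - 1))) := by
      apply setIntegral_congr_fun measurableSet_Ioi
      intro t ht
      have ht0 : 0 < t := hM0.trans ht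
      have htM : max (t - M) 0 = t - M := max_eq_left (by have : (M:ℝ) < t := ht; linarith)
      have htt : (t : ℂ) ^ (-s) = t * (t : ℂ) ^ (-s - 1) := by
        rw [Complex.cpow_sub _ _ (by exact_mod_cast ht0.ne'), Complex.cpow_one]
        field_simp [ht0.ne']
      simp only [e1, htM, smul_eq_mul, htt]
      rw [show -(s+1) = -s - 1 by ring]
      push_cast
      ring
    have hi4 : IntegrableOn (fun t : ℝ => chm χ * ((t : ℂ) ^ (-s) - M * (t : ℂ) ^ (-s - 1))) (Ioi (M : ℝ)) :=
      (hi2.sub (hi3.const_mul _)).const_mul _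
    rw [e2, e4, integral_add hi1 hi4, ← e3, mul_add,
      add_comm, integral_const_mul, integral_sub hi2 (hi3.const_mul _), integral_const_mul,
      integral_Ioi_cpow_of_lt (by simpa using hs) hM0, integral_Ioi_cpow_of_lt (by simp; linarith) hM0]
    congr 1
    have hMc : (M : ℂ) ≠ 0 := by exact_mod_cast hM0.ne'
    have h5 : (M : ℂ) ^ (1 - s) = M * (M : ℂ) ^ (-s) := by
      rw [sub_eq_add_neg, Complex.cpow_add _ _ hMc, Complex.cpow_one]
    rw [show -s + 1 = 1 - s by ring, show -s - 1 + 1 = -s by ring]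
    push_cast
    rw [h5]
    have : 1 - s ≠ 0 := by intro h; apply hs1; linear_combination -h
    field_simp
    ring
  · apply Asymptotics.IsBigO.of_bound 1
    filter_upwards with n
    rw [Real.norm_of_nonneg (by positivity)]
    simp only [Real.rpow_one, one_mul, Real.norm_natCast]
    calc _ ≤ ∑ k ∈ Finset.Icc 1 n, (1 : ℝ) := by
          apply Finset.sum_le_sum
          intro k _
          unfold tl
          split_ifs
          · exact χ.norm_le_one _
          · simp
      _ = n := by simp

lemma L_formula (χ : DirichletCharacter ℂ N) (M : ℕ) (hM : 1 ≤ M) {s : ℂ} (hs : 0 < s.re) (hs' : s.im ≠ 0) :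
    LFunction χ s = ∑ n ∈ Finset.Icc 1 M, χ (n : ZMod N) * (n : ℂ) ^ (-s)
      + chm χ * ((M : ℂ) ^ (1 - s) / (s - 1)) + s * mellin (RM χ M) (-s) := by
  have key : ∀ e : ℝ, e ≠ 0 → 0 < e * s.im → LFunction χ s = ∑ n ∈ Finset.Icc 1 M, χ (n : ZMod N) * (n : ℂ) ^ (-s)
      + chm χ * ((M : ℂ) ^ (1 - s) / (s - 1)) + s * mellin (RM χ M) (-s) := by
    intro e he hes
    set U : Set ℂ := {s | 0 < s.re ∧ 0 < e * s.im}
    have hUo : IsOpen U := by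
      apply IsOpen.inter
      · exact isOpen_lt continuous_const Complex.continuous_re
      · exact isOpen_lt continuous_const (continuous_const.mul Complex.continuous_im)
    have hUc : Convex ℝ U := by
      rintro a ⟨ha, ha'⟩ b ⟨hb, hb'⟩ p q hp hq hpq
      have hpp : 0 < p ∨ 0 < q := by
        rcases hp.lt_or_eq with h | h
        · exact Or.inl h
        · right; linarith
      refine ⟨?_, ?_⟩
      · simp only [add_re, real_smul, mul_re, ofReal_re, ofReal_im, zero_mul, sub_zero]
        rcases hpp with h | h <;> nlinarith [mul_nonneg hp ha.le, mul_nonneg hq hb.le, mul_pos h ha, mul_pos h hb]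
      · simp only [add_im, real_smul, mul_im, ofReal_re, ofReal_im, zero_mul, add_zero]
        have : e * (p * a.im + q * b.im) = p * (e * a.im) + q * (e * b.im) := by ring
        rw [this]
        rcases hpp with h | h <;> nlinarith [mul_nonneg hp ha'.le, mul_nonneg hq hb'.le, mul_pos h ha', mul_pos h hb']
    have hne : ∀ z ∈ U, z ≠ 1 := by
      rintro z ⟨_, hz⟩ rfl
      simp at hz
    have hMc : (M : ℂ) ≠ 0 := by exact_mod_cast (by omega : M ≠ 0)
    have a1 : AnalyticOnNhd ℂ (LFunction χ) U :=
      DifferentiableOn.analyticOnNhd (fun z hz => (differentiableAt_LFunction χ z (Or.inl (hne z hz))).differentiableWithinAt) hUo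
    have a2 : AnalyticOnNhd ℂ (fun s => ∑ n ∈ Finset.Icc 1 M, χ (n : ZMod N) * (n : ℂ) ^ (-s)
      + chm χ * ((M : ℂ) ^ (1 - s) / (s - 1)) + s * mellin (RM χ M) (-s)) U := by
      apply DifferentiableOn.analyticOnNhd _ hUo
      intro z hz
      apply DifferentiableAt.differentiableWithinAt
      have hz1 : z - 1 ≠ 0 := sub_ne_zero.2 (hne z hz)
      refine DifferentiableAt.add (DifferentiableAt.add ?_ ?_) ?_
      · apply DifferentiableAt.fun_sum
        intro n hn
        rw [Finset.mem_Icc] at hn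
        have hnc : (n : ℂ) ≠ 0 := by exact_mod_cast (by omega : n ≠ 0)
        exact ((differentiableAt_id.neg).const_cpow (Or.inl hnc)).const_mul _
      · refine DifferentiableAt.const_mul (DifferentiableAt.fun_div (d := fun s => s - 1) ?_ (by fun_prop) hz1) _
        exact DifferentiableAt.const_cpow (by fun_prop) (Or.inl hMc)
      · exact differentiableAt_id.mul (RM_diff χ M hM hz.1)
    have hz0 : (2 + e * I : ℂ) ∈ U := by
      refine ⟨by simp, by simp; positivity⟩
    have heq := a1.eqOn_of_preconnected_of_eventuallyEq a2 hUc.isPreconnected hz0 (by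
      have : {z : ℂ | 1 < z.re} ∈ nhds (2 + e * I : ℂ) := by
        apply (isOpen_lt continuous_const Complex.continuous_re).mem_nhds
        simp
      filter_upwards [this] with z hz
      exact L_formula_right χ M hM hz)
    exact heq ⟨hs, hes⟩
  rcases lt_or_gt_of_ne hs' with h | h
  · exact key (-1) (by norm_num) (by linarith)
  · exact key 1 (by norm_num) (by linarith)
end BEFS

namespace BEFS
set_option linter.unusedSectionVars false
open DirichletCharacter MeasureTheory Set Complex
variable {N : ℕ} [NeZero N]

lemma sum_rpow_le (M : ℕ) : ∑ n ∈ Finset.Icc 1 M, (n : ℝ) ^ (-(15/16) : ℝ) ≤ 16 * (M : ℝ) ^ (1/16 : ℝ) := by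
  induction M with
  | zero => simp
  | succ n ih =>
    rw [Finset.sum_Icc_succ_top (by omega)]
    have hn : (0 : ℝ) < (n + 1 : ℕ) := by positivity
    have h1 : (n : ℝ) ^ (1/16 : ℝ) ≤ ((n + 1 : ℕ) : ℝ) ^ (1/16 : ℝ) * (1 + (1/16) * (-(1 / ((n + 1 : ℕ) : ℝ)))) := by
      have e : (n : ℝ) = ((n + 1 : ℕ) : ℝ) * (1 + (-(1 / ((n + 1 : ℕ) : ℝ)))) := by
        field_simp; push_cast; ring
      have h0 : -1 ≤ -(1 / ((n + 1 : ℕ) : ℝ)) := by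
        rw [neg_le_neg_iff, div_le_one hn]; push_cast; linarith [(Nat.cast_nonneg n : (0:ℝ) ≤ n)]
      conv_lhs => rw [e]
      rw [Real.mul_rpow hn.le (by linarith)]
      gcongr
      exact rpow_one_add_le_one_add_mul_self h0 (by norm_num) (by norm_num)
    have h2 : ((n + 1 : ℕ) : ℝ) ^ (1/16 : ℝ) = ((n + 1 : ℕ) : ℝ) ^ (-(15/16) : ℝ) * ((n + 1 : ℕ) : ℝ) := by
      rw [← Real.rpow_add_one hn.ne']; norm_num
    have h3 : ((n + 1 : ℕ) : ℝ) ^ (1/16 : ℝ) * (1 + (1/16) * (-(1 / ((n + 1 : ℕ) : ℝ)))) =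
       ((n + 1 : ℕ) : ℝ) ^ (1/16 : ℝ) - (1/16) * ((n + 1 : ℕ) : ℝ) ^ (-(15/16) : ℝ) := by
      rw [h2]; field_simp; ring
    linarith

lemma L_growth (χ : DirichletCharacter ℂ N) : ∃ C : ℝ, 0 < C ∧ ∀ s : ℂ, 15/16 ≤ s.re → s.re ≤ 4 → 1 ≤ |s.im| →
    ‖LFunction χ s‖ ≤ C * |s.im| ^ (1/16 : ℝ) := by
  obtain ⟨B, hB, hb⟩ := RM_bdd χ
  refine ⟨16 + ‖chm χ‖ + 20 * B, by positivity, ?_⟩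
  intro s h1 h2 ht
  set M := ⌊|s.im|⌋₊ with hMdef
  have hM : 1 ≤ M := Nat.le_floor (by simpa using ht)
  have hM1 : (1 : ℝ) ≤ M := by exact_mod_cast hM
  have hM0 : (0 : ℝ) < M := by linarith
  have hMt : (M : ℝ) ≤ |s.im| := Nat.floor_le (by positivity)
  have htM : |s.im| ≤ 2 * M := by have := Nat.lt_floor_add_one |s.im|; rw [← hMdef] at this; linarith
  have hs0 : s.im ≠ 0 := by intro h; rw [h] at ht; simp at ht; linarith
  rw [L_formula χ M hM (by linarith) hs0]
  have hu : (M : ℝ) ^ (1/16 : ℝ) ≤ |s.im| ^ (1/16 : ℝ) := by gcongr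
  have hp : (M : ℝ) ^ (1 - s.re) ≤ (M : ℝ) ^ (1/16 : ℝ) := Real.rpow_le_rpow_of_exponent_le hM1 (by linarith)
  have t1 : ‖∑ n ∈ Finset.Icc 1 M, χ (n : ZMod N) * (n : ℂ) ^ (-s)‖ ≤ 16 * (M : ℝ) ^ (1/16 : ℝ) := by
    refine le_trans (norm_sum_le _ _) (le_trans (Finset.sum_le_sum ?_) (sum_rpow_le M))
    intro n hn
    rw [Finset.mem_Icc] at hn
    have hn1 : (1 : ℝ) ≤ n := by exact_mod_cast hn.1
    rw [norm_mul, Complex.norm_natCast_cpow_of_pos (by omega)]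
    calc _ ≤ 1 * (n : ℝ) ^ (-s).re := by gcongr; exact χ.norm_le_one _
      _ ≤ _ := by rw [one_mul]; apply Real.rpow_le_rpow_of_exponent_le hn1; simp; linarith
  have t2 : ‖chm χ * ((M : ℂ) ^ (1 - s) / (s - 1))‖ ≤ ‖chm χ‖ * (M : ℝ) ^ (1/16 : ℝ) := by
    rw [norm_mul, norm_div, Complex.norm_natCast_cpow_of_pos (by omega)]
    gcongr
    have : 1 ≤ ‖s - 1‖ := by
      refine le_trans ht (le_trans ?_ (Complex.abs_im_le_norm _)); simp
    calc _ ≤ (M : ℝ) ^ (1 - s).re / 1 := by gcongr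
      _ ≤ _ := by rw [div_one]; simpa using hp
  have t3 : ‖s * mellin (RM χ M) (-s)‖ ≤ 20 * B * (M : ℝ) ^ (1/16 : ℝ) := by
    rw [norm_mul]
    have hs : ‖s‖ ≤ 10 * M := by
      refine le_trans (Complex.norm_le_abs_re_add_abs_im s) ?_
      rw [abs_of_nonneg (by linarith : 0 ≤ s.re)]
      linarith
    have h3 := RM_norm χ hb M hM (s := s) (by linarith)
    have h4 : (M : ℝ) ^ (-s.re) / s.re ≤ (M : ℝ) ^ (-s.re) * 2 := by
      rw [div_eq_mul_inv]
      gcongr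
      rw [inv_le_comm₀ (by linarith) (by norm_num)]; linarith
    calc _ ≤ (10 * M) * (B * ((M : ℝ) ^ (-s.re) * 2)) := by
          gcongr
          exact h3.trans (by gcongr)
      _ = 20 * B * ((M : ℝ) ^ (-s.re) * M) := by ring
      _ = 20 * B * ((M : ℝ) ^ (1 - s.re)) := by
          rw [← Real.rpow_add_one hM0.ne']; ring_nf
      _ ≤ _ := by gcongr
  calc _ ≤ _ := norm_add₃_le
    _ ≤ 16 * (M : ℝ) ^ (1/16 : ℝ) + ‖chm χ‖ * (M : ℝ) ^ (1/16 : ℝ) + 20 * B * (M : ℝ) ^ (1/16 : ℝ) := by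
      linarith
    _ = (16 + ‖chm χ‖ + 20 * B) * (M : ℝ) ^ (1/16 : ℝ) := by ring
    _ ≤ _ := by gcongr

lemma L_deriv_growth (χ : DirichletCharacter ℂ N) : ∃ C : ℝ, 0 < C ∧ ∀ j ≤ 3, ∀ s : ℂ, 1 ≤ s.re → s.re ≤ 3 → 2 ≤ |s.im| →
    ‖iteratedDeriv j (LFunction χ) s‖ ≤ C * |s.im| ^ (1/16 : ℝ) := by
  obtain ⟨C, hC, h⟩ := L_growth χ
  refine ⟨6 * (C * 2) * 16 ^ 3, by positivity, ?_⟩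
  intro j hj s h1 h2 ht
  have hball : ∀ z ∈ Metric.closedBall s (1/16 : ℝ), |z.im - s.im| ≤ 1/16 ∧ |z.re - s.re| ≤ 1/16 := by
    intro z hz
    rw [Metric.mem_closedBall, dist_eq_norm] at hz
    exact ⟨by simpa using (Complex.abs_im_le_norm (z - s)).trans hz, by simpa using (Complex.abs_re_le_norm (z - s)).trans hz⟩
  have hdiff : DiffContOnCl ℂ (LFunction χ) (Metric.ball s (1/16)) := by
    apply DifferentiableOn.diffContOnCl
    intro z hz
    rw [closure_ball s (by norm_num)] at hz
    apply DifferentiableAt.differentiableWithinAt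
    apply differentiableAt_LFunction
    left
    rintro rfl
    have := (hball 1 hz).1
    simp at this; linarith
  have hbd : ∀ z ∈ Metric.sphere s (1/16 : ℝ), ‖LFunction χ z‖ ≤ C * (2 * |s.im| ^ (1/16 : ℝ)) := by
    intro z hz
    obtain ⟨b1, b2⟩ := hball z (Metric.sphere_subset_closedBall hz)
    rw [abs_le] at b2
    have b3 : |s.im| - |z.im| ≤ 1/16 := (abs_sub_abs_le_abs_sub _ _).trans (by rw [abs_sub_comm]; exact b1)
    have b4 : |z.im| - |s.im| ≤ 1/16 := (abs_sub_abs_le_abs_sub _ _).trans b1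
    refine (h z (by linarith) (by linarith) (by linarith)).trans ?_
    gcongr
    calc |z.im| ^ (1/16 : ℝ) ≤ (2 * |s.im|) ^ (1/16 : ℝ) := by gcongr; linarith
      _ = 2 ^ (1/16 : ℝ) * |s.im| ^ (1/16 : ℝ) := by rw [Real.mul_rpow (by norm_num) (by positivity)]
      _ ≤ 2 ^ (1 : ℝ) * |s.im| ^ (1/16 : ℝ) := by
        gcongr
        · norm_num
        · norm_num
      _ = _ := by norm_num
  have := Complex.norm_iteratedDeriv_le_of_forall_mem_sphere_norm_le j (by norm_num : (0:ℝ) < 1/16) hdiff hbd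
  refine this.trans ?_
  have hf : ((j.factorial : ℕ) : ℝ) ≤ 6 := by
    have : j.factorial ≤ 6 := by interval_cases j <;> decide
    exact_mod_cast this
  have h16 : ((1/16 : ℝ) ^ j)⁻¹ ≤ 16 ^ 3 := by
    rw [one_div, inv_pow, inv_inv]
    exact pow_le_pow_right₀ (by norm_num) hj
  rw [div_eq_mul_inv]
  calc _ ≤ 6 * (C * (2 * |s.im| ^ (1/16 : ℝ))) * 16 ^ 3 := by gcongr
    _ = _ := by ring

lemma L_triv_near : ∃ C : ℝ, 0 < C ∧ ∀ x : ℝ, 0 < x → x ≤ 1 → ‖LFunctionTrivChar N (1 + x)‖ * x ≤ C := by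
  have hc : Continuous (fun x : ℝ => LFunctionTrivChar₁ N (1 + x)) :=
    (differentiable_LFunctionTrivChar₁ N).continuous.comp (by fun_prop)
  obtain ⟨C, hC⟩ := (isCompact_Icc (a := (0:ℝ)) (b := 1)).exists_bound_of_continuousOn hc.continuousOn
  refine ⟨|C| + 1, by positivity, ?_⟩
  intro x h0 h1
  have := hC x ⟨h0.le, h1⟩
  have hne : (1 + x : ℂ) ≠ 1 := by simpa using h0.ne'
  rw [LFunctionTrivChar₁, Function.update_of_ne hne] at this
  rw [norm_mul] at this
  simp only [add_sub_cancel_left, Complex.norm_real, Real.norm_of_nonneg h0.le] at this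
  rw [mul_comm]
  linarith [le_abs_self C]

lemma L_lower (χ : DirichletCharacter ℂ N) : ∃ c : ℝ, 0 < c ∧ ∀ s : ℂ, 1 ≤ s.re → s.re ≤ 2 → 2 ≤ |s.im| →
    c ≤ ‖LFunction χ s‖ * (|s.im| ^ (1/16 : ℝ)) ^ 4 := by
  obtain ⟨C, hC, hd⟩ := L_deriv_growth χ
  obtain ⟨C1, hC1, h1⟩ := L_triv_near (N := N)
  obtain ⟨C2, hC2, h2⟩ := L_growth (χ ^ 2)
  set K := C1 ^ 3 * (C2 * 2) with hK
  have hK0 : 0 < K := by positivity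
  -- three-four-one
  have h341 : ∀ x t : ℝ, 0 < x → x ≤ 1 → 2 ≤ |t| →
      x ^ 3 ≤ K * |t| ^ (1/16 : ℝ) * ‖LFunction χ (1 + x + I * t)‖ ^ 4 := by
    intro x t hx hx1 ht
    have := norm_LFunction_product_ge_one χ hx t
    rw [norm_mul, norm_mul, norm_pow, norm_pow] at this
    have a1 := h1 x hx hx1
    have a2 := h2 (1 + x + 2 * I * t) (by simp; linarith) (by simp; linarith) (by simp [abs_mul]; linarith)
    have a3 : |(1 + x + 2 * I * t : ℂ).im| ^ (1/16 : ℝ) ≤ 2 * |t| ^ (1/16 : ℝ) := by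
      have : |(1 + x + 2 * I * t : ℂ).im| = 2 * |t| := by simp [abs_mul]
      rw [this, Real.mul_rpow (by norm_num) (by positivity)]
      gcongr
      calc (2:ℝ) ^ (1/16 : ℝ) ≤ 2 ^ (1 : ℝ) := by gcongr <;> norm_num
        _ = 2 := by norm_num
    set a := ‖LFunctionTrivChar N (1 + x)‖
    set b := ‖LFunction χ (1 + x + I * t)‖
    set d := ‖LFunction (χ ^ 2) (1 + x + 2 * I * t)‖
    have a4 : d ≤ C2 * (2 * |t| ^ (1/16 : ℝ)) := a2.trans (by gcongr)
    calc x ^ 3 = x ^ 3 * 1 := by ring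
      _ ≤ x ^ 3 * (a ^ 3 * b ^ 4 * d) := by gcongr
      _ = (a * x) ^ 3 * b ^ 4 * d := by ring
      _ ≤ C1 ^ 3 * b ^ 4 * (C2 * (2 * |t| ^ (1/16 : ℝ))) := by gcongr
      _ = _ := by rw [hK]; ring
  set κ := 1 / (16 * K * C ^ 4 + 1) with hκ
  have hκ0 : 0 < κ := by positivity
  have hκ1 : κ ≤ 1 := by rw [hκ, div_le_one (by positivity)]; linarith [show 0 < 16 * K * C ^ 4 by positivity]
  have hκ2 : 16 * K * C ^ 4 * κ ≤ 1 := by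
    rw [hκ, mul_one_div, div_le_one (by positivity)]; linarith
  refine ⟨κ * C, by positivity, ?_⟩
  intro s hs1 hs2 ht
  set u := |s.im| ^ (1/16 : ℝ) with hu
  have hu1 : 1 ≤ u := Real.one_le_rpow (by linarith) (by norm_num)
  have hu0 : 0 < u := by linarith
  have hδ0 : 0 < κ / u ^ 5 := by positivity
  have hδ1 : κ / u ^ 5 ≤ 1 := by
    rw [div_le_one (by positivity)]; exact hκ1.trans (one_le_pow₀ hu1)
  -- bound at points to the right of 1 + δ
  have hright : ∀ x : ℝ, κ / u ^ 5 ≤ x → x ≤ 1 → 2 * κ * C ≤ ‖LFunction χ (1 + x + I * s.im)‖ * u ^ 4 := by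
    intro x hx hx1
    have := h341 x s.im (hδ0.trans_le hx) hx1 ht
    rw [← hu] at this
    set b := ‖LFunction χ (1 + x + I * s.im)‖
    have h3 : (κ / u ^ 5) ^ 3 ≤ K * u * b ^ 4 := (pow_le_pow_left₀ hδ0.le hx 3).trans this
    have h4 : κ ^ 3 ≤ K * (b * u ^ 4) ^ 4 := by
      rw [div_pow, div_le_iff₀ (by positivity)] at h3
      calc κ ^ 3 ≤ _ := h3
        _ = _ := by ring
    apply le_of_pow_le_pow_left₀ (n := 4) (by norm_num) (by positivity)
    have h5 : K * (2 * κ * C) ^ 4 ≤ K * (b * u ^ 4) ^ 4 := by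
      calc K * (2 * κ * C) ^ 4 = (16 * K * C ^ 4 * κ) * κ ^ 3 := by ring
        _ ≤ 1 * κ ^ 3 := by gcongr
        _ ≤ _ := by linarith
    exact le_of_mul_le_mul_left h5 hK0
  by_cases hcase : κ / u ^ 5 ≤ s.re - 1
  · have := hright (s.re - 1) hcase (by linarith)
    have e : (1 + ((s.re - 1 : ℝ) : ℂ) + I * s.im) = s := by
      apply Complex.ext <;> simp
    rw [e] at this
    have : 0 < κ * C := by positivity
    linarith
  · push Not at hcase
    have h6 := hright (κ / u ^ 5) le_rfl hδ1
    set w : ℂ := 1 + ((κ / u ^ 5 : ℝ) : ℂ) + I * s.im with hw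
    have hwre : w.re = 1 + κ / u ^ 5 := by rw [hw]; simp [-ofReal_div]
    have hwim : w.im = s.im := by rw [hw]; simp [-ofReal_div]
    have hconv : Convex ℝ {z : ℂ | (1 ≤ z.re ∧ z.re ≤ 2) ∧ z.im = s.im} := by
      rintro a ⟨⟨ha1, ha2⟩, ha3⟩ b ⟨⟨hb1, hb2⟩, hb3⟩ p q hp hq hpq
      simp only [mem_ofPred_eq, add_re, real_smul, mul_re, ofReal_re, ofReal_im, zero_mul, sub_zero, add_im, mul_im, add_zero]
      rw [ha3, hb3]
      refine ⟨⟨by nlinarith, by nlinarith⟩, by rw [← add_mul, hpq, one_mul]⟩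
    have hmv := hconv.norm_image_sub_le_of_norm_deriv_le (f := LFunction χ) (C := C * u) (x := s) (y := w)
      (fun z hz => differentiableAt_LFunction χ z (Or.inl (by
        rintro rfl
        have h0 : s.im = 0 := by simpa using hz.2.symm
        rw [h0] at ht; simp at ht; linarith)))
      (fun z hz => by
        have := hd 1 (by norm_num) z hz.1.1 (by linarith [hz.1.2]) (by rw [hz.2]; exact ht)
        rw [iteratedDeriv_one, hz.2] at this
        exact this) ⟨⟨hs1, hs2⟩, rfl⟩ ⟨⟨by rw [hwre]; linarith, by rw [hwre]; linarith⟩, hwim⟩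
    have hdist : ‖w - s‖ ≤ κ / u ^ 5 := by
      have : w - s = ((1 + κ / u ^ 5 - s.re : ℝ) : ℂ) := by
        apply Complex.ext
        · rw [sub_re, hwre, ofReal_re]
        · rw [sub_im, hwim, ofReal_im, sub_self]
      rw [this, Complex.norm_real, Real.norm_eq_abs, abs_le]
      constructor <;> linarith
    have h7 : ‖LFunction χ w - LFunction χ s‖ * u ^ 4 ≤ κ * C := by
      calc _ ≤ C * u * (κ / u ^ 5) * u ^ 4 := by gcongr; exact hmv.trans (by gcongr)
        _ = _ := by field_simp
    have h8 : ‖LFunction χ w‖ ≤ ‖LFunction χ w - LFunction χ s‖ + ‖LFunction χ s‖ := by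
      simpa using norm_add_le (LFunction χ w - LFunction χ s) (LFunction χ s)
    have h9 := mul_le_mul_of_nonneg_right h8 (by positivity : 0 ≤ u ^ 4)
    rw [add_mul] at h9
    linarith
end BEFS

namespace BEFS
set_option linter.unusedSectionVars false
open DirichletCharacter MeasureTheory Set Complex
variable {N : ℕ} [NeZero N]

lemma iter2_logDeriv {f : ℂ → ℂ} {s : ℂ} (hf : AnalyticAt ℂ f s) (h0 : f s ≠ 0) :
    iteratedDeriv 2 (fun z => deriv f z / f z) s =
      iteratedDeriv 3 f s / f s - 3 * (iteratedDeriv 2 f s / f s) * (iteratedDeriv 1 f s / f s)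
        + 2 * (iteratedDeriv 1 f s / f s) ^ 3 := by
  have hev : ∀ᶠ z in nhds s, AnalyticAt ℂ f z ∧ f z ≠ 0 :=
    hf.eventually_analyticAt.and (hf.continuousAt.eventually_ne h0)
  have h1 : ∀ z, AnalyticAt ℂ f z → f z ≠ 0 → HasDerivAt (fun z => deriv f z / f z)
      (deriv (deriv f) z / f z - (deriv f z / f z) ^ 2) z := by
    intro z hz hz0
    have := hz.deriv.differentiableAt.hasDerivAt.fun_div hz.differentiableAt.hasDerivAt hz0
    refine this.congr_deriv ?_
    field_simp
  have h2 : deriv (fun z => deriv f z / f z) =ᶠ[nhds s] fun z => deriv (deriv f) z / f z - (deriv f z / f z) ^ 2 := by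
    filter_upwards [hev] with z hz
    exact (h1 z hz.1 hz.2).deriv
  rw [iteratedDeriv_succ, iteratedDeriv_one, h2.deriv_eq]
  have h3 : HasDerivAt (fun z => deriv (deriv f) z / f z - (deriv f z / f z) ^ 2)
     ((deriv (deriv (deriv f)) s * f s - deriv (deriv f) s * deriv f s) / f s ^ 2 -
       (2 * (deriv f s / f s) ^ (2 - 1) * (deriv (deriv f) s / f s - (deriv f s / f s) ^ 2))) s := by
    refine HasDerivAt.fun_sub ?_ ?_
    · exact hf.deriv.deriv.differentiableAt.hasDerivAt.div hf.differentiableAt.hasDerivAt h0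
    · have := (h1 s hf h0).pow 2
      exact_mod_cast this
  rw [h3.deriv]
  rw [iteratedDeriv_succ, iteratedDeriv_succ, iteratedDeriv_one, show 2 - 1 = 1 from rfl, pow_one]
  field_simp
  ring

noncomputable def cN (N : ℕ) [NeZero N] : ℂ := LFunctionTrivChar₁ N 1
lemma cN_ne : cN N ≠ 0 := LFunctionTrivChar₁_apply_one_ne_zero N

noncomputable def Atot (N : ℕ) [NeZero N] (s : ℂ) : ℂ :=
  -∑ χ : DirichletCharacter ℂ N, deriv (LFunction χ) s / LFunction χ s - (cN N)⁻¹ * LFunctionTrivChar N s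

open scoped Classical in
noncomputable def hh (χ : DirichletCharacter ℂ N) : ℂ → ℂ :=
  if χ = 1 then LFunctionTrivChar₁ N else LFunction χ

lemma hh_diff (χ : DirichletCharacter ℂ N) : Differentiable ℂ (hh χ) := by
  unfold hh; split_ifs with h
  · exact differentiable_LFunctionTrivChar₁ N
  · exact differentiable_LFunction h

lemma triv1_of_ne {s : ℂ} (hs : s ≠ 1) : LFunctionTrivChar₁ N s = (s - 1) * LFunctionTrivChar N s := by
  rw [LFunctionTrivChar₁, Function.update_of_ne hs]

lemma hh_ne (χ : DirichletCharacter ℂ N) {s : ℂ} (hs : 1 ≤ s.re) : hh χ s ≠ 0 := by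
  unfold hh; split_ifs with h
  · by_cases h1 : s = 1
    · rw [h1]; exact LFunctionTrivChar₁_apply_one_ne_zero N
    · rw [triv1_of_ne h1]
      exact mul_ne_zero (sub_ne_zero.2 h1) (LFunction_ne_zero_of_one_le_re 1 (Or.inr h1) hs)
  · exact LFunction_ne_zero_of_one_le_re χ (Or.inl h) hs

noncomputable def Atil (N : ℕ) [NeZero N] (s : ℂ) : ℂ :=
  -∑ χ : DirichletCharacter ℂ N, deriv (hh χ) s / hh χ s - (cN N)⁻¹ * dslope (LFunctionTrivChar₁ N) 1 s

lemma Atil_eq {s : ℂ} (hs : 1 < s.re) : Atil N s = Atot N s := by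
  classical
  have h1 : s ≠ 1 := by rintro rfl; simp at hs
  have h1' : s - 1 ≠ 0 := sub_ne_zero.2 h1
  have hL : LFunctionTrivChar N s ≠ 0 := LFunction_ne_zero_of_one_le_re 1 (Or.inr h1) hs.le
  unfold Atil Atot
  rw [← Finset.add_sum_erase _ _ (Finset.mem_univ (1 : DirichletCharacter ℂ N)),
    ← Finset.add_sum_erase _ (fun χ => deriv (LFunction χ) s / LFunction χ s) (Finset.mem_univ (1 : DirichletCharacter ℂ N))]
  have e1 : ∑ χ ∈ Finset.univ.erase (1 : DirichletCharacter ℂ N), deriv (hh χ) s / hh χ s =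
      ∑ χ ∈ Finset.univ.erase (1 : DirichletCharacter ℂ N), deriv (LFunction χ) s / LFunction χ s := by
    apply Finset.sum_congr rfl
    intro χ hχ
    have : χ ≠ 1 := Finset.ne_of_mem_erase hχ
    simp only [hh, this, if_false]
  have e2 : hh (1 : DirichletCharacter ℂ N) = LFunctionTrivChar₁ N := by simp [hh]
  have e3 : deriv (LFunctionTrivChar₁ N) s = LFunctionTrivChar N s + (s - 1) * deriv (LFunctionTrivChar N) s := by
    rw [deriv_LFunctionTrivChar₁_apply_of_ne_one N h1]; ring
  rw [e1, e2, e3, triv1_of_ne h1, dslope_of_ne _ h1, slope_def_field, triv1_of_ne h1]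
  have hc := cN_ne (N := N)
  rw [show LFunctionTrivChar₁ N 1 = cN N from rfl]
  rw [show LFunction (1 : DirichletCharacter ℂ N) = LFunctionTrivChar N from rfl]
  field_simp
  ring

lemma Atil_an {s : ℂ} (hs : 1 ≤ s.re) : AnalyticAt ℂ (Atil N) s := by
  unfold Atil
  have hd : Differentiable ℂ (dslope (LFunctionTrivChar₁ N) 1) := by
    rw [← differentiableOn_univ, Complex.differentiableOn_dslope univ_mem, differentiableOn_univ]
    exact differentiable_LFunctionTrivChar₁ N
  refine AnalyticAt.fun_sub ?_ (analyticAt_const.fun_mul (hd.analyticAt s))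
  refine AnalyticAt.fun_neg (Finset.analyticAt_fun_sum _ fun χ _ => ?_)
  exact ((hh_diff χ).analyticAt s).deriv.fun_div ((hh_diff χ).analyticAt s) (hh_ne χ hs)

lemma Atot_an {s : ℂ} (hs : 1 < s.re) : AnalyticAt ℂ (Atot N) s := by
  apply (Atil_an (N := N) hs.le).congr
  filter_upwards [(isOpen_lt continuous_const Complex.continuous_re).mem_nhds hs] with z hz
  exact Atil_eq hz

lemma L_an (χ : DirichletCharacter ℂ N) {s : ℂ} (hs : s ≠ 1) : AnalyticAt ℂ (LFunction χ) s := by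
  apply (DifferentiableOn.analyticOnNhd (s := {1}ᶜ) _ isOpen_compl_singleton) s hs
  intro z hz
  exact (differentiableAt_LFunction χ z (Or.inl hz)).differentiableWithinAt

lemma logDeriv_bound (χ : DirichletCharacter ℂ N) : ∃ C : ℝ, 0 < C ∧ ∀ s : ℂ, 1 < s.re → s.re ≤ 2 → 2 ≤ |s.im| →
    ‖iteratedDeriv 2 (fun z => deriv (LFunction χ) z / LFunction χ z) s‖ ≤ C * |s.im| ^ (15/16 : ℝ) := by
  obtain ⟨C, hC, hd⟩ := L_deriv_growth χ
  obtain ⟨c, hc, hl⟩ := L_lower χ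
  refine ⟨(C/c) + 3 * (C/c) * (C/c) + 2 * (C/c)^3, by positivity, ?_⟩
  intro s h1 h2 ht
  have hs1 : s ≠ 1 := by rintro rfl; simp at h1
  have hL0 : LFunction χ s ≠ 0 := LFunction_ne_zero_of_one_le_re χ (Or.inr hs1) h1.le
  rw [iter2_logDeriv (L_an χ hs1) hL0]
  set u := |s.im| ^ (1/16 : ℝ) with hu
  have hu1 : 1 ≤ u := Real.one_le_rpow (by linarith) (by norm_num)
  have hu15 : |s.im| ^ (15/16 : ℝ) = u ^ 15 := by
    rw [hu, ← Real.rpow_natCast, ← Real.rpow_mul (by positivity)]; norm_num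
  have hq : ∀ j ≤ 3, ‖iteratedDeriv j (LFunction χ) s / LFunction χ s‖ ≤ (C / c) * u ^ 5 := by
    intro j hj
    have a1 := hd j hj s h1.le (by linarith) ht
    have a2 := hl s h1.le h2 ht
    have hn : 0 < ‖LFunction χ s‖ := norm_pos_iff.2 hL0
    rw [norm_div, div_le_iff₀ hn]
    calc _ ≤ C * u := a1
      _ = (C / c * u) * c := by field_simp
      _ ≤ (C / c * u) * (‖LFunction χ s‖ * u ^ 4) := by gcongr
      _ = _ := by ring
  set a := iteratedDeriv 3 (LFunction χ) s / LFunction χ s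
  set b := iteratedDeriv 2 (LFunction χ) s / LFunction χ s
  set d := iteratedDeriv 1 (LFunction χ) s / LFunction χ s
  have ha := hq 3 (by norm_num)
  have hb := hq 2 (by norm_num)
  have hdd := hq 1 (by norm_num)
  have h5 : u ^ 5 ≤ u ^ 15 := pow_le_pow_right₀ hu1 (by norm_num)
  have h10 : u ^ 10 ≤ u ^ 15 := pow_le_pow_right₀ hu1 (by norm_num)
  calc ‖a - 3 * b * d + 2 * d ^ 3‖ ≤ ‖a‖ + 3 * ‖b‖ * ‖d‖ + 2 * ‖d‖ ^ 3 := by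
        refine (norm_add_le _ _).trans ?_
        refine add_le_add ((norm_sub_le _ _).trans ?_) ?_
        · simp
        · simp
    _ ≤ (C/c) * u ^ 5 + 3 * ((C/c) * u ^ 5) * ((C/c) * u ^ 5) + 2 * ((C/c) * u ^ 5) ^ 3 := by gcongr
    _ = (C/c) * u ^ 5 + 3 * (C/c) * (C/c) * u ^ 10 + 2 * (C/c) ^ 3 * u ^ 15 := by ring
    _ ≤ (C/c) * u ^ 15 + 3 * (C/c) * (C/c) * u ^ 15 + 2 * (C/c) ^ 3 * u ^ 15 := by gcongr
    _ = _ := by rw [hu15]; ring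

lemma A2_bound (N : ℕ) [NeZero N] : ∃ C : ℝ, 0 < C ∧ ∀ s : ℂ, 1 < s.re → s.re ≤ 2 →
    ‖iteratedDeriv 2 (Atot N) s‖ ≤ C * (1 + |s.im|) ^ (15/16 : ℝ) := by
  choose C hC hb using fun χ : DirichletCharacter ℂ N => logDeriv_bound χ
  obtain ⟨C', hC', hb'⟩ := L_deriv_growth (1 : DirichletCharacter ℂ N)
  -- compact part
  have hcont : ContinuousOn (iteratedDeriv 2 (Atil N)) (Icc 1 2 ×ℂ Icc (-2) 2) := by
    intro s hs
    have : 1 ≤ s.re := hs.1.1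
    rw [iteratedDeriv_succ, iteratedDeriv_one]
    exact (Atil_an (N := N) this).deriv.deriv.continuousAt.continuousWithinAt
  have hcomp : IsCompact ((Icc 1 2 : Set ℝ) ×ℂ Icc (-2) 2) := isCompact_Icc.reProdIm isCompact_Icc
  obtain ⟨C0, hC0⟩ := hcomp.exists_bound_of_continuousOn hcont
  refine ⟨|C0| + ∑ χ, C χ + ‖(cN N)⁻¹‖ * C' + 1, ?_, ?_⟩
  · have : 0 ≤ ∑ χ, C χ := Finset.sum_nonneg fun χ _ => (hC χ).le
    positivity
  intro s h1 h2
  have hsum : 0 ≤ ∑ χ, C χ := Finset.sum_nonneg fun χ _ => (hC χ).le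
  by_cases ht : |s.im| ≤ 2
  · have e : iteratedDeriv 2 (Atot N) s = iteratedDeriv 2 (Atil N) s := by
      apply Filter.EventuallyEq.iteratedDeriv_eq
      filter_upwards [(isOpen_lt continuous_const Complex.continuous_re).mem_nhds h1] with z hz
      exact (Atil_eq hz).symm
    rw [e]
    have h3 := hC0 s ⟨⟨h1.le, h2⟩, abs_le.1 ht⟩
    have h4 : 1 ≤ (1 + |s.im|) ^ (15/16 : ℝ) := Real.one_le_rpow (by linarith [abs_nonneg s.im]) (by norm_num)
    have h5 : 0 ≤ ‖(cN N)⁻¹‖ * C' := by positivity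
    calc _ ≤ |C0| := h3.trans (le_abs_self _)
      _ ≤ (|C0| + ∑ χ, C χ + ‖(cN N)⁻¹‖ * C' + 1) * 1 := by linarith
      _ ≤ _ := by gcongr
  · push Not at ht
    have hs1 : s ≠ 1 := by rintro rfl; simp at h1
    have hX : (1 : ℝ) ≤ |s.im| := by linarith
    have e : iteratedDeriv 2 (Atot N) s = -∑ χ : DirichletCharacter ℂ N, iteratedDeriv 2 (fun z => deriv (LFunction χ) z / LFunction χ z) s
        - (cN N)⁻¹ * iteratedDeriv 2 (LFunction (1 : DirichletCharacter ℂ N)) s := by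
      have hA : ∀ χ : DirichletCharacter ℂ N, ContDiffAt ℂ 2 (fun z => deriv (LFunction χ) z / LFunction χ z) s := fun χ =>
        ((L_an χ hs1).deriv.fun_div (L_an χ hs1) (LFunction_ne_zero_of_one_le_re χ (Or.inr hs1) h1.le)).contDiffAt
      have hB : ContDiffAt ℂ 2 (LFunction (1 : DirichletCharacter ℂ N)) s := (L_an _ hs1).contDiffAt
      unfold Atot
      rw [iteratedDeriv_fun_sub, iteratedDeriv_fun_neg, iteratedDeriv_fun_sum, iteratedDeriv_const_mul_field]
      · intro χ _; exact hA χ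
      · exact (ContDiffAt.sum fun χ _ => hA χ).neg
      · exact contDiffAt_const.mul hB
    rw [e]
    have hp : |s.im| ^ (15/16 : ℝ) ≤ (1 + |s.im|) ^ (15/16 : ℝ) := by gcongr; linarith
    have hp' : |s.im| ^ (1/16 : ℝ) ≤ |s.im| ^ (15/16 : ℝ) := Real.rpow_le_rpow_of_exponent_le hX (by norm_num)
    calc _ ≤ ‖∑ χ : DirichletCharacter ℂ N, iteratedDeriv 2 (fun z => deriv (LFunction χ) z / LFunction χ z) s‖
          + ‖(cN N)⁻¹‖ * ‖iteratedDeriv 2 (LFunction (1 : DirichletCharacter ℂ N)) s‖ := by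
          refine (norm_sub_le _ _).trans ?_
          rw [norm_neg, norm_mul]
      _ ≤ (∑ χ : DirichletCharacter ℂ N, C χ * |s.im| ^ (15/16 : ℝ)) + ‖(cN N)⁻¹‖ * (C' * |s.im| ^ (15/16 : ℝ)) := by
          gcongr
          · exact (norm_sum_le _ _).trans (Finset.sum_le_sum fun χ _ => hb χ s h1 h2 ht.le)
          · exact (hb' 2 (by norm_num) s h1.le (by linarith) ht.le).trans (by gcongr)
      _ = (∑ χ, C χ + ‖(cN N)⁻¹‖ * C') * |s.im| ^ (15/16 : ℝ) := by rw [← Finset.sum_mul]; ring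
      _ ≤ (|C0| + ∑ χ, C χ + ‖(cN N)⁻¹‖ * C' + 1) * |s.im| ^ (15/16 : ℝ) := by
          exact mul_le_mul_of_nonneg_right (by linarith [abs_nonneg C0]) (by positivity)
      _ ≤ _ := by
          have h5 : 0 ≤ ‖(cN N)⁻¹‖ * C' := by positivity
          exact mul_le_mul_of_nonneg_left hp (by linarith [abs_nonneg C0])
end BEFS

namespace BEFS
set_option linter.unusedSectionVars false
open DirichletCharacter MeasureTheory Set Complex

noncomputable def pf (t : ℝ) : ℂ :=
  indicator (Ioc 0 1) (fun _ => 1 : ℝ → ℂ) t - indicator (Ioc 0 1) (fun t => (t : ℂ) ^ (1 : ℂ) : ℝ → ℂ) t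

lemma pf_eq {t : ℝ} (ht : 0 < t) : pf t = ((max 0 (1 - t) : ℝ) : ℂ) := by
  unfold pf
  by_cases h : t ≤ 1
  · have hm : t ∈ Ioc (0:ℝ) 1 := ⟨ht, h⟩
    rw [indicator_of_mem hm, indicator_of_mem hm, max_eq_right (by linarith)]
    simp
  · have : t ∉ Ioc (0:ℝ) 1 := fun h' => h h'.2
    rw [indicator_of_notMem this, indicator_of_notMem this, max_eq_left (by linarith)]
    simp

lemma pf_mellin {s : ℂ} (hs : 0 < s.re) : HasMellin pf s (1 / s - 1 / (s + 1)) :=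
by
  have h1 := hasMellin_one_Ioc hs
  have h2 := hasMellin_cpow_Ioc 1 (s := s) (by simp; linarith)
  have h := hasMellin_sub h1.1 h2.1
  rw [h1.2, h2.2] at h
  exact h

lemma pf_mellin_bound {s : ℂ} (hs : 1 ≤ s.re) : ‖mellin pf s‖ ≤ 2 * (1 + |s.im|) ^ (-2 : ℝ) := by
  rw [(pf_mellin (by linarith)).2]
  have h0 : s ≠ 0 := by rintro rfl; simp at hs; linarith
  have h1 : s + 1 ≠ 0 := by
    intro h; have := congrArg Complex.re h; simp at this; linarith
  have e : 1 / s - 1 / (s + 1) = (s * (s + 1))⁻¹ := by field_simp; ring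
  rw [e, norm_inv, norm_mul]
  have hp : 0 < 1 + |s.im| := by positivity
  rw [Real.rpow_neg hp.le, inv_eq_one_div, ← div_eq_mul_inv]
  have n1 : Real.sqrt (1 + s.im ^ 2) ≤ ‖s‖ := by
    rw [Complex.norm_def, Complex.normSq_apply]; apply Real.sqrt_le_sqrt; nlinarith
  have n2 : Real.sqrt (1 + s.im ^ 2) ≤ ‖s + 1‖ := by
    rw [Complex.norm_def, Complex.normSq_apply]; apply Real.sqrt_le_sqrt; simp; nlinarith
  have n3 : 1 + s.im ^ 2 ≤ ‖s‖ * ‖s + 1‖ := by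
    calc 1 + s.im ^ 2 = Real.sqrt (1 + s.im ^ 2) * Real.sqrt (1 + s.im ^ 2) := (Real.mul_self_sqrt (by positivity)).symm
      _ ≤ _ := by gcongr
  rw [div_le_div_iff₀ (by positivity) (by positivity)]
  rw [show (1 + |s.im|) ^ (2:ℝ) = (1 + |s.im|) ^ 2 from Real.rpow_two _]
  nlinarith [sq_abs s.im, sq_nonneg (1 - |s.im|)]

lemma pf_vert {σ : ℝ} (hσ : 1 ≤ σ) : VerticalIntegrable (mellin pf) σ := by
  unfold VerticalIntegrable
  have hI : Integrable (fun y : ℝ => (1 + ‖y‖) ^ (-2 : ℝ)) := integrable_one_add_norm (by simp)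
  refine (hI.const_mul 2).mono' ?_ ?_
  · have : (fun y : ℝ => mellin pf (σ + y * I)) = fun y : ℝ => 1 / ((σ:ℂ) + y * I) - 1 / ((σ:ℂ) + y * I + 1) := by
      ext y; exact (pf_mellin (by simp; linarith)).2
    rw [this]
    apply Measurable.aestronglyMeasurable
    fun_prop
  · filter_upwards with y
    have := pf_mellin_bound (s := σ + y * I) (by simpa using hσ)
    simpa using this

lemma perron (g : ℕ → ℂ) {σ x : ℝ} (hσ : 1 ≤ σ) (hx : 0 < x) (hg : LSeriesSummable g σ) :
    ∑ n ∈ Finset.Icc 1 ⌊x⌋₊, g n * ((1 - n / x : ℝ) : ℂ) =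
      (1 / (2 * (Real.pi : ℂ))) * ∫ y : ℝ, LSeries g (σ + y * I) * ((x : ℂ) ^ ((σ : ℂ) + y * I) * mellin pf (σ + y * I)) := by
  have hx0 : (x : ℂ) ≠ 0 := by exact_mod_cast hx.ne'
  set F : ℕ → ℝ → ℂ := fun n y => LSeries.term g (σ + y * I) n * ((x : ℂ) ^ ((σ : ℂ) + y * I) * mellin pf (σ + y * I)) with hF
  have hM := pf_vert hσ
  unfold VerticalIntegrable at hM
  have hnorm : ∀ n y, ‖F n y‖ = ‖LSeries.term g σ n‖ * (x ^ σ * ‖mellin pf (σ + y * I)‖) := by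
    intro n y
    simp only [hF, norm_mul]
    rw [Complex.norm_cpow_eq_rpow_re_of_pos hx, LSeries.norm_term_eq, LSeries.norm_term_eq]
    simp
  have hcx : Continuous (fun y : ℝ => (x : ℂ) ^ ((σ : ℂ) + y * I)) :=
    Continuous.const_cpow (by fun_prop) (Or.inl hx0)
  have hint : ∀ n, Integrable (F n) := by
    intro n
    have hI : Integrable (fun y : ℝ => ‖LSeries.term g σ n‖ * (x ^ σ * ‖mellin pf (σ + y * I)‖)) :=
      (hM.norm.const_mul _).const_mul _
    refine hI.mono' ?_ ?_
    · refine AEStronglyMeasurable.mul ?_ (hcx.aestronglyMeasurable.mul hM.1)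
      apply Continuous.aestronglyMeasurable
      by_cases hn : n = 0
      · simp only [hn, LSeries.term_zero]; exact continuous_const
      · simp only [LSeries.term_of_ne_zero hn]
        have : (n : ℂ) ≠ 0 := by exact_mod_cast hn
        refine continuous_const.div (Continuous.const_cpow (by fun_prop) (Or.inl this)) ?_
        intro y; simp [Complex.cpow_eq_zero_iff, this]
    · filter_upwards with y
      exact (hnorm n y).le
  have hsum : Summable fun n => ∫ y, ‖F n y‖ := by
    simp_rw [hnorm, integral_const_mul]
    exact (hg.norm).mul_right _
  have key := hasSum_integral_of_summable_integral_norm hint hsum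
  have e1 : ∀ y : ℝ, (∑' n, F n y) = LSeries g (σ + y * I) * ((x : ℂ) ^ ((σ : ℂ) + y * I) * mellin pf (σ + y * I)) := by
    intro y; simp only [hF]; rw [tsum_mul_right]; rfl
  simp_rw [e1] at key
  have e2 : ∀ n, (1 / (2 * (Real.pi : ℂ))) * ∫ y, F n y = if n = 0 then 0 else g n * pf (n / x) := by
    intro n
    split_ifs with hn
    · simp [hF, hn]
    have hnp : 0 < (n : ℝ) := by positivity
    have hn0 : (n : ℂ) ≠ 0 := by exact_mod_cast hn
    have hnx : 0 < (n / x : ℝ) := by positivity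
    have hc : ContinuousAt pf (n / x : ℝ) := by
      have : ContinuousAt (fun t : ℝ => ((max 0 (1 - t) : ℝ) : ℂ)) (n / x : ℝ) := by
        apply Continuous.continuousAt; fun_prop
      refine this.congr ?_
      filter_upwards [lt_mem_nhds hnx] with t ht
      exact (pf_eq ht).symm
    rw [← mellinInv_mellin_eq σ pf hnx (pf_mellin (by simp; linarith)).1 (pf_vert hσ) hc, mellinInv]
    rw [Complex.real_smul, mul_left_comm (g n)]
    push_cast
    congr 1
    rw [← integral_const_mul]
    apply integral_congr_ae
    filter_upwards with y
    simp only [hF, LSeries.term_of_ne_zero hn, smul_eq_mul]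
    have : ((n : ℂ) / x) ^ (-((σ:ℂ) + y * I)) = (x : ℂ) ^ ((σ:ℂ) + y * I) / (n : ℂ) ^ ((σ:ℂ) + y * I) := by
      have h := Complex.div_cpow_ofReal_nonneg hnp.le hx.le (-((σ:ℂ) + y * I))
      rw [Complex.ofReal_natCast] at h
      rw [h, Complex.cpow_neg, Complex.cpow_neg]
      field_simp
    rw [this]; ring
  rw [← key.tsum_eq, ← tsum_mul_left]
  simp_rw [e2]
  rw [tsum_eq_sum (s := Finset.Icc 1 ⌊x⌋₊)]
  · apply Finset.sum_congr rfl
    intro n hn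
    rw [Finset.mem_Icc] at hn
    rw [if_neg (by omega), pf_eq (by have : 0 < (n:ℝ) := by exact_mod_cast hn.1
                                     positivity)]
    rw [max_eq_right]
    have : (n : ℝ) ≤ x := (Nat.le_floor_iff hx.le).1 hn.2
    rw [sub_nonneg, div_le_one hx]; exact this
  · intro n hn
    split_ifs with h0
    · rfl
    · rw [Finset.mem_Icc, not_and, not_le] at hn
      have h1 := hn (by omega)
      rw [Nat.floor_lt hx.le] at h1
      rw [pf_eq (by positivity), max_eq_left]
      · simp
      · rw [sub_nonpos, one_le_div hx]; exact h1.le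

/-- coefficients -/
noncomputable def a4 (n : ℕ) : ℂ :=
  2 * (ArithmeticFunction.vonMangoldt.residueClass (1 : ZMod 4) n : ℂ) - 2 * (1 : DirichletCharacter ℂ 4) n

lemma cN4 : cN 4 = 1/2 := by
  unfold cN
  rw [LFunctionTrivChar₁, Function.update_self]
  have : Nat.primeFactors 4 = {2} := by
    rw [show 4 = 2^2 by norm_num, Nat.primeFactors_prime_pow (by norm_num) Nat.prime_two]
  rw [this]; norm_num

lemma res_abs : LSeries.abscissaOfAbsConv (fun n => (ArithmeticFunction.vonMangoldt.residueClass (1 : ZMod 4) n : ℂ)) ≤ 1 :=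
  ArithmeticFunction.vonMangoldt.abscissaOfAbsConv_residueClass_le_one _

lemma a4_summ {s : ℂ} (hs : 1 < s.re) : LSeriesSummable a4 s := by
  have h1 : LSeriesSummable (fun n => (ArithmeticFunction.vonMangoldt.residueClass (1 : ZMod 4) n : ℂ)) s :=
    LSeriesSummable_of_abscissaOfAbsConv_lt_re (res_abs.trans_lt (by exact_mod_cast hs))
  have h2 := DirichletCharacter.LSeriesSummable_of_one_lt_re (1 : DirichletCharacter ℂ 4) hs
  exact (h1.smul 2).sub (h2.smul 2)

lemma a4_eq {s : ℂ} (hs : 1 < s.re) : LSeries a4 s = Atot 4 s := by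
  have h1 : LSeriesSummable (fun n => (ArithmeticFunction.vonMangoldt.residueClass (1 : ZMod 4) n : ℂ)) s :=
    LSeriesSummable_of_abscissaOfAbsConv_lt_re (res_abs.trans_lt (by exact_mod_cast hs))
  have h2 := DirichletCharacter.LSeriesSummable_of_one_lt_re (1 : DirichletCharacter ℂ 4) hs
  have : a4 = (2:ℂ) • (fun n => (ArithmeticFunction.vonMangoldt.residueClass (1 : ZMod 4) n : ℂ))
      - (2:ℂ) • (fun n : ℕ => (1 : DirichletCharacter ℂ 4) n) := by
    ext n; simp [a4]
  rw [this, LSeries_sub (h1.smul 2) (h2.smul 2), LSeries_smul, LSeries_smul,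
    ArithmeticFunction.vonMangoldt.LSeries_residueClass_eq isUnit_one hs]
  unfold Atot
  rw [cN4, show LFunctionTrivChar 4 s = LFunction (1 : DirichletCharacter ℂ 4) s from rfl, LFunction_eq_LSeries _ hs]
  have : Nat.totient 4 = 2 := by decide
  rw [this]
  simp

lemma a4_abs : LSeries.abscissaOfAbsConv a4 ≤ 1 := by
  apply LSeries.abscissaOfAbsConv_le_of_forall_lt_LSeriesSummable
  intro y hy
  exact a4_summ (by simpa using hy)

lemma perron_bound : ∃ C : ℝ, 0 < C ∧ ∀ x : ℝ, Real.exp 1 ≤ x →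
    ‖∑ n ∈ Finset.Icc 1 ⌊x⌋₊, (LSeries.logMul^[2] a4) n * ((1 - n / x : ℝ) : ℂ)‖ ≤ C * x := by
  obtain ⟨C, hC, hb⟩ := A2_bound 4
  have hI : Integrable (fun y : ℝ => (1 + ‖y‖) ^ (-(17/16) : ℝ)) := integrable_one_add_norm (by simp; norm_num)
  set J := ∫ y : ℝ, (1 + ‖y‖) ^ (-(17/16) : ℝ)
  have hJ : 0 ≤ J := integral_nonneg fun y => by positivity
  refine ⟨(1 / (2 * Real.pi)) * ((C * Real.exp 1 * 2) * J) + 1, by positivity, ?_⟩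
  intro x hx
  have hx0 : 0 < x := (Real.exp_pos 1).trans_le hx
  have hl : 1 ≤ Real.log x := by rwa [Real.le_log_iff_exp_le hx0]
  set σ := 1 + 1 / Real.log x with hσ
  have hσ1 : 1 < σ := by rw [hσ]; have : 0 < 1 / Real.log x := by positivity
                         linarith
  have hσ2 : σ ≤ 2 := by
    rw [hσ]; have : 1 / Real.log x ≤ 1 := by rw [div_le_one (by linarith)]; exact hl
    linarith
  have hxs : x ^ σ = Real.exp 1 * x := by
    rw [hσ, Real.rpow_add hx0, Real.rpow_one, Real.rpow_def_of_pos hx0]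
    rw [mul_one_div_cancel (by linarith)]; ring
  have habs : LSeries.abscissaOfAbsConv (LSeries.logMul^[2] a4) ≤ 1 := by
    rw [LSeries.absicssaOfAbsConv_logPowMul]; exact a4_abs
  have hs : LSeriesSummable (LSeries.logMul^[2] a4) σ :=
    LSeriesSummable_of_abscissaOfAbsConv_lt_re (habs.trans_lt (by simpa using (by exact_mod_cast hσ1 : (1:EReal) < (σ:EReal))))
  rw [perron _ hσ1.le hx0 hs, norm_mul]
  have hn : ‖1 / (2 * (Real.pi : ℂ))‖ = 1 / (2 * Real.pi) := by
    rw [norm_div, norm_mul]; simp [abs_of_pos Real.pi_pos]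
  rw [hn]
  have hbd : ‖∫ y : ℝ, LSeries (LSeries.logMul^[2] a4) (σ + y * I) * ((x : ℂ) ^ ((σ : ℂ) + y * I) * mellin pf (σ + y * I))‖
      ≤ ∫ y : ℝ, (C * Real.exp 1 * 2 * x) * (1 + ‖y‖) ^ (-(17/16) : ℝ) := by
    apply norm_integral_le_of_norm_le (hI.const_mul _)
    filter_upwards with y
    set s : ℂ := σ + y * I with hsdef
    have hre : s.re = σ := by simp [hsdef]
    have him : s.im = y := by simp [hsdef]
    have h1 : LSeries (LSeries.logMul^[2] a4) s = iteratedDeriv 2 (Atot 4) s := by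
      have h := LSeries_iteratedDeriv (f := a4) 2 (s := s) (a4_abs.trans_lt (by rw [hre]; exact_mod_cast hσ1))
      have h' : iteratedDeriv 2 (LSeries a4) s = iteratedDeriv 2 (Atot 4) s := by
        apply Filter.EventuallyEq.iteratedDeriv_eq
        filter_upwards [(isOpen_lt continuous_const Complex.continuous_re).mem_nhds (show 1 < s.re by rw [hre]; exact hσ1)] with z hz
        exact a4_eq hz
      rw [← h', h]; simp
    rw [h1, norm_mul, norm_mul, Complex.norm_cpow_eq_rpow_re_of_pos hx0, hre, hxs]
    have b1 := hb s (by rw [hre]; exact hσ1) (by rw [hre]; exact hσ2)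
    have b2 := pf_mellin_bound (s := s) (by rw [hre]; exact hσ1.le)
    rw [him] at b1 b2
    have e : (1 + |y|) ^ (15/16:ℝ) * (1 + |y|) ^ (-2:ℝ) = (1 + ‖y‖) ^ (-(17/16):ℝ) := by
      rw [← Real.rpow_add (by positivity), Real.norm_eq_abs]; norm_num
    calc _ ≤ (C * (1 + |y|) ^ (15/16:ℝ)) * (Real.exp 1 * x * (2 * (1 + |y|) ^ (-2:ℝ))) := by gcongr
      _ = C * Real.exp 1 * 2 * x * ((1 + |y|) ^ (15/16:ℝ) * (1 + |y|) ^ (-2:ℝ)) := by ring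
      _ = _ := by rw [e]
  rw [integral_const_mul] at hbd
  calc _ ≤ 1 / (2 * Real.pi) * ((C * Real.exp 1 * 2 * x) * J) := by gcongr
    _ = (1 / (2 * Real.pi)) * ((C * Real.exp 1 * 2) * J) * x := by ring
    _ ≤ _ := by nlinarith
end BEFS

namespace BEFS
set_option linter.unusedSectionVars false

/-- smoothed sum -/
noncomputable def Sm (f : ℕ → ℝ) (x : ℝ) : ℝ := ∑ n ∈ Finset.Icc 1 ⌊x⌋₊, f n * (x - n)
noncomputable def Su (f : ℕ → ℝ) (x : ℝ) : ℝ := ∑ n ∈ Finset.Icc 1 ⌊x⌋₊, f n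

noncomputable def fL (n : ℕ) : ℝ := if n % 4 = 1 then ArithmeticFunction.vonMangoldt n * (Real.log n)^2 else 0
noncomputable def fO (n : ℕ) : ℝ := if n % 2 = 1 then (Real.log n)^2 else 0
noncomputable def f1 (n : ℕ) : ℝ := if n.Prime ∧ n % 4 = 1 then 1 else 0
noncomputable def fOdd (n : ℕ) : ℝ := if n % 2 = 1 then 1 else 0

lemma fL_nonneg (n : ℕ) : 0 ≤ fL n := by
  unfold fL; split_ifs
  · exact mul_nonneg ArithmeticFunction.vonMangoldt_nonneg (sq_nonneg _)
  · rfl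
lemma fO_nonneg (n : ℕ) : 0 ≤ fO n := by
  unfold fO; split_ifs
  · positivity
  · rfl

lemma Sm_diff : ∃ C : ℝ, 0 < C ∧ ∀ x : ℝ, Real.exp 1 ≤ x → |Sm fL x - Sm fO x| ≤ C * x ^ 2 := by
  obtain ⟨C, hC, hb⟩ := perron_bound
  refine ⟨C, hC, ?_⟩
  intro x hx
  have hx0 : 0 < x := (Real.exp_pos 1).trans_le hx
  have h := hb x hx
  have e : ∑ n ∈ Finset.Icc 1 ⌊x⌋₊, (LSeries.logMul^[2] a4) n * ((1 - n / x : ℝ) : ℂ) =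
      ((2 / x * (Sm fL x - Sm fO x) : ℝ) : ℂ) := by
    unfold Sm
    rw [← Finset.sum_sub_distrib, Finset.mul_sum]
    push_cast
    apply Finset.sum_congr rfl
    intro n hn
    have e1 : (LSeries.logMul^[2] a4) n = 2 * ((fL n : ℝ) : ℂ) - 2 * ((fO n : ℝ) : ℂ) := by
      simp only [Function.iterate_succ, Function.iterate_zero, Function.comp, id, LSeries.logMul, a4]
      have h1 : ((ArithmeticFunction.vonMangoldt.residueClass (1 : ZMod 4) n : ℝ) : ℂ) * (Complex.log n)^2 = ((fL n : ℝ) : ℂ) := by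
        unfold fL ArithmeticFunction.vonMangoldt.residueClass
        have : (n : ZMod 4) = 1 ↔ n % 4 = 1 := by
          have := ZMod.natCast_eq_natCast_iff' n 1 4
          simpa using this
        by_cases h4 : n % 4 = 1
        · rw [if_pos h4, Set.indicator_of_mem (show n ∈ {n : ℕ | (n : ZMod 4) = 1} from this.2 h4)]
          push_cast; rfl
        · rw [if_neg h4, Set.indicator_of_notMem (show n ∉ {n : ℕ | (n : ZMod 4) = 1} from fun h => h4 (this.1 h))]
          simp
      have h2 : (1 : DirichletCharacter ℂ 4) n * (Complex.log n)^2 = ((fO n : ℝ) : ℂ) := by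
        unfold fO
        split_ifs with h
        · have hc : IsUnit (n : ZMod 4) := by
            rw [ZMod.isUnit_iff_coprime, show 4 = 2^2 by norm_num]
            apply Nat.Coprime.pow_right
            exact Nat.coprime_two_right.2 (Nat.odd_iff.2 h)
          rw [MulChar.one_apply hc]
          push_cast; simp
        · have hc : ¬ IsUnit (n : ZMod 4) := by
            rw [ZMod.isUnit_iff_coprime]
            intro h'
            have := Nat.Coprime.coprime_dvd_right (show 2 ∣ 4 by norm_num) h'
            rw [Nat.coprime_two_right, Nat.odd_iff] at this
            exact h this
          rw [MulChar.map_nonunit _ hc]; simp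
      rw [← h1, ← h2]; ring
    rw [e1]
    have : (x : ℂ) ≠ 0 := by exact_mod_cast hx0.ne'
    field_simp
  rw [e, Complex.norm_real, Real.norm_eq_abs, abs_mul, abs_of_pos (by positivity)] at h
  rw [div_mul_eq_mul_div, div_le_iff₀ hx0] at h
  nlinarith [abs_nonneg (Sm fL x - Sm fO x)]

lemma Sm_eq (f : ℕ → ℝ) {x : ℝ} (hx : 0 ≤ x) {M : ℕ} (hM : ⌊x⌋₊ ≤ M) :
    Sm f x = ∑ n ∈ Finset.Icc 1 M, f n * max 0 (x - n) := by
  unfold Sm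
  symm
  rw [← Finset.sum_subset (Finset.Icc_subset_Icc_right hM)]
  · apply Finset.sum_congr rfl
    intro n hn
    rw [Finset.mem_Icc, Nat.le_floor_iff hx] at hn
    rw [max_eq_right (by linarith)]
  · intro n hn hn'
    rw [Finset.mem_Icc] at hn hn'
    have : ⌊x⌋₊ < n := by by_contra h; exact hn' ⟨hn.1, by omega⟩
    rw [Nat.floor_lt hx] at this
    rw [max_eq_left (by linarith), mul_zero]

lemma Su_eq (f : ℕ → ℝ) {x : ℝ} (hx : 0 ≤ x) {M : ℕ} (hM : ⌊x⌋₊ ≤ M) :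
    Su f x = ∑ n ∈ Finset.Icc 1 M, f n * (if (n:ℝ) ≤ x then 1 else 0) := by
  unfold Su
  symm
  rw [← Finset.sum_subset (Finset.Icc_subset_Icc_right hM)]
  · apply Finset.sum_congr rfl
    intro n hn
    rw [Finset.mem_Icc, Nat.le_floor_iff hx] at hn
    rw [if_pos hn.2, mul_one]
  · intro n hn hn'
    rw [Finset.mem_Icc] at hn hn'
    have : ⌊x⌋₊ < n := by by_contra h; exact hn' ⟨hn.1, by omega⟩
    rw [Nat.floor_lt hx] at this
    rw [if_neg (by linarith), mul_zero]

lemma Sm_le {f : ℕ → ℝ} (hf : ∀ n, 0 ≤ f n) {x h : ℝ} (hx : 0 ≤ x) (hh : 0 ≤ h) :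
    Sm f (x + h) - Sm f x ≤ h * Su f (x + h) := by
  have hM : ⌊x⌋₊ ≤ ⌊x+h⌋₊ := Nat.floor_le_floor (by linarith)
  rw [Sm_eq f (by linarith) le_rfl, Sm_eq f hx hM, Su_eq f (by linarith) le_rfl, Finset.mul_sum, ← Finset.sum_sub_distrib]
  apply Finset.sum_le_sum
  intro n _
  rw [← mul_sub, mul_left_comm]
  apply mul_le_mul_of_nonneg_left _ (hf n)
  split_ifs with h1
  · rw [max_eq_right (by linarith)]; have := le_max_right 0 (x - n); linarith
  · rw [max_eq_left (by linarith), max_eq_left (by linarith)]; simp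

lemma Sm_ge {f : ℕ → ℝ} (hf : ∀ n, 0 ≤ f n) {x h : ℝ} (hx : 0 ≤ x) (hh : 0 ≤ h) :
    h * Su f x ≤ Sm f (x + h) - Sm f x := by
  have hM : ⌊x⌋₊ ≤ ⌊x+h⌋₊ := Nat.floor_le_floor (by linarith)
  rw [Sm_eq f (by linarith) le_rfl, Sm_eq f hx hM, Su_eq f hx hM, Finset.mul_sum, ← Finset.sum_sub_distrib]
  apply Finset.sum_le_sum
  intro n _
  rw [← mul_sub, mul_left_comm]
  apply mul_le_mul_of_nonneg_left _ (hf n)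
  split_ifs with h1
  · rw [max_eq_right (by linarith), max_eq_right (by linarith)]; linarith
  · rw [max_eq_left (by linarith : x - n ≤ 0)]; simp

/-- generic weighted comparisons -/
noncomputable def Wt (f : ℕ → ℝ) (w : ℕ → ℝ) (x : ℝ) : ℝ := ∑ n ∈ Finset.Icc 1 ⌊x⌋₊, f n * w n

lemma Wt_odd_le (w : ℕ → ℝ) {x : ℝ} (hx : 1 ≤ x) (hw : ∀ n : ℕ, 1 ≤ n → (n:ℝ) ≤ x → 0 ≤ w n) :
    Wt fO w x ≤ (Real.log x)^2 * Wt fOdd w x := by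
  unfold Wt
  rw [Finset.mul_sum]
  apply Finset.sum_le_sum
  intro n hn
  rw [Finset.mem_Icc, Nat.le_floor_iff (by linarith)] at hn
  have := hw n hn.1 hn.2
  rw [← mul_assoc]
  apply mul_le_mul_of_nonneg_right _ this
  unfold fO fOdd
  split_ifs
  · rw [mul_one]
    have h1 : (1:ℝ) ≤ n := by exact_mod_cast hn.1
    have := Real.log_nonneg h1
    have := Real.log_le_log (by linarith) hn.2
    gcongr
  · simp

lemma Wt_small_le (f w : ℕ → ℝ) {x y M : ℝ} (hy : 0 ≤ y) (hyx : y ≤ x) (hM : 0 ≤ M) (hf0 : ∀ n, 0 ≤ f n) (hf : ∀ n, f n ≤ 1)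
    (hw : ∀ n : ℕ, 1 ≤ n → (n:ℝ) ≤ x → 0 ≤ w n ∧ w n ≤ M) :
    ∑ n ∈ (Finset.Icc 1 ⌊x⌋₊).filter (fun n : ℕ => (n:ℝ) ≤ y), f n * w n ≤ M * y := by
  calc _ ≤ ∑ n ∈ (Finset.Icc 1 ⌊x⌋₊).filter (fun n : ℕ => (n:ℝ) ≤ y), M := by
        apply Finset.sum_le_sum
        intro n hn
        rw [Finset.mem_filter, Finset.mem_Icc, Nat.le_floor_iff (by linarith)] at hn
        obtain ⟨h1, h2⟩ := hw n hn.1.1 hn.1.2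
        calc _ ≤ 1 * w n := mul_le_mul_of_nonneg_right (hf n) h1
          _ ≤ M := by linarith
    _ ≤ ∑ n ∈ Finset.Icc 1 ⌊y⌋₊, M := by
        apply Finset.sum_le_sum_of_subset_of_nonneg
        · intro n hn
          rw [Finset.mem_filter, Finset.mem_Icc] at hn
          rw [Finset.mem_Icc, Nat.le_floor_iff hy]
          exact ⟨hn.1.1, hn.2⟩
        · intros; exact hM
    _ = ⌊y⌋₊ * M := by simp
    _ ≤ y * M := by gcongr; exact Nat.floor_le hy
    _ = _ := by ring

lemma Wt_odd_ge (w : ℕ → ℝ) {x M : ℝ} (hx : Real.exp 1 ≤ x) (hM : 0 ≤ M)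
    (hw : ∀ n : ℕ, 1 ≤ n → (n:ℝ) ≤ x → 0 ≤ w n ∧ w n ≤ M) :
    ((Real.log x) - Real.log (Real.log x))^2 * (Wt fOdd w x - M * (x / Real.log x)) ≤ Wt fO w x := by
  have hx0 : 0 < x := (Real.exp_pos 1).trans_le hx
  have hl : 1 ≤ Real.log x := by rwa [Real.le_log_iff_exp_le hx0]
  set y := x / Real.log x
  have hy : 0 < y := by positivity
  have hyx : y ≤ x := div_le_self hx0.le hl
  have hly : Real.log y = Real.log x - Real.log (Real.log x) := by
    rw [Real.log_div hx0.ne' (by linarith)]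
  have hly0 : 0 ≤ Real.log y := by
    rw [hly]; have := Real.log_le_sub_one_of_pos (show 0 < Real.log x by linarith); linarith
  have hsm := Wt_small_le fOdd w hy.le hyx hM (fun n => by unfold fOdd; split_ifs <;> simp) (fun n => by unfold fOdd; split_ifs <;> simp) hw
  rw [← hly]
  unfold Wt
  rw [← Finset.sum_filter_add_sum_filter_not (Finset.Icc 1 ⌊x⌋₊) (fun n : ℕ => (n:ℝ) ≤ y) (fun n => fOdd n * w n)]
  calc _ ≤ (Real.log y)^2 * ∑ n ∈ (Finset.Icc 1 ⌊x⌋₊).filter (fun n : ℕ => ¬ (n:ℝ) ≤ y), fOdd n * w n := by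
        gcongr; linarith
    _ = ∑ n ∈ (Finset.Icc 1 ⌊x⌋₊).filter (fun n : ℕ => ¬ (n:ℝ) ≤ y), ((Real.log y)^2 * fOdd n) * w n := by
        rw [Finset.mul_sum]; simp_rw [mul_assoc]
    _ ≤ ∑ n ∈ (Finset.Icc 1 ⌊x⌋₊).filter (fun n : ℕ => ¬ (n:ℝ) ≤ y), fO n * w n := by
        apply Finset.sum_le_sum
        intro n hn
        rw [Finset.mem_filter, Finset.mem_Icc, Nat.le_floor_iff (by linarith)] at hn
        apply mul_le_mul_of_nonneg_right _ (hw n hn.1.1 hn.1.2).1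
        unfold fO fOdd
        split_ifs
        · rw [mul_one]
          have := Real.log_le_log hy (not_le.1 hn.2).le
          gcongr
        · simp
    _ ≤ _ := by
        apply Finset.sum_le_sum_of_subset_of_nonneg (Finset.filter_subset _ _)
        intro n hn _
        rw [Finset.mem_Icc, Nat.le_floor_iff (by linarith)] at hn
        exact mul_nonneg (fO_nonneg n) (hw n hn.1 hn.2).1

lemma Wt_pr_le (w : ℕ → ℝ) {x M : ℝ} (hx : Real.exp 1 ≤ x) (hM : 0 ≤ M) (hlg : 2 * Real.log (Real.log x) < Real.log x)
    (hw : ∀ n : ℕ, 1 ≤ n → (n:ℝ) ≤ x → 0 ≤ w n ∧ w n ≤ M) :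
    Wt f1 w x ≤ M * (x / Real.log x ^ 2) + Wt fL w x / (Real.log x - 2 * Real.log (Real.log x))^3 := by
  have hx0 : 0 < x := (Real.exp_pos 1).trans_le hx
  have hl : 1 ≤ Real.log x := by rwa [Real.le_log_iff_exp_le hx0]
  set y := x / Real.log x ^ 2
  have hy : 0 < y := by positivity
  have hyx : y ≤ x := div_le_self hx0.le (one_le_pow₀ hl)
  have hly : Real.log y = Real.log x - 2 * Real.log (Real.log x) := by
    rw [Real.log_div hx0.ne' (by positivity), Real.log_pow]; norm_num
  have hly0 : 0 < Real.log y := by linarith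
  have hsm := Wt_small_le f1 w hy.le hyx hM (fun n => by unfold f1; split_ifs <;> simp) (fun n => by unfold f1; split_ifs <;> simp) hw
  rw [← hly]
  unfold Wt
  rw [← Finset.sum_filter_add_sum_filter_not (Finset.Icc 1 ⌊x⌋₊) (fun n : ℕ => (n:ℝ) ≤ y) (fun n => f1 n * w n)]
  refine add_le_add hsm ?_
  rw [le_div_iff₀ (by positivity), mul_comm, Finset.mul_sum]
  calc _ ≤ ∑ n ∈ (Finset.Icc 1 ⌊x⌋₊).filter (fun n : ℕ => ¬ (n:ℝ) ≤ y), fL n * w n := by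
        apply Finset.sum_le_sum
        intro n hn
        rw [Finset.mem_filter, Finset.mem_Icc, Nat.le_floor_iff (by linarith)] at hn
        rw [← mul_assoc]
        apply mul_le_mul_of_nonneg_right _ (hw n hn.1.1 hn.1.2).1
        unfold f1
        split_ifs with hp
        · unfold fL
          rw [if_pos hp.2, ArithmeticFunction.vonMangoldt_apply_prime hp.1, mul_one]
          have := Real.log_le_log hy (not_le.1 hn.2).le
          calc _ ≤ (Real.log n)^3 := by gcongr
            _ = _ := by ring
        · simpa using fL_nonneg n
    _ ≤ _ := by
        apply Finset.sum_le_sum_of_subset_of_nonneg (Finset.filter_subset _ _)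
        intro n hn _
        rw [Finset.mem_Icc, Nat.le_floor_iff (by linarith)] at hn
        exact mul_nonneg (fL_nonneg n) (hw n hn.1 hn.2).1

lemma Wt_pr_ge (w : ℕ → ℝ) {x M : ℝ} (hx : Real.exp 1 ≤ x) (hM : 0 ≤ M)
    (hw : ∀ n : ℕ, 1 ≤ n → (n:ℝ) ≤ x → 0 ≤ w n ∧ w n ≤ M) :
    Wt fL w x - M * (2 * Real.sqrt x * Real.log x ^ 3) ≤ Real.log x ^ 3 * Wt f1 w x := by
  have hx0 : 0 < x := (Real.exp_pos 1).trans_le hx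
  have hl : 1 ≤ Real.log x := by rwa [Real.le_log_iff_exp_le hx0]
  have hx1 : 1 ≤ x := (Real.one_le_exp zero_le_one).trans hx
  have h := Chebyshev.psi_sub_theta_le hx1
  rw [Chebyshev.psi_sub_theta_eq_sum_not_prime] at h
  have key : Wt fL w x ≤ Real.log x ^ 3 * Wt f1 w x + M * Real.log x ^ 2 *
      ∑ n ∈ (Finset.Ioc 0 ⌊x⌋₊).filter (fun n => ¬ n.Prime), ArithmeticFunction.vonMangoldt n := by
    unfold Wt
    rw [Finset.sum_filter, Finset.mul_sum, Finset.mul_sum, show Finset.Ioc 0 ⌊x⌋₊ = Finset.Icc 1 ⌊x⌋₊ from rfl, ← Finset.sum_add_distrib]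
    apply Finset.sum_le_sum
    intro n hn
    rw [Finset.mem_Icc, Nat.le_floor_iff (by linarith)] at hn
    obtain ⟨w0, w1⟩ := hw n hn.1 hn.2
    have h1 : (1:ℝ) ≤ n := by exact_mod_cast hn.1
    have hn0 := Real.log_nonneg h1
    have hnl := Real.log_le_log (by linarith) hn.2
    have hv : 0 ≤ ArithmeticFunction.vonMangoldt n := ArithmeticFunction.vonMangoldt_nonneg
    unfold fL f1
    by_cases h4 : n % 4 = 1
    · by_cases hp : n.Prime
      · simp only [h4, hp, if_true, and_self, not_true, if_false]
        rw [ArithmeticFunction.vonMangoldt_apply_prime hp]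
        have : Real.log n * Real.log n ^ 2 ≤ Real.log x ^ 3 := by
          calc _ = Real.log n ^ 3 := by ring
            _ ≤ _ := by gcongr
        nlinarith
      · simp only [h4, hp, if_true, false_and, not_false_eq_true, if_false]
        have : Real.log n ^ 2 ≤ Real.log x ^ 2 := by gcongr
        calc _ ≤ ArithmeticFunction.vonMangoldt n * Real.log x ^ 2 * M := by gcongr
          _ = _ := by ring
    · simp only [h4, if_false, and_false]
      split_ifs
      · simp
      · simp; positivity
  have : M * Real.log x ^ 2 *
      ∑ n ∈ (Finset.Ioc 0 ⌊x⌋₊).filter (fun n => ¬ n.Prime), ArithmeticFunction.vonMangoldt n ≤ M * Real.log x ^ 2 * (2 * Real.sqrt x * Real.log x) :=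
    mul_le_mul_of_nonneg_left h (by positivity)
  nlinarith
end BEFS

namespace BEFS
set_option linter.unusedSectionVars false

lemma odd_sum (M : ℕ) : ∑ n ∈ Finset.Icc 1 M, fOdd n = (((M+1)/2 : ℕ) : ℝ) ∧
    ∑ n ∈ Finset.Icc 1 M, fOdd n * (n:ℝ) = (((M+1)/2 : ℕ) : ℝ)^2 := by
  induction M with
  | zero => simp
  | succ M ih =>
    rw [Finset.sum_Icc_succ_top (by omega), Finset.sum_Icc_succ_top (by omega), ih.1, ih.2]
    unfold fOdd
    rcases Nat.even_or_odd' M with ⟨k, hk | hk⟩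
    · have h1 : (M + 1) % 2 = 1 := by omega
      have h2 : (M + 1) / 2 = k := by omega
      have h3 : (M + 1 + 1) / 2 = k + 1 := by omega
      rw [h2, h3, if_pos h1, hk]; push_cast; constructor <;> ring
    · have h1 : ¬ (M + 1) % 2 = 1 := by omega
      have h2 : (M + 1) / 2 = k + 1 := by omega
      have h3 : (M + 1 + 1) / 2 = k + 1 := by omega
      rw [h2, h3, if_neg h1]; simp

lemma half_floor {x : ℝ} (hx : 0 ≤ x) : |(((⌊x⌋₊+1)/2 : ℕ) : ℝ) - x / 2| ≤ 1 := by
  have h1 := Nat.floor_le hx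
  have h2 := Nat.lt_floor_add_one x
  set M := ⌊x⌋₊
  have h3 : M ≤ 2 * ((M+1)/2) := by omega
  have h4 : 2 * ((M+1)/2) ≤ M + 1 := by omega
  have h3' : (M:ℝ) ≤ 2 * (((M+1)/2 : ℕ):ℝ) := by exact_mod_cast h3
  have h4' : 2 * (((M+1)/2 : ℕ):ℝ) ≤ M + 1 := by exact_mod_cast h4
  rw [abs_le]; constructor <;> linarith

lemma odd_count {x : ℝ} (hx : 0 ≤ x) : |Wt fOdd (fun _ => 1) x - x / 2| ≤ 1 := by
  unfold Wt
  simp only [mul_one]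
  rw [(odd_sum _).1]; exact half_floor hx

lemma odd_sm {x : ℝ} (hx : 0 ≤ x) : |Wt fOdd (fun n => x - n) x - x^2 / 4| ≤ 1 := by
  unfold Wt
  simp only [mul_sub, Finset.sum_sub_distrib, ← Finset.sum_mul]
  rw [(odd_sum _).1, (odd_sum _).2]
  have := half_floor hx
  set k := (((⌊x⌋₊+1)/2 : ℕ) : ℝ)
  rw [show k * x - k^2 - x^2/4 = -(k - x/2)^2 by ring, abs_neg, abs_pow]
  exact pow_le_one₀ (abs_nonneg _) this

/-- size conditions -/
structure Big (x : ℝ) : Prop where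
  he : Real.exp 1 ≤ x
  hl : 1 ≤ Real.log (Real.log x)
  h8 : 8 * Real.log (Real.log x) ≤ Real.log x
  hs : (Real.log x)^2 ≤ Real.sqrt x

lemma big_ev : ∀ᶠ x : ℝ in atTop, Big x := by
  have t1 := Real.tendsto_log_atTop
  have t2 := t1.comp t1
  have h1 : ∀ᶠ x : ℝ in atTop, 1 ≤ Real.log (Real.log x) := t2.eventually_ge_atTop 1
  have h2 : ∀ᶠ x : ℝ in atTop, 8 * Real.log (Real.log x) ≤ Real.log x := by
    have := Real.isLittleO_log_id_atTop.bound (show (0:ℝ) < 1/8 by norm_num)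
    have := t1.eventually this
    filter_upwards [this, h1, t1.eventually_ge_atTop 0] with x h h' h''
    simp only [Real.norm_eq_abs, id] at h
    rw [abs_of_nonneg (by linarith), abs_of_nonneg h''] at h
    linarith
  have h3 : ∀ᶠ x : ℝ in atTop, (Real.log x)^2 ≤ Real.sqrt x := by
    have := (isLittleO_log_rpow_atTop (show (0:ℝ) < 1/4 by norm_num)).bound (show (0:ℝ) < 1 by norm_num)
    filter_upwards [this, eventually_ge_atTop 1] with x h hx
    have hl := Real.log_nonneg hx
    rw [Real.norm_eq_abs, Real.norm_eq_abs, abs_of_nonneg hl, abs_of_nonneg (by positivity), one_mul] at h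
    calc _ ≤ (x ^ (1/4:ℝ))^2 := by gcongr
      _ = _ := by rw [← Real.rpow_natCast, ← Real.rpow_mul (by linarith), Real.sqrt_eq_rpow]; norm_num
  filter_upwards [h1, h2, h3, eventually_ge_atTop (Real.exp 1)] with x a b c d
  exact ⟨d, a, b, c⟩

set_option maxHeartbeats 2000000 in
lemma pr_asym (w : ℕ → ℝ) {x M κ C1 : ℝ} (hb : Big x) (hM : 0 ≤ M) (hκ : 0 ≤ κ) (hκ1 : κ ≤ 1) (hC1 : 0 ≤ C1)
    (hw : ∀ n : ℕ, 1 ≤ n → (n:ℝ) ≤ x → 0 ≤ w n ∧ w n ≤ M)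
    (hT : |Wt fL w x - κ * (M * x) * Real.log x ^ 2| ≤ C1 * (M * x) * Real.log x * Real.log (Real.log x)) :
    |Wt f1 w x - κ * (M * x) / Real.log x| ≤ (21 + 4 * C1) * (M * x) * Real.log (Real.log x) / Real.log x ^ 2 := by
  obtain ⟨he, hl, h8, hs⟩ := hb
  have hx0 : 0 < x := (Real.exp_pos 1).trans_le he
  have up := Wt_pr_le w he hM (by linarith) hw
  have lo := Wt_pr_ge w he hM hw
  set L := Real.log x
  set ℓ := Real.log L
  have hL : 0 < L := by linarith
  obtain ⟨u, hu⟩ : ∃ u, u = ℓ / L := ⟨_, rfl⟩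
  have hℓ : ℓ = u * L := by rw [hu]; field_simp
  have hu0 : 0 < u := by rw [hu]; positivity
  have hu8 : u ≤ 1/8 := by rw [hu, div_le_iff₀ hL]; linarith
  have huL : 1 / L ≤ u := by rw [hu]; gcongr
  set Z := M * x with hZ
  have hZ0 : 0 ≤ Z := by positivity
  rw [abs_le] at hT ⊢
  obtain ⟨hT1, hT2⟩ := hT
  have hsq : 0 < Real.sqrt x := Real.sqrt_pos.2 hx0
  have hMs : M * Real.sqrt x ≤ Z / L^2 := by
    rw [le_div_iff₀ (by positivity), hZ]
    calc M * Real.sqrt x * L^2 ≤ M * Real.sqrt x * Real.sqrt x := by gcongr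
      _ = M * x := by rw [mul_assoc, Real.mul_self_sqrt hx0.le]
  have eR : (21 + 4 * C1) * Z * ℓ / L^2 = (21 + 4 * C1) * (Z / L) * u := by
    rw [hu]; field_simp
  rw [eR]
  have hZL : 0 ≤ Z / L := by positivity
  have eL2 : Z / L^2 = (Z / L) * (1 / L) := by field_simp
  constructor
  · have : L^3 * (κ * Z / L - C1 * (Z / L) * u - 2 * (Z / L) * (1 / L)) ≤ L^3 * Wt f1 w x := by
      refine le_trans ?_ lo
      have e1 : L^3 * (κ * Z / L - C1 * (Z / L) * u - 2 * (Z / L) * (1 / L)) = κ * Z * L^2 - C1 * Z * L * ℓ - 2 * L^3 * (Z / L^2) := by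
        rw [hℓ]; field_simp
      rw [e1]
      have : L^3 * (M * Real.sqrt x) ≤ L^3 * (Z / L^2) := by gcongr
      nlinarith
    have := le_of_mul_le_mul_left this (by positivity)
    have h1 : (Z / L) * (1 / L) ≤ (Z / L) * u := by gcongr
    have h2 : 0 ≤ (Z / L) * u := by positivity
    nlinarith
  · have hd : 0 < (L - 2 * ℓ)^3 := by have : 0 < L - 2 * ℓ := by linarith
                                      positivity
    have e2 : (κ * Z * L^2 + C1 * Z * L * ℓ) / (L - 2 * ℓ)^3 ≤ (Z / L) * ((κ + C1 * u) * (1 + 20 * u)) := by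
      rw [div_le_iff₀ hd]
      have : (Z / L) * ((κ + C1 * u) * (1 + 20 * u)) * (L - 2 * ℓ)^3 = Z * L^2 * (κ + C1 * u) * ((1 + 20 * u) * (1 - 2*u)^3) := by
        rw [hℓ]; field_simp
      rw [this]
      have h20 : 1 ≤ (1 + 20 * u) * (1 - 2*u)^3 := by
        have : (1 + 20 * u) * (1 - 2*u)^3 - 1 = u * (14 - 108 * u + 232 * u^2 - 160 * u^3) := by ring
        have h3 : 0 ≤ 14 - 108 * u + 232 * u^2 - 160 * u^3 := by nlinarith [mul_nonneg hu0.le hu0.le, mul_nonneg (mul_nonneg hu0.le hu0.le) (sub_nonneg.2 hu8)]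
        have h4 := mul_nonneg hu0.le h3
        linarith
      have e3 : κ * Z * L^2 + C1 * Z * L * ℓ = Z * L^2 * (κ + C1 * u) * 1 := by rw [hℓ]; ring
      rw [e3]
      gcongr
    have e4 : Wt fL w x / (L - 2 * ℓ)^3 ≤ (κ * Z * L^2 + C1 * Z * L * ℓ) / (L - 2 * ℓ)^3 := by
      gcongr; linarith
    have e5 : M * (x / L^2) = (Z / L) * (1 / L) := by rw [hZ]; field_simp
    have h1 : (Z / L) * (1 / L) ≤ (Z / L) * u := by gcongr
    have e6 : (Z / L) * ((κ + C1 * u) * (1 + 20 * u)) ≤ κ * Z / L + (Z / L) * u * (20 + 4 * C1) := by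
      have : (Z / L) * ((κ + C1 * u) * (1 + 20 * u)) = κ * Z / L + (Z / L) * u * (20 * κ + C1 * (1 + 20 * u)) := by ring
      rw [this]
      have h5 : C1 * (1 + 20 * u) ≤ C1 * 4 := mul_le_mul_of_nonneg_left (by linarith) hC1
      have h6 : Z / L * u * (20 * κ + C1 * (1 + 20 * u)) ≤ Z / L * u * (20 + 4 * C1) :=
        mul_le_mul_of_nonneg_left (by linarith) (by positivity)
      linarith
    have h7 : (21 + 4 * C1) * (Z / L) * u = Z / L * u + (Z / L) * u * (20 + 4 * C1) := by ring
    linarith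

set_option maxHeartbeats 2000000 in
lemma odd_asym (w : ℕ → ℝ) {x M κ : ℝ} (hb : Big x) (hM : 0 ≤ M) (hκ : 0 ≤ κ) (hκ1 : κ ≤ 1)
    (hw : ∀ n : ℕ, 1 ≤ n → (n:ℝ) ≤ x → 0 ≤ w n ∧ w n ≤ M)
    (hT : |Wt fOdd w x - κ * (M * x)| ≤ M * x / Real.log x) :
    |Wt fO w x - κ * (M * x) * Real.log x ^ 2| ≤ 4 * (M * x) * Real.log x * Real.log (Real.log x) := by
  obtain ⟨he, hl, h8, hs⟩ := hb
  have hx0 : 0 < x := (Real.exp_pos 1).trans_le he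
  have up := Wt_odd_le w ((Real.one_le_exp zero_le_one).trans he) (fun n a b => (hw n a b).1)
  have lo := Wt_odd_ge w he hM hw
  set L := Real.log x
  set ℓ := Real.log L
  have hL : 0 < L := by linarith
  rw [mul_div_assoc'] at lo
  set Z := M * x with hZ
  have hZ0 : 0 ≤ Z := by positivity
  rw [abs_le] at hT ⊢
  obtain ⟨hT1, hT2⟩ := hT
  have eZ : Z / L * L^2 = Z * L := by field_simp
  have hZL : 0 ≤ Z / L := by positivity
  have hZl : Z * L ≤ Z * L * ℓ := le_mul_of_one_le_right (by positivity) hl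
  constructor
  · have h1 : (L - ℓ)^2 * (κ * Z - 2 * (Z / L)) ≤ Wt fO w x := by
      refine le_trans ?_ lo
      apply mul_le_mul_of_nonneg_left _ (sq_nonneg _)
      linarith
    have h2 : (L - ℓ)^2 ≤ L^2 := by nlinarith
    have h3 : (L - ℓ)^2 * (2 * (Z / L)) ≤ L^2 * (2 * (Z / L)) := by gcongr
    have h4 : L^2 * (κ * Z) - 2 * L * ℓ * Z ≤ (L - ℓ)^2 * (κ * Z) := by
      have h5 : κ * (L * ℓ * Z) ≤ 1 * (L * ℓ * Z) := by gcongr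
      have h6 : 0 ≤ ℓ^2 * (κ * Z) := by positivity
      nlinarith
    nlinarith
  · have : L^2 * Wt fOdd w x ≤ L^2 * (κ * Z + Z / L) := by gcongr; linarith
    nlinarith

noncomputable def pi1 (z : ℝ) : ℝ := Su f1 z
noncomputable def W1 (z : ℝ) : ℝ := Sm f1 z

lemma W_asym : ∃ C : ℝ, 0 < C ∧ ∀ᶠ x : ℝ in atTop,
    |W1 x - x^2 / (4 * Real.log x)| ≤ C * x^2 * Real.log (Real.log x) / Real.log x ^ 2 := by
  obtain ⟨C, hC, hd⟩ := Sm_diff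
  refine ⟨21 + 4 * (4 + C), by positivity, ?_⟩
  filter_upwards [big_ev] with x hb
  have hx0 : 0 < x := (Real.exp_pos 1).trans_le hb.he
  have hw : ∀ n : ℕ, 1 ≤ n → (n:ℝ) ≤ x → 0 ≤ (fun n : ℕ => x - n) n ∧ (fun n : ℕ => x - n) n ≤ x := by
    intro n h1 h2
    exact ⟨by simpa using h2, by simp⟩
  have hL : 0 < Real.log x := by have := hb.hl; have := hb.h8; linarith
  have hLx : Real.log x ≤ x := (Real.log_le_sub_one_of_pos hx0).trans (by linarith)
  have hx1 : 1 ≤ x := (Real.one_le_exp zero_le_one).trans hb.he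
  have o := odd_asym (κ := 1/4) (fun n : ℕ => x - n) hb hx0.le (by norm_num) (by norm_num) hw (by
    have := odd_sm hx0.le
    rw [show 1/4 * (x * x) = x^2/4 by ring]
    refine this.trans ?_
    rw [le_div_iff₀ hL]; nlinarith)
  have hT : |Wt fL (fun n : ℕ => x - n) x - 1/4 * (x * x) * Real.log x ^ 2| ≤ (4 + C) * (x * x) * Real.log x * Real.log (Real.log x) := by
    have h1 := hd x hb.he
    have h2 : C * x^2 ≤ C * (x * x) * Real.log x * Real.log (Real.log x) := by
      have : 1 ≤ Real.log x * Real.log (Real.log x) := one_le_mul_of_one_le_of_one_le (by have := hb.hl; have := hb.h8; linarith) hb.hl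
      have h0 : 0 ≤ C * x^2 := by positivity
      nlinarith
    have e : Wt fL (fun n : ℕ => x - n) x - 1/4 * (x * x) * Real.log x ^ 2 = (Sm fL x - Sm fO x) + (Wt fO (fun n : ℕ => x - n) x - 1/4 * (x * x) * Real.log x ^ 2) := by
      unfold Wt Sm; ring
    rw [e]
    refine (abs_add_le _ _).trans ?_
    linarith
  have r := pr_asym (κ := 1/4) (fun n : ℕ => x - n) hb hx0.le (by norm_num) (by norm_num) (by positivity) hw hT
  convert r using 2
  · congr 1
    · ring
  · ring

set_option maxHeartbeats 2000000 in
lemma pi_asym : ∃ C : ℝ, 0 < C ∧ ∀ᶠ x : ℝ in atTop,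
    |pi1 x - x / (2 * Real.log x)| ≤ C * x * Real.log (Real.log x) / Real.log x ^ 2 := by
  obtain ⟨C, hC, hd⟩ := Sm_diff
  refine ⟨21 + 4 * (30 + 5 * C), by positivity, ?_⟩
  have hhalf : Tendsto (fun x : ℝ => x - x / Real.log x) atTop atTop := by
    have h1 : Tendsto (fun x : ℝ => x * (1/2)) atTop atTop := tendsto_id.atTop_mul_const (by norm_num)
    refine tendsto_atTop_mono' _ ?_ h1
    filter_upwards [Real.tendsto_log_atTop.eventually_ge_atTop 2, eventually_ge_atTop 0] with x hx hx0
    have : x / Real.log x ≤ x / 2 := by gcongr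
    linarith
  filter_upwards [big_ev, hhalf.eventually big_ev, Real.tendsto_log_atTop.eventually_ge_atTop 100] with x hb hb' hL100
  have he := hb.he
  have hl := hb.hl
  have h8 := hb.h8
  have hx0 : 0 < x := (Real.exp_pos 1).trans_le he
  have hL : 0 < Real.log x := by linarith
  have hx1 : 1 ≤ x := (Real.one_le_exp zero_le_one).trans he
  have hw : ∀ y : ℝ, ∀ n : ℕ, 1 ≤ n → (n:ℝ) ≤ y → 0 ≤ (fun n : ℕ => (1:ℝ)) n ∧ (fun n : ℕ => (1:ℝ)) n ≤ 1 := by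
    intro y n h1 h2; simp
  have hLx : Real.log x ^ 2 ≤ x := by
    have := hb.hs
    calc _ ≤ Real.sqrt x := this
      _ ≤ x := by rw [Real.sqrt_le_left hx0.le]; nlinarith
  obtain ⟨h, hh⟩ : ∃ h, h = x / Real.log x := ⟨_, rfl⟩
  rw [← hh] at hb'
  have hhL : h * Real.log x = x := by rw [hh]; field_simp
  have hh0 : 0 < h := by rw [hh]; positivity
  have hh100 : 100 * h ≤ x := by rw [← hhL]; nlinarith
  have hSW : ∀ (f : ℕ → ℝ) (y : ℝ), Su f y = Wt f (fun _ => 1) y := by intro f y; unfold Su Wt; simp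
  have hT : |Wt fL (fun _ => 1) x - 1/2 * (1 * x) * Real.log x ^ 2| ≤ (30 + 5 * C) * (1 * x) * Real.log x * Real.log (Real.log x) := by
    rw [← hSW, abs_le]
    set L := Real.log x
    set ℓ := Real.log L
    have hxL : x * L ≤ x * L * ℓ := le_mul_of_one_le_right (by positivity) hl
    have dx := abs_le.1 (hd x he)
    have e2 : C * x^2 = h * (C * x * L) := by rw [← hhL]; ring
    have hxx : x ≤ x * L := le_mul_of_one_le_right hx0.le (by linarith)
    constructor
    · have g1 := Sm_ge fO_nonneg (x := x - h) (h := h) (by linarith) hh0.le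
      have g2 := Sm_le fL_nonneg (x := x - h) (h := h) (by linarith) hh0.le
      rw [sub_add_cancel] at g1 g2
      have dx' := abs_le.1 (hd (x - h) hb'.he)
      have s1 : C * (x-h)^2 ≤ C * x^2 := by gcongr <;> linarith
      have g3 : h * (Su fO (x - h) - 2 * (C * x * L)) ≤ h * Su fL x := by nlinarith
      have g4 := le_of_mul_le_mul_left g3 hh0
      have g5 := Wt_odd_ge (fun _ => 1) hb'.he zero_le_one (hw (x - h))
      rw [← hSW fO] at g5
      have oc := abs_le.1 (odd_count (show 0 ≤ x - h by linarith))
      -- log estimates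
      have l1 : L - 1 ≤ Real.log (x - h) := by
        have : x / Real.exp 1 ≤ x - h := by
          rw [div_le_iff₀ (Real.exp_pos 1)]
          have := Real.add_one_le_exp (1:ℝ)
          nlinarith
        have := Real.log_le_log (by positivity) this
        rwa [Real.log_div hx0.ne' (Real.exp_pos 1).ne', Real.log_exp] at this
      have l1' : Real.log (x - h) ≤ L := Real.log_le_log (by linarith) (by linarith)
      have l2 : Real.log (Real.log (x - h)) ≤ ℓ := Real.log_le_log (by linarith) l1'
      have l3 : (L - 2 * ℓ)^2 ≤ (Real.log (x - h) - Real.log (Real.log (x - h)))^2 := by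
        apply pow_le_pow_left₀ (by linarith)
        linarith
      have l4 : (x - h) / Real.log (x - h) ≤ 2 * h := by
        rw [div_le_iff₀ (by linarith)]
        nlinarith
      have l5 : x / 2 - 4 * h ≤ Wt fOdd (fun _ => 1) (x - h) - 1 * ((x - h) / Real.log (x - h)) := by
        have : 1 ≤ h := by nlinarith
        linarith
      have g6 : (L - 2 * ℓ)^2 * (x / 2 - 4 * h) ≤ Su fO (x - h) := by
        refine le_trans ?_ g5
        calc _ ≤ (Real.log (x - h) - Real.log (Real.log (x - h)))^2 * (x / 2 - 4 * h) := by gcongr; linarith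
          _ ≤ _ := by gcongr
      have g7 : x / 2 * L^2 - 2 * (x * L * ℓ) - 4 * (x * L) ≤ (L - 2 * ℓ)^2 * (x / 2 - 4 * h) := by
        have : (L - 2 * ℓ)^2 * (4 * h) ≤ L^2 * (4 * h) := by gcongr <;> linarith
        have e : L^2 * (4 * h) = 4 * (x * L) := by rw [← hhL]; ring
        nlinarith [mul_nonneg hx0.le (sq_nonneg ℓ)]
      have hCC : C * x * L ≤ C * x * L * ℓ := le_mul_of_one_le_right (by positivity) hl
      have : 0 ≤ C * x * L := by positivity
      nlinarith
    · have g1 := Sm_ge fL_nonneg (x := x) (h := h) (by linarith) hh0.le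
      have g2 := Sm_le fO_nonneg (x := x) (h := h) (by linarith) hh0.le
      have dx' := abs_le.1 (hd (x + h) (by linarith))
      have s1 : C * (x+h)^2 ≤ C * (4 * x^2) := by gcongr; nlinarith
      have g3 : h * Su fL x ≤ h * (Su fO (x + h) + 5 * (C * x * L)) := by nlinarith
      have g4 := le_of_mul_le_mul_left g3 hh0
      have g5 := Wt_odd_le (fun _ => 1) (show 1 ≤ x + h by linarith) (fun n a b => zero_le_one)
      rw [← hSW fO] at g5
      have oc := abs_le.1 (odd_count (show 0 ≤ x + h by linarith))
      have l1 : Real.log (x + h) ≤ L + 1 := by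
        have : x + h ≤ x * Real.exp 1 := by
          have := Real.add_one_le_exp (1:ℝ)
          nlinarith
        have := Real.log_le_log (by positivity) this
        rwa [Real.log_mul hx0.ne' (Real.exp_pos 1).ne', Real.log_exp] at this
      have l0 : 0 ≤ Real.log (x + h) := Real.log_nonneg (by linarith)
      have h1h : 1 ≤ h := by nlinarith
      have g6 : Su fO (x + h) ≤ (L + 1)^2 * (x / 2 + 2 * h) := by
        refine g5.trans ?_
        calc _ ≤ Real.log (x + h)^2 * (x / 2 + 2 * h) := by gcongr; linarith
          _ ≤ _ := by gcongr
      have g7 : (L + 1)^2 * (x / 2 + 2 * h) ≤ x / 2 * L^2 + 20 * (x * L) := by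
        have e1 : (L + 1)^2 * (x / 2 + 2 * h) = x / 2 * L^2 + x * L + x / 2 + 2 * (h * L) * L + 4 * (h * L) + 2 * h := by ring
        rw [e1, hhL]
        linarith
      have hCC : C * x * L ≤ C * x * L * ℓ := le_mul_of_one_le_right (by positivity) hl
      nlinarith
  have r := pr_asym (κ := 1/2) (fun _ => 1) hb zero_le_one (by norm_num) (by norm_num) (by positivity) (hw x) hT
  rw [← hSW] at r
  convert r using 2
  · unfold pi1; congr 1; ring
  · ring
end BEFS

namespace BEFS
set_option linter.unusedSectionVars false

abbrev RR (n : ℕ) := {z : GaussianInt // z.norm = (n : ℤ)}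

lemma r2_eq (n : ℕ) : r2 n = Nat.card (RR n) := by
  unfold r2
  apply Nat.card_congr
  refine ⟨fun p => ⟨⟨p.1.1, p.1.2⟩, ?_⟩, fun z => ⟨(z.1.re, z.1.im), ?_⟩, ?_, ?_⟩
  · have := p.2; rw [Zsqrtd.norm_def]; linarith
  · have := z.2; rw [Zsqrtd.norm_def] at this; simp only; linarith
  · intro p; rfl
  · intro z; rfl

lemma norm_eq' (z : GaussianInt) : z.norm = z.re^2 + z.im^2 := by
  rw [Zsqrtd.norm_def]; ring

/-- general bijection: multiplication by an element -/
lemma card_mul_of (c : GaussianInt) (m n : ℕ) (hc : c.norm = m) (hm : m ≠ 0)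
    (hdiv : ∀ z : GaussianInt, z.norm = ((m * n : ℕ) : ℤ) → c ∣ z) : Nat.card (RR (m * n)) = Nat.card (RR n) := by
  symm
  have hc0 : c ≠ 0 := by rintro rfl; simp at hc; exact hm (by exact_mod_cast hc.symm)
  apply Nat.card_congr
  apply Equiv.ofBijective (fun z : RR n => (⟨c * z.1, by rw [Zsqrtd.norm_mul, hc, z.2]; push_cast; ring⟩ : RR (m * n)))
  constructor
  · intro z w h
    have := congrArg Subtype.val h
    exact Subtype.ext (mul_left_cancel₀ hc0 this)
  · rintro ⟨z, hz⟩
    obtain ⟨w, rfl⟩ := hdiv z hz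
    refine ⟨⟨w, ?_⟩, rfl⟩
    rw [Zsqrtd.norm_mul, hc] at hz
    push_cast at hz
    exact mul_left_cancel₀ (by exact_mod_cast hm) hz

lemma r2_two (n : ℕ) : r2 (2 * n) = r2 n := by
  rw [r2_eq, r2_eq]
  apply card_mul_of ⟨1, 1⟩ 2 n (by simp [Zsqrtd.norm_def]) (by norm_num)
  intro z hz
  rw [norm_eq'] at hz
  have h2 : (z.re + z.im) % 2 = 0 := by
    have : (z.re^2 + z.im^2) % 2 = 0 := by rw [hz]; push_cast; omega
    rcases Int.emod_two_eq_zero_or_one z.re with h | h <;> rcases Int.emod_two_eq_zero_or_one z.im with h' | h' <;>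
      simp [pow_two, Int.add_emod, Int.mul_emod, h, h'] at this ⊢
  refine ⟨⟨(z.re + z.im) / 2, (z.im - z.re) / 2⟩, ?_⟩
  apply Zsqrtd.ext
  · simp; omega
  · simp; omega

lemma r2_three_sq (p n : ℕ) (hp : p.Prime) (h3 : p % 4 = 3) : r2 (p^2 * n) = r2 n := by
  haveI := Fact.mk hp
  rw [r2_eq, r2_eq]
  have hpr : Prime (p : GaussianInt) := GaussianInt.prime_of_nat_prime_of_mod_four_eq_three p h3
  apply card_mul_of (p : GaussianInt) (p^2) n (by rw [Zsqrtd.norm_natCast]; push_cast; ring) (by have := hp.pos; positivity)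
  intro z hz
  have h1 : (p : GaussianInt) ∣ z * star z := by
    rw [← Zsqrtd.norm_eq_mul_conj, hz]
    exact ⟨((p * n : ℕ) : GaussianInt), by push_cast; ring⟩
  rcases hpr.dvd_or_dvd h1 with h | h
  · exact h
  · obtain ⟨w, hw⟩ := h
    refine ⟨star w, ?_⟩
    have := congrArg star hw
    simpa [star_mul, mul_comm] using this

lemma r2_three_one (p n : ℕ) (hp : p.Prime) (h3 : p % 4 = 3) (hn : ¬ p ∣ n) : r2 (p * n) = 0 := by
  haveI := Fact.mk hp
  rw [r2_eq]
  have hpr : Prime (p : GaussianInt) := GaussianInt.prime_of_nat_prime_of_mod_four_eq_three p h3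
  have : IsEmpty (RR (p * n)) := by
    constructor
    rintro ⟨z, hz⟩
    have h1 : (p : GaussianInt) ∣ z * star z := by
      rw [← Zsqrtd.norm_eq_mul_conj, hz]
      exact ⟨((n : ℕ) : GaussianInt), by push_cast; ring⟩
    have h : (p : GaussianInt) ∣ z := by
      rcases hpr.dvd_or_dvd h1 with h | h
      · exact h
      · obtain ⟨w, hw⟩ := h
        refine ⟨star w, ?_⟩
        have := congrArg star hw
        simpa [star_mul, mul_comm] using this
    obtain ⟨w, rfl⟩ := h
    rw [Zsqrtd.norm_mul, Zsqrtd.norm_natCast] at hz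
    push_cast at hz
    rw [mul_assoc] at hz
    have := mul_left_cancel₀ (show (p:ℤ) ≠ 0 by exact_mod_cast hp.ne_zero) hz
    apply hn
    have h' : (p:ℤ) ∣ n := ⟨_, this.symm⟩
    exact_mod_cast h'
  exact Nat.card_eq_zero.2 (Or.inl this)

lemma r2_three_pow (p n k : ℕ) (hp : p.Prime) (h3 : p % 4 = 3) (hn : ¬ p ∣ n) :
    r2 (p^k * n) = (if Even k then 1 else 0) * r2 n := by
  induction k using Nat.twoStepInduction with
  | zero => simp
  | one => simp [r2_three_one p n hp h3 hn]
  | more k ih1 _ =>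
    rw [pow_add, mul_comm (p^k), mul_assoc, r2_three_sq p _ hp h3, ih1]
    simp [Nat.even_add]

lemma r2_one_pow (q n k : ℕ) (hq : q.Prime) (h1 : q % 4 = 1) (hn : ¬ q ∣ n) :
    r2 (q^k * n) = (k + 1) * r2 n := by
  haveI := Fact.mk hq
  obtain ⟨a, b, hab⟩ := Nat.Prime.sq_add_sq (p := q) (by omega)
  have hq0 : (q:ℤ) ≠ 0 := by exact_mod_cast hq.ne_zero
  set π : GaussianInt := ⟨a, b⟩ with hπ
  set ρ : GaussianInt := ⟨a, -b⟩ with hρ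
  have nπ : π.norm = q := by rw [norm_eq', ← hab]; push_cast; ring
  have nρ : ρ.norm = q := by rw [norm_eq', ← hab]; simp [hρ]
  have irr : ∀ z : GaussianInt, z.norm = q → Prime z := by
    intro z hz
    rw [← irreducible_iff_prime]
    constructor
    · intro hu
      rw [← Zsqrtd.norm_eq_one_iff, hz] at hu
      simp at hu; exact hq.one_lt.ne' hu
    · intro x y hxy
      have h : x.norm.natAbs * y.norm.natAbs = q := by
        rw [← Int.natAbs_mul, ← Zsqrtd.norm_mul, ← hxy, hz]; simp
      rcases (Nat.Prime.eq_one_or_self_of_dvd hq _ ⟨_, h.symm⟩) with h' | h'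
      · left; exact Zsqrtd.norm_eq_one_iff.1 h'
      · right
        rw [h'] at h
        have : y.norm.natAbs = 1 := by
          have := hq.pos
          exact Nat.eq_of_mul_eq_mul_left this (by rw [h, mul_one])
        exact Zsqrtd.norm_eq_one_iff.1 this
  have pπ := irr π nπ
  have pρ := irr ρ nρ
  have hmul : π * ρ = (q : GaussianInt) := by
    apply Zsqrtd.ext
    · simp [hπ, hρ]; rw [← hab]; push_cast; ring
    · simp [hπ, hρ]; ring
  have hπρ : ¬ π ∣ ρ := by
    rintro ⟨w, hw⟩
    -- then π divides 2a
    have h2 : π ∣ ((2 * a : ℕ) : GaussianInt) := by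
      refine ⟨1 + w, ?_⟩
      rw [mul_add, mul_one, ← hw]
      apply Zsqrtd.ext
      · simp [hπ, hρ]; ring
      · simp [hπ, hρ]
    obtain ⟨v, hv⟩ := h2
    have := congrArg Zsqrtd.norm hv
    rw [Zsqrtd.norm_natCast, Zsqrtd.norm_mul, nπ] at this
    have h3 : (q:ℤ) ∣ ((2 * a : ℕ) : ℤ) * ((2 * a : ℕ) : ℤ) := ⟨_, this⟩
    have h4 : q ∣ (2 * a) * (2 * a) := by exact_mod_cast h3
    have h5 : q ∣ 2 * a := by rcases (Nat.Prime.dvd_mul hq).1 h4 with h | h <;> exact h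
    have ha : q ∣ a := by
      rcases (Nat.Prime.dvd_mul hq).1 h5 with h | h
      · have := Nat.le_of_dvd (by norm_num) h
        have := hq.two_le
        interval_cases q; omega
      · exact h
    obtain ⟨c, rfl⟩ := ha
    have hc : c = 0 := by
      by_contra hc
      have : 1 ≤ c := Nat.one_le_iff_ne_zero.2 hc
      have h6 : q^2 * 1 ≤ q^2 * c^2 := Nat.mul_le_mul_left _ (Nat.one_le_pow _ _ this)
      have := hq.two_le
      nlinarith
    rw [hc] at hab
    simp at hab
    have : ¬ q.Prime := by rw [← hab]; exact Nat.Prime.not_prime_pow (by norm_num)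
    exact this hq
  have hdvd : ∀ z : GaussianInt, ∀ m : ℕ, z.norm = (q * m : ℕ) → π ∣ z ∨ ρ ∣ z := by
    intro z m hz
    have h1 : π ∣ z * star z := by
      rw [← Zsqrtd.norm_eq_mul_conj, hz]
      refine ⟨ρ * (m : GaussianInt), ?_⟩
      rw [← mul_assoc, hmul]; push_cast; ring
    rcases pπ.dvd_or_dvd h1 with h | h
    · exact Or.inl h
    · right
      obtain ⟨w, hw⟩ := h
      refine ⟨star w, ?_⟩
      have := congrArg star hw
      rw [star_star, star_mul] at this
      rw [this, mul_comm]; congr 1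
  have hndvd : ∀ c z : GaussianInt, c.norm = q → z.norm = n → ¬ c ∣ z := by
    rintro c z hc hz ⟨w, rfl⟩
    rw [Zsqrtd.norm_mul, hc] at hz
    apply hn
    have : (q:ℤ) ∣ n := ⟨_, hz.symm⟩
    exact_mod_cast this
  rw [r2_eq, r2_eq]
  have : Nat.card (Fin (k+1) × RR n) = Nat.card (RR (q^k * n)) := by
    apply Nat.card_congr
    have npow : ∀ (c : GaussianInt) (j : ℕ), (c^j).norm = c.norm^j := by
      intro c j; exact map_pow (Zsqrtd.normMonoidHom) c j
    apply Equiv.ofBijective (fun x : Fin (k+1) × RR n => (⟨π^(x.1:ℕ) * ρ^(k - x.1) * x.2.1, by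
      rw [Zsqrtd.norm_mul, Zsqrtd.norm_mul, npow, npow, nπ, nρ, x.2.2, ← pow_add]
      have := x.1.2
      rw [show (x.1:ℕ) + (k - x.1) = k by omega]; push_cast; ring⟩ : RR (q^k * n)))
    constructor
    · -- injective
      have aux : ∀ (i j : ℕ) (z w : GaussianInt), i < j → j ≤ k → z.norm = n → π^i * ρ^(k-i) * z = π^j * ρ^(k-j) * w → False := by
        intro i j z w hij hjk hz h
        have e : π^j = π^i * (π * π^(j-i-1)) := by
          rw [← pow_succ', ← pow_add]; congr 1; omega
        rw [e, mul_assoc, mul_assoc, mul_assoc] at h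
        have h' := mul_left_cancel₀ (pow_ne_zero i pπ.ne_zero) h
        have hd : π ∣ ρ^(k-i) * z := ⟨π^(j-i-1) * (ρ^(k-j) * w), by rw [h']; ring⟩
        rcases pπ.dvd_or_dvd hd with h1 | h1
        · exact hπρ (pπ.dvd_of_dvd_pow h1)
        · exact hndvd π z nπ hz h1
      rintro ⟨i, z, hz⟩ ⟨j, w, hw⟩ h
      have h' := congrArg Subtype.val h
      simp only at h'
      rcases lt_trichotomy (i:ℕ) (j:ℕ) with hlt | heq | hgt
      · exact (aux i j z w hlt (by omega) hz h').elim
      · have hij : i = j := Fin.ext heq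
        subst hij
        have : z = w := mul_left_cancel₀ (mul_ne_zero (pow_ne_zero _ pπ.ne_zero) (pow_ne_zero _ pρ.ne_zero)) h'
        subst this; rfl
      · exact (aux j i w z hgt (by omega) hw h'.symm).elim
    · -- surjective
      have sur : ∀ k : ℕ, ∀ z : GaussianInt, z.norm = (q^k * n : ℕ) → ∃ j ≤ k, ∃ w : GaussianInt, w.norm = n ∧ z = π^j * ρ^(k-j) * w := by
        intro k
        induction k with
        | zero => intro z hz; exact ⟨0, le_rfl, z, by simpa using hz, by simp⟩
        | succ k ih =>
          intro z hz
          rcases hdvd z (q^k * n) (by rw [hz]; push_cast; ring) with ⟨v, rfl⟩ | ⟨v, rfl⟩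
          · rw [Zsqrtd.norm_mul, nπ] at hz
            have hv : v.norm = (q^k * n : ℕ) := by
              apply mul_left_cancel₀ hq0; rw [hz]; push_cast; ring
            obtain ⟨j, hj, w, hw, e⟩ := ih v hv
            refine ⟨j+1, by omega, w, hw, ?_⟩
            rw [e, show k + 1 - (j+1) = k - j by omega]; ring
          · rw [Zsqrtd.norm_mul, nρ] at hz
            have hv : v.norm = (q^k * n : ℕ) := by
              apply mul_left_cancel₀ hq0; rw [hz]; push_cast; ring
            obtain ⟨j, hj, w, hw, e⟩ := ih v hv
            refine ⟨j, by omega, w, hw, ?_⟩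
            rw [e, show k + 1 - j = (k - j) + 1 by omega]; ring
      rintro ⟨z, hz⟩
      obtain ⟨j, hj, w, hw, e⟩ := sur k z hz
      exact ⟨(⟨j, by omega⟩, ⟨w, hw⟩), Subtype.ext e.symm⟩
  rw [← this, Nat.card_prod]; simp

lemma r2_two_pow (k n : ℕ) : r2 (2^k * n) = r2 n := by
  induction k with
  | zero => simp
  | succ k ih => rw [pow_succ', mul_assoc, r2_two, ih]

lemma r2_one : r2 1 = 4 := by
  rw [r2_eq]
  have : {z : GaussianInt | z.norm = ((1:ℕ) : ℤ)} = ((({⟨1,0⟩, ⟨-1,0⟩, ⟨0,1⟩, ⟨0,-1⟩} : Finset GaussianInt)) : Set GaussianInt) := by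
    ext ⟨a, b⟩
    simp only [Set.mem_setOf_eq, Finset.coe_insert, Finset.coe_singleton, Set.mem_insert_iff, Set.mem_singleton_iff, Zsqrtd.ext_iff, norm_eq']
    constructor
    · intro h
      push_cast at h
      have ha : a^2 ≤ 1 := by nlinarith [sq_nonneg b]
      have hb : b^2 ≤ 1 := by nlinarith [sq_nonneg a]
      have h1 : -1 ≤ a := by nlinarith
      have h2 : a ≤ 1 := by nlinarith
      have h3 : -1 ≤ b := by nlinarith
      have h4 : b ≤ 1 := by nlinarith
      interval_cases a <;> interval_cases b <;> simp_all
    · rintro (⟨rfl, rfl⟩ | ⟨rfl, rfl⟩ | ⟨rfl, rfl⟩ | ⟨rfl, rfl⟩) <;> norm_num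
  change Nat.card {z : GaussianInt | z.norm = ((1:ℕ) : ℤ)} = 4
  rw [this, Nat.card_coe_set_eq, Set.ncard_coe_finset]
  rfl

lemma r2_zero : r2 0 = 1 := by
  unfold r2
  have : Unique {p : ℤ × ℤ // p.1 ^ 2 + p.2 ^ 2 = ((0:ℕ) : ℤ)} := by
    refine ⟨⟨⟨(0,0), by simp⟩⟩, ?_⟩
    rintro ⟨⟨a, b⟩, h⟩
    simp only [Nat.cast_zero] at h
    have ha : a = 0 := by nlinarith [sq_nonneg a, sq_nonneg b, pow_eq_zero_iff (n := 2) (a := a) (by norm_num), (show a^2 = 0 by nlinarith [sq_nonneg a, sq_nonneg b])]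
    have hb : b = 0 := by subst ha; simpa using h
    subst ha hb; rfl
  exact Nat.card_unique

def ef (p k : ℕ) : ℕ := if p % 4 = 1 then k + 1 else if p % 4 = 3 then (if Even k then 1 else 0) else 1
lemma ef_zero (p : ℕ) : ef p 0 = 1 := by unfold ef; split_ifs <;> simp_all
noncomputable def gg (n : ℕ) : ℕ := n.factorization.prod ef

lemma r2_prime_pow (p k n : ℕ) (hp : p.Prime) (hn : ¬ p ∣ n) : r2 (p^k * n) = ef p k * r2 n := by
  unfold ef
  split_ifs with h1 h3 he
  · exact r2_one_pow p n k hp h1 hn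
  · rw [r2_three_pow p n k hp h3 hn, if_pos he]
  · rw [r2_three_pow p n k hp h3 hn, if_neg he]
  · have : p = 2 := by
      rcases hp.eq_two_or_odd with h | h
      · exact h
      · omega
    subst this
    rw [r2_two_pow, one_mul]

lemma gg_prime_pow (p k n : ℕ) (hp : p.Prime) (hn : ¬ p ∣ n) (hn0 : n ≠ 0) : gg (p^k * n) = ef p k * gg n := by
  unfold gg
  rw [Nat.factorization_mul (pow_ne_zero _ hp.ne_zero) hn0, hp.factorization_pow,
    Finsupp.prod_add_index_of_disjoint, Finsupp.prod_single_index (ef_zero p)]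
  refine Finset.disjoint_of_subset_left Finsupp.support_single_subset ?_
  simp [hn]

lemma r2_gg (n : ℕ) (hn : n ≠ 0) : r2 n = 4 * gg n := by
  induction n using Nat.recOnPrimePow with
  | zero => exact (hn rfl).elim
  | one => rw [r2_one]; simp [gg]
  | prime_pow_mul a p n hp hpa _ ih =>
    have ha : a ≠ 0 := by rintro rfl; exact hpa (dvd_zero p)
    rw [r2_prime_pow p n a hp hpa, gg_prime_pow p n a hp hpa ha, ih ha]; ring

lemma delta_nat (n : ℕ) : delta (n : ℝ) = (r2 n : ℝ) / 4 := by
  unfold delta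
  have h : ∃ m : ℕ, (m : ℝ) = (n:ℝ) := ⟨n, rfl⟩
  rw [dif_pos h]
  have : h.choose = n := by exact_mod_cast h.choose_spec
  rw [this]

lemma delta_gg (n : ℕ) (hn : n ≠ 0) : delta (n : ℝ) = (gg n : ℝ) := by
  rw [delta_nat, r2_gg n hn]; push_cast; ring

lemma delta_zero : delta ((0:ℕ) : ℝ) = 1/4 := by rw [delta_nat, r2_zero]; norm_num
end BEFS

namespace BEFS
set_option linter.unusedSectionVars false

noncomputable def al (l : ℕ) : ℝ := Real.log (1 + 1 / (l : ℝ))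

lemma al_nonneg (l : ℕ) : 0 ≤ al l := Real.log_nonneg (by have : (0:ℝ) ≤ 1 / (l:ℝ) := by positivity
                                                          linarith)
lemma al_le (l : ℕ) : al l ≤ 1 / (l : ℝ) := by
  have : (0:ℝ) ≤ 1 / (l:ℝ) := by positivity
  have := Real.log_le_sub_one_of_pos (show 0 < 1 + 1 / (l:ℝ) by linarith)
  unfold al; linarith

lemma log_one_add (a : ℕ) : Real.log (1 + (a:ℝ)) = ∑ l ∈ Finset.Icc 1 a, al l := by
  induction a with
  | zero => simp
  | succ a ih =>
    rw [Finset.sum_Icc_succ_top (by omega), ← ih]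
    unfold al
    have h : (0:ℝ) < 1 + (a:ℝ) := by positivity
    rw [← Real.log_mul (by positivity) (by positivity)]
    congr 1
    push_cast
    field_simp
    ring

/-- the set of primes = 1 mod 4 up to M -/
noncomputable def PF (M : ℕ) : Finset ℕ := (Finset.Icc 1 M).filter (fun p => p.Prime ∧ p % 4 = 1)

lemma mem_PF {M p : ℕ} : p ∈ PF M ↔ p ≤ M ∧ p.Prime ∧ p % 4 = 1 := by
  unfold PF; simp only [Finset.mem_filter, Finset.mem_Icc]
  constructor
  · rintro ⟨⟨_, h⟩, h'⟩; exact ⟨h, h'⟩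
  · rintro ⟨h, h'⟩; exact ⟨⟨h'.1.pos, h⟩, h'⟩

lemma PF_five {M p : ℕ} (h : p ∈ PF M) : 5 ≤ p := by
  have := mem_PF.1 h
  have := this.2.1.two_le
  omega

noncomputable def DF (M m : ℕ) : ℝ := ∑ p ∈ PF M, Real.log (1 + (m.factorization p : ℝ))

lemma DF_nonneg (M m : ℕ) : 0 ≤ DF M m := Finset.sum_nonneg fun p _ => Real.log_nonneg (by
  have : (0:ℝ) ≤ (m.factorization p : ℝ) := by positivity
  linarith)

lemma DF_mul {M a b : ℕ} (ha : a ≠ 0) (hb : b ≠ 0) : DF M (a * b) ≤ DF M a + DF M b := by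
  unfold DF
  rw [← Finset.sum_add_distrib]
  apply Finset.sum_le_sum
  intro p _
  rw [Nat.factorization_mul ha hb, ← Real.log_mul (by positivity) (by positivity)]
  apply Real.log_le_log (by positivity)
  simp only [Finsupp.add_apply]
  push_cast
  have : (0:ℝ) ≤ (a.factorization p : ℝ) * (b.factorization p : ℝ) := by positivity
  nlinarith

lemma DF_prod {M : ℕ} {ι : Type*} (s : Finset ι) (w : ι → ℕ) (hw : ∀ i ∈ s, w i ≠ 0) :
    DF M (∏ i ∈ s, w i) ≤ ∑ i ∈ s, DF M (w i) := by
  classical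
  induction s using Finset.induction_on with
  | empty => simp [DF]
  | insert i s hi ih =>
    rw [Finset.prod_insert hi, Finset.sum_insert hi]
    have h1 : ∀ j ∈ s, w j ≠ 0 := fun j hj => hw j (Finset.mem_insert_of_mem hj)
    refine (DF_mul (hw i (Finset.mem_insert_self _ _)) (Finset.prod_ne_zero_iff.2 h1)).trans ?_
    linarith [ih h1]

lemma log_gg_le (m : ℕ) : Real.log (gg m : ℝ) ≤ DF m m := by
  by_cases h0 : gg m = 0
  · rw [h0]; simpa using DF_nonneg m m
  unfold gg at h0 ⊢
  unfold Finsupp.prod at h0 ⊢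
  push_cast
  have h1 := Finset.prod_ne_zero_iff.1 h0
  rw [Real.log_prod (fun p hp => by exact_mod_cast h1 p hp)]
  have h2 : ∀ p ∈ m.factorization.support, Real.log (ef p (m.factorization p) : ℝ) ≤ if p % 4 = 1 then Real.log (1 + (m.factorization p : ℝ)) else 0 := by
    intro p hp
    unfold ef
    split_ifs <;> simp [add_comm]
  refine (Finset.sum_le_sum h2).trans ?_
  rw [← Finset.sum_filter]
  unfold DF
  apply Finset.sum_le_sum_of_subset_of_nonneg
  · intro p hp
    simp only [Finset.mem_filter, Nat.support_factorization, Nat.mem_primeFactors] at hp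
    exact mem_PF.2 ⟨Nat.le_of_dvd (Nat.pos_of_ne_zero hp.1.2.2) hp.1.2.1, hp.1.1, hp.2⟩
  · intro p _ _
    apply Real.log_nonneg
    have : (0:ℝ) ≤ (m.factorization p : ℝ) := by positivity
    linarith

/-- Σ v_p(w)(p-1) ≤ w-1 -/
lemma sum_vp_le (s : Finset ℕ) (w : ℕ) (hw : w ≠ 0) :
    ∑ p ∈ s, (w.factorization p : ℝ) * ((p:ℝ) - 1) ≤ (w : ℝ) - 1 := by
  induction w using Nat.recOnMul with
  | zero => exact absurd rfl hw
  | one => simp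
  | prime q hq =>
    have : ∀ p ∈ s, (q.factorization p : ℝ) * ((p:ℝ) - 1) = if p = q then ((q:ℝ) - 1) else 0 := by
      intro p _
      rw [hq.factorization, Finsupp.single_apply]
      split_ifs with h1 h2 h2
      · subst h1; simp
      · exact absurd h1.symm h2
      · exact absurd h2.symm h1
      · simp
    rw [Finset.sum_congr rfl this, Finset.sum_ite_eq']
    have : (1:ℝ) ≤ q := by exact_mod_cast hq.one_le
    split_ifs <;> linarith
  | mul a b iha ihb =>
    have ha : a ≠ 0 := left_ne_zero_of_mul hw
    have hb : b ≠ 0 := right_ne_zero_of_mul hw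
    rw [Nat.factorization_mul ha hb]
    simp only [Finsupp.add_apply]
    push_cast
    simp_rw [add_mul]
    rw [Finset.sum_add_distrib]
    have h1 := iha ha
    have h2 := ihb hb
    have h3 : (1:ℝ) ≤ a := by exact_mod_cast Nat.pos_of_ne_zero ha
    have h4 : (1:ℝ) ≤ b := by exact_mod_cast Nat.pos_of_ne_zero hb
    nlinarith

lemma log_eq_sum (n : ℕ) (hn : n ≠ 0) : Real.log n = ∑ q ∈ n.primeFactors, (n.factorization q : ℝ) * Real.log q := by
  conv_lhs => rw [← Nat.prod_factorization_pow_eq_self hn]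
  unfold Finsupp.prod
  push_cast
  rw [Real.log_prod]
  · simp [Real.log_pow]
  · intro p hp
    have : p ≠ 0 := (Nat.prime_of_mem_primeFactors (by simpa using hp)).ne_zero
    positivity

lemma DF_le_log (M w : ℕ) (hw : w ≠ 0) : DF M w ≤ Real.log w := by
  rw [log_eq_sum w hw]
  have h1 : DF M w ≤ ∑ p ∈ PF M, (w.factorization p : ℝ) * Real.log p := by
    unfold DF
    apply Finset.sum_le_sum
    intro p hp
    have h5 : (5:ℝ) ≤ p := by exact_mod_cast PF_five hp
    have h0 : (0:ℝ) ≤ (w.factorization p : ℝ) := by positivity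
    have h2 := Real.log_le_sub_one_of_pos (show 0 < 1 + (w.factorization p : ℝ) by positivity)
    have h3 : 1 ≤ Real.log p := by
      rw [Real.le_log_iff_exp_le (by linarith)]
      linarith [Real.exp_one_lt_d9]
    nlinarith
  refine h1.trans ?_
  rw [← Finset.sum_filter_add_sum_filter_not (PF M) (fun p => p ∈ w.primeFactors)]
  have h2 : ∑ p ∈ (PF M).filter (fun p => ¬ p ∈ w.primeFactors), (w.factorization p : ℝ) * Real.log p = 0 := by
    apply Finset.sum_eq_zero
    intro p hp
    have : w.factorization p = 0 := by
      have := (Finset.mem_filter.1 hp).2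
      rwa [← Nat.support_factorization, Finsupp.notMem_support_iff] at this
    rw [this]; simp
  rw [h2, add_zero]
  apply Finset.sum_le_sum_of_subset_of_nonneg
  · intro p hp; exact (Finset.mem_filter.1 hp).2
  · intro p _ _; exact mul_nonneg (by positivity) (Real.log_natCast_nonneg p)

/-- the duality bound -/
lemma dual_bound (M m : ℕ) {y : ℝ} (hy : 0 < y) (N : ℕ) (hN : y ≤ N) :
    DF M m ≤ (1 / y) * ∑ p ∈ PF M, (m.factorization p : ℝ) * ((p:ℝ) - 1) +
      (1 / y) * ∑ l ∈ Finset.Icc 1 N, W1 (al l * y + 1) := by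
  have h1 : ∀ p ∈ PF M, Real.log (1 + (m.factorization p : ℝ)) ≤ (1 / y) * ((m.factorization p : ℝ) * ((p:ℝ) - 1)) +
      (1 / y) * ∑ l ∈ Finset.Icc 1 N, max 0 (al l * y + 1 - p) := by
    intro p hp
    have h5 : (5:ℝ) ≤ p := by exact_mod_cast PF_five hp
    set a := m.factorization p
    have h2 : (1 / y) * ((a : ℝ) * ((p:ℝ) - 1)) = ∑ l ∈ Finset.Icc 1 a, (1 / y) * ((p:ℝ) - 1) := by
      rw [Finset.sum_const]; simp; ring
    rw [log_one_add, h2]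
    have h3 : ∑ l ∈ Finset.Icc 1 a, al l - ∑ l ∈ Finset.Icc 1 a, (1 / y) * ((p:ℝ) - 1) ≤ ∑ l ∈ Finset.Icc 1 a, (1 / y) * max 0 (al l * y + 1 - p) := by
      rw [← Finset.sum_sub_distrib]
      apply Finset.sum_le_sum
      intro l _
      have : al l - (1 / y) * ((p:ℝ) - 1) = (1 / y) * (al l * y + 1 - p) := by field_simp; ring
      rw [this]
      exact mul_le_mul_of_nonneg_left (le_max_right _ _) (by positivity)
    have h4 : ∑ l ∈ Finset.Icc 1 a, (1 / y) * max 0 (al l * y + 1 - p) ≤ ∑ l ∈ Finset.Icc 1 N, (1 / y) * max 0 (al l * y + 1 - p) := by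
      rw [← Finset.sum_filter_add_sum_filter_not (Finset.Icc 1 a) (fun l => l ≤ N)]
      have h6 : ∑ l ∈ (Finset.Icc 1 a).filter (fun l => ¬ l ≤ N), (1 / y) * max 0 (al l * y + 1 - p) = 0 := by
        apply Finset.sum_eq_zero
        intro l hl
        simp only [Finset.mem_filter, Finset.mem_Icc, not_le] at hl
        have hl' : y ≤ l := hN.trans (by exact_mod_cast hl.2.le)
        have hl0 : (0:ℝ) < l := by linarith
        have : al l * y ≤ 1 := by
          calc al l * y ≤ 1 / (l:ℝ) * l := mul_le_mul (al_le l) hl' hy.le (by positivity)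
            _ = 1 := by field_simp
        rw [max_eq_left (by linarith)]; ring
      rw [h6, add_zero]
      apply Finset.sum_le_sum_of_subset_of_nonneg
      · intro l hl
        simp only [Finset.mem_filter, Finset.mem_Icc] at hl ⊢
        exact ⟨hl.1.1, hl.2⟩
      · intro l _ _
        exact mul_nonneg (by positivity) (le_max_left _ _)
    rw [Finset.mul_sum (Finset.Icc 1 N)]
    linarith
  unfold DF
  refine (Finset.sum_le_sum h1).trans ?_
  rw [Finset.sum_add_distrib, ← Finset.mul_sum, ← Finset.mul_sum, Finset.sum_comm]
  gcongr with l hl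
  unfold W1
  have hz : 0 ≤ al l * y + 1 := by have := al_nonneg l; positivity
  rw [Sm_eq f1 hz (le_max_left ⌊al l * y + 1⌋₊ M)]
  unfold PF
  rw [Finset.sum_filter]
  calc _ ≤ ∑ n ∈ Finset.Icc 1 M, f1 n * max 0 (al l * y + 1 - n) := by
        apply Finset.sum_le_sum
        intro p _
        unfold f1
        split_ifs <;> simp
    _ ≤ _ := by
        apply Finset.sum_le_sum_of_subset_of_nonneg
        · intro p; simp only [Finset.mem_Icc]; intro h; exact ⟨h.1, h.2.trans (le_max_right _ _)⟩
        · intro p _ _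
          apply mul_nonneg _ (le_max_left _ _)
          unfold f1; split_ifs <;> norm_num

end BEFS

namespace BEFS
set_option linter.unusedSectionVars false

lemma W1_nonneg (z : ℝ) : 0 ≤ W1 z := by
  unfold W1 Sm
  apply Finset.sum_nonneg
  intro n hn
  simp only [Finset.mem_Icc] at hn
  have h1 : (n:ℝ) ≤ z := by
    rw [← Nat.le_floor_iff']
    · exact hn.2
    · omega
  apply mul_nonneg _ (by linarith)
  unfold f1; split_ifs <;> norm_num

lemma ef_le (q k : ℕ) : ef q k ≤ k + 1 := by
  unfold ef; split_ifs <;> omega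

/-- combinatorial upper bound -/
lemma upper_comb {n : ℕ} {x Q y : ℝ} (hn : 1 ≤ n) (hx : (n:ℝ) ≤ x) (hQ : 1 < Q) (hy : 0 < y)
    (N : ℕ) (hN : y ≤ N) :
    Real.log (delta (delta (n : ℝ))) ≤ Q * Real.log (2 * Real.log x + 1) + Real.log x / (y * Real.log Q) +
      (1 / y) * ∑ l ∈ Finset.Icc 1 N, W1 (al l * y + 1) := by
  have hn0 : n ≠ 0 := by omega
  have hn1 : (1:ℝ) ≤ n := by exact_mod_cast hn
  have hlx : Real.log n ≤ Real.log x := Real.log_le_log (by linarith) hx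
  have hlx0 : 0 ≤ Real.log x := (Real.log_natCast_nonneg n).trans hlx
  have hlQ : 0 < Real.log Q := Real.log_pos hQ
  have hll : 0 ≤ Real.log (2 * Real.log x + 1) := Real.log_nonneg (by linarith)
  have hW : 0 ≤ (1 / y) * ∑ l ∈ Finset.Icc 1 N, W1 (al l * y + 1) :=
    mul_nonneg (by positivity) (Finset.sum_nonneg fun l _ => W1_nonneg _)
  have hA : 0 ≤ Q * Real.log (2 * Real.log x + 1) := by positivity
  have hB : 0 ≤ Real.log x / (y * Real.log Q) := by positivity
  rw [delta_gg n hn0]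
  by_cases h0 : gg n = 0
  · rw [h0, delta_zero]
    have : Real.log (1/4) ≤ 0 := Real.log_nonpos (by norm_num) (by norm_num)
    linarith
  rw [delta_gg _ h0]
  refine (log_gg_le _).trans ?_
  have hmp : gg n = ∏ q ∈ n.primeFactors, ef q (n.factorization q) := rfl
  generalize gg n = m at h0 hmp ⊢
  have hne : ∀ q ∈ n.primeFactors, ef q (n.factorization q) ≠ 0 := by
    rw [hmp] at h0; exact Finset.prod_ne_zero_iff.1 h0
  have hnu : ∀ q ∈ n.primeFactors, (n.factorization q : ℝ) * Real.log q ≤ Real.log x := by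
    intro q hq
    refine le_trans ?_ hlx
    rw [log_eq_sum n hn0]
    exact Finset.single_le_sum (f := fun q => (n.factorization q : ℝ) * Real.log q) (fun i _ => mul_nonneg (by positivity) (Real.log_natCast_nonneg i)) hq
  set A := n.primeFactors.filter (fun q : ℕ => (q:ℝ) ≤ Q)
  set B := n.primeFactors.filter (fun q : ℕ => ¬ (q:ℝ) ≤ Q)
  have hsplit : m = (∏ q ∈ A, ef q (n.factorization q)) * ∏ q ∈ B, ef q (n.factorization q) := by
    rw [hmp]; exact (Finset.prod_filter_mul_prod_filter_not _ _ _).symm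
  have hneA : ∀ q ∈ A, ef q (n.factorization q) ≠ 0 := fun q hq => hne q (Finset.mem_filter.1 hq).1
  have hneB : ∀ q ∈ B, ef q (n.factorization q) ≠ 0 := fun q hq => hne q (Finset.mem_filter.1 hq).1
  have h1 : DF m m ≤ DF m (∏ q ∈ A, ef q (n.factorization q)) + DF m (∏ q ∈ B, ef q (n.factorization q)) := by
    have e := DF_mul (M := m) (Finset.prod_ne_zero_iff.2 hneA) (Finset.prod_ne_zero_iff.2 hneB)
    rwa [← hsplit] at e
  have h2 : DF m (∏ q ∈ A, ef q (n.factorization q)) ≤ Q * Real.log (2 * Real.log x + 1) := by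
    refine (DF_prod _ _ hneA).trans ?_
    have : ∀ q ∈ A, DF m (ef q (n.factorization q)) ≤ Real.log (2 * Real.log x + 1) := by
      intro q hq
      refine (DF_le_log _ _ (hneA q hq)).trans ?_
      have hq' := (Finset.mem_filter.1 hq).1
      apply Real.log_le_log (by exact_mod_cast Nat.pos_of_ne_zero (hneA q hq))
      have e1 : ((ef q (n.factorization q) : ℕ) : ℝ) ≤ n.factorization q + 1 := by exact_mod_cast ef_le _ _
      have e2 := hnu q hq'
      have e3 : Real.log 2 ≤ Real.log q := Real.log_le_log (by norm_num) (by exact_mod_cast (Nat.prime_of_mem_primeFactors hq').two_le)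
      have e4 := Real.log_two_gt_d9
      have e5 : (0:ℝ) ≤ n.factorization q := by positivity
      nlinarith
    refine (Finset.sum_le_sum this).trans ?_
    rw [Finset.sum_const, nsmul_eq_mul]
    apply mul_le_mul_of_nonneg_right _ hll
    have : A ⊆ Finset.Icc 1 ⌊Q⌋₊ := by
      intro q hq
      have hq' := Finset.mem_filter.1 hq
      rw [Finset.mem_Icc]
      exact ⟨(Nat.prime_of_mem_primeFactors hq'.1).pos, Nat.le_floor hq'.2⟩
    have := Finset.card_le_card this
    rw [Nat.card_Icc, Nat.add_sub_cancel] at this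
    calc (A.card : ℝ) ≤ ⌊Q⌋₊ := by exact_mod_cast this
      _ ≤ Q := Nat.floor_le (by linarith)
  obtain ⟨m2, hm2⟩ : ∃ k, k = ∏ q ∈ B, ef q (n.factorization q) := ⟨_, rfl⟩
  rw [← hm2] at h1
  have h3 := dual_bound m m2 hy N hN
  have h4 : ∑ p ∈ PF m, (m2.factorization p : ℝ) * ((p:ℝ) - 1) ≤ Real.log x / Real.log Q := by
    have e1 : ∑ p ∈ PF m, (m2.factorization p : ℝ) * ((p:ℝ) - 1) = ∑ q ∈ B, ∑ p ∈ PF m, ((ef q (n.factorization q)).factorization p : ℝ) * ((p:ℝ) - 1) := by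
      rw [Finset.sum_comm]
      apply Finset.sum_congr rfl
      intro p _
      rw [hm2, Nat.factorization_prod hneB, Finsupp.finsetSum_apply]
      push_cast
      rw [Finset.sum_mul]
    rw [e1]
    have e2 : ∀ q ∈ B, ∑ p ∈ PF m, ((ef q (n.factorization q)).factorization p : ℝ) * ((p:ℝ) - 1) ≤ (n.factorization q : ℝ) * Real.log q / Real.log Q := by
      intro q hq
      refine (sum_vp_le _ _ (hneB q hq)).trans ?_
      have f1 : ((ef q (n.factorization q) : ℕ) : ℝ) ≤ n.factorization q + 1 := by exact_mod_cast ef_le _ _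
      have f2 : Real.log Q ≤ Real.log q := Real.log_le_log (by linarith) (not_le.1 (Finset.mem_filter.1 hq).2).le
      rw [le_div_iff₀ hlQ]
      have e5 : (0:ℝ) ≤ n.factorization q := by positivity
      nlinarith
    refine (Finset.sum_le_sum e2).trans ?_
    rw [← Finset.sum_div]
    gcongr
    refine le_trans ?_ hlx
    rw [log_eq_sum n hn0]
    apply Finset.sum_le_sum_of_subset_of_nonneg (Finset.filter_subset _ _)
    intro i _ _
    exact mul_nonneg (by positivity) (Real.log_natCast_nonneg i)
  have h5 : (1 / y) * ∑ p ∈ PF m, (m2.factorization p : ℝ) * ((p:ℝ) - 1) ≤ Real.log x / (y * Real.log Q) := by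
    calc _ ≤ (1 / y) * (Real.log x / Real.log Q) := by gcongr
      _ = _ := by field_simp
  linarith

end BEFS

namespace BEFS
set_option linter.unusedSectionVars false

noncomputable def SS : ℝ := ∑' l : ℕ, al (l + 1) ^ 2

lemma al_ge {l : ℕ} (hl : 1 ≤ l) : 1 / (2 * (l:ℝ)) ≤ al l := by
  have h : (1:ℝ) ≤ l := by exact_mod_cast hl
  have h1 := Real.one_sub_inv_le_log_of_pos (show 0 < 1 + 1 / (l:ℝ) by positivity)
  refine le_trans ?_ h1
  have : 1 - (1 + 1 / (l:ℝ))⁻¹ = 1 / ((l:ℝ) + 1) := by field_simp; ring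
  rw [this]
  gcongr
  linarith

lemma al_le_one {l : ℕ} (hl : 1 ≤ l) : al l ≤ 7 / 10 := by
  have h : (1:ℝ) ≤ l := by exact_mod_cast hl
  have h2 : al l ≤ Real.log 2 := by
    unfold al
    apply Real.log_le_log (by positivity)
    have : 1 / (l:ℝ) ≤ 1 := by rw [div_le_one (by linarith)]; exact h
    linarith
  linarith [Real.log_two_lt_d9]

lemma al_sq_le (l : ℕ) : al l ^ 2 ≤ ((l:ℝ)^2)⁻¹ := by
  have := pow_le_pow_left₀ (al_nonneg l) (al_le l) 2
  simpa using this

lemma summ_al : Summable (fun l : ℕ => al (l + 1) ^ 2) := by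
  have h : Summable (fun l : ℕ => (((l + 1 : ℕ):ℝ)^2)⁻¹) := by
    have := (Real.summable_nat_pow_inv (p := 2)).2 (by norm_num)
    exact (summable_nat_add_iff 1).2 this
  exact Summable.of_nonneg_of_le (fun l => sq_nonneg _) (fun l => al_sq_le _) h

lemma sum_range_Icc (f : ℕ → ℝ) (N : ℕ) : ∑ l ∈ Finset.Icc 1 N, f l = ∑ l ∈ Finset.range N, f (l + 1) := by
  induction N with
  | zero => simp
  | succ N ih => rw [Finset.sum_Icc_succ_top (by omega), ih, Finset.sum_range_succ]

lemma sum_al_le (N : ℕ) : ∑ l ∈ Finset.Icc 1 N, al l ^ 2 ≤ SS := by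
  rw [sum_range_Icc]
  exact summ_al.sum_le_tsum _ (fun l _ => sq_nonneg _)

lemma tail_al {k : ℕ} (hk : k ≠ 0) (N : ℕ) : ∑ l ∈ Finset.Ioc k N, al l ^ 2 ≤ 1 / (k:ℝ) := by
  rcases le_total k N with h | h
  · have h1 := sum_Ioc_inv_sq_le_sub (α := ℝ) hk h
    refine (Finset.sum_le_sum fun l _ => al_sq_le l).trans (h1.trans ?_)
    have : (0:ℝ) ≤ (N:ℝ)⁻¹ := by positivity
    rw [one_div]; linarith
  · rw [Finset.Ioc_eq_empty (by omega)]; simp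

lemma SS_le {k : ℕ} (hk : k ≠ 0) : SS ≤ ∑ l ∈ Finset.Icc 1 k, al l ^ 2 + 1 / (k:ℝ) := by
  apply Real.tsum_le_of_sum_range_le (fun l => sq_nonneg _)
  intro N
  rw [← sum_range_Icc (fun l => al l ^ 2)]
  calc _ ≤ ∑ l ∈ Finset.Icc 1 k ∪ Finset.Ioc k N, al l ^ 2 := by
        apply Finset.sum_le_sum_of_subset_of_nonneg
        · intro l; simp only [Finset.mem_Icc, Finset.mem_union, Finset.mem_Ioc]; omega
        · intro l _ _; positivity
    _ ≤ ∑ l ∈ Finset.Icc 1 k, al l ^ 2 + ∑ l ∈ Finset.Ioc k N, al l ^ 2 := by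
        rw [Finset.sum_union]
        rw [Finset.disjoint_left]; intro l; simp only [Finset.mem_Icc, Finset.mem_Ioc]; omega
    _ ≤ _ := by linarith [tail_al hk N]

lemma SS_pos : 0 < SS := by
  have h := sum_al_le 1
  have h1 := al_ge (le_refl 1)
  simp at h h1
  nlinarith

lemma sum_z {y : ℝ} (hy : 0 < y) (N : ℕ) (s : Finset ℕ) (hs : s ⊆ Finset.Icc 1 N) :
    ∑ l ∈ s, (al l * y + 1)^2 ≤ y^2 * ∑ l ∈ s, al l ^ 2 + (2 * y * Real.log (1 + N) + N) := by
  have e : ∀ l ∈ s, (al l * y + 1)^2 = y^2 * al l ^ 2 + 2 * y * al l + 1 := fun l _ => by ring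
  rw [Finset.sum_congr rfl e, Finset.sum_add_distrib, Finset.sum_add_distrib, ← Finset.mul_sum, ← Finset.mul_sum, Finset.sum_const, add_assoc]
  have h1 : ∑ l ∈ s, al l ≤ Real.log (1 + N) := by
    rw [log_one_add]
    exact Finset.sum_le_sum_of_subset_of_nonneg hs (fun l _ _ => al_nonneg l)
  have h2 : (s.card : ℝ) ≤ N := by
    have := Finset.card_le_card hs
    rw [Nat.card_Icc, Nat.add_sub_cancel] at this
    exact_mod_cast this
  simp only [nsmul_eq_mul, mul_one]
  gcongr

lemma W1_le_sq {z : ℝ} (hz : 0 ≤ z) : W1 z ≤ z ^ 2 := by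
  unfold W1 Sm
  calc _ ≤ ∑ n ∈ Finset.Icc 1 ⌊z⌋₊, z := by
        apply Finset.sum_le_sum
        intro n _
        unfold f1
        have : (0:ℝ) ≤ n := by positivity
        split_ifs
        · linarith
        · linarith
    _ ≤ _ := by
        rw [Finset.sum_const, Nat.card_Icc, Nat.add_sub_cancel, nsmul_eq_mul, pow_two]
        exact mul_le_mul_of_nonneg_right (Nat.floor_le hz) hz

/-- reciprocal perturbation -/
lemma inv_pert {L d A : ℝ} (hL : 0 < L) (hd : 0 ≤ d) (h2 : 2 * d ≤ L) (hA : L - d ≤ A) : 1 / A ≤ 1 / L + 2 * d / L^2 := by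
  have h3 : 0 < L - d := by linarith
  refine (one_div_le_one_div_of_le h3 hA).trans ?_
  have : 1 / L + 2 * d / L^2 = (L + 2 * d) / L^2 := by field_simp
  rw [this, div_le_div_iff₀ h3 (by positivity)]
  nlinarith

lemma ev_y (z0 : ℝ) : ∀ᶠ y : ℝ in atTop, 16 ≤ Real.log y ∧ 1 ≤ Real.log (Real.log y) ∧ 8 * Real.log (Real.log y) ≤ Real.log y ∧
    z0 ≤ Real.sqrt y / 4 ∧ 4 * Real.log y ^ 2 ≤ Real.sqrt y ∧ 6 * Real.log y ^ 3 ≤ y ∧ 16 ≤ y := by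
  have h1 := Real.tendsto_log_atTop
  have h2 := h1.comp h1
  have h3 := Real.isLittleO_log_id_atTop.comp_tendsto h1
  have h4 := (Real.isLittleO_pow_log_id_atTop (n := 5)).bound (show (0:ℝ) < 1/100 by norm_num)
  have h5 := h3.bound (show (0:ℝ) < 1/8 by norm_num)
  have h6 : Tendsto (fun y : ℝ => Real.sqrt y / 4) atTop atTop := Real.tendsto_sqrt_atTop.atTop_div_const (by norm_num)
  filter_upwards [h1.eventually_ge_atTop 16, h2.eventually_ge_atTop 1, h4, h5, h6.eventually_ge_atTop z0, eventually_ge_atTop 16] with y a1 a2 a3 a4 a5 a6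
  simp only [Function.comp, id, Real.norm_eq_abs] at a2 a3 a4
  rw [abs_of_nonneg (by linarith), abs_of_nonneg (by linarith)] at a4
  rw [abs_of_nonneg (by positivity), abs_of_nonneg (by linarith)] at a3
  have hL : 0 ≤ Real.log y := by linarith
  have h3 : 0 ≤ Real.log y ^ 3 := by positivity
  refine ⟨a1, a2, by linarith, a5, ?_, ?_, a6⟩
  · apply Real.le_sqrt_of_sq_le
    have : Real.log y ^ 4 * 16 ≤ Real.log y ^ 4 * Real.log y := by gcongr
    nlinarith
  · have : Real.log y ^ 3 * 16 ^ 2 ≤ Real.log y ^ 3 * Real.log y ^ 2 := by gcongr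
    nlinarith

end BEFS

namespace BEFS
set_option linter.unusedSectionVars false

lemma W_pt (C : ℝ) (hC : 0 < C) (z0 : ℝ) (hz0 : Real.exp (Real.exp 1) ≤ z0)
    (hW : ∀ z, z0 ≤ z → |W1 z - z^2/(4*Real.log z)| ≤ C*z^2*Real.log (Real.log z)/Real.log z^2)
    {y : ℝ} (h1 : 16 ≤ Real.log y) (h2 : 1 ≤ Real.log (Real.log y)) (h3 : 8 * Real.log (Real.log y) ≤ Real.log y)
    (h4 : z0 ≤ Real.sqrt y / 4) (h7 : 16 ≤ y) {l : ℕ} (hl : 1 ≤ l) :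
    W1 (al l * y + 1) ≤ (al l * y + 1)^2 * (1 / (4 * Real.log y) + (1 + 4 * C) * Real.log (Real.log y) / Real.log y ^ 2) +
      (if ⌊Real.log y⌋₊ < l then (al l * y + 1)^2 * (4 * (1 + C) / Real.log y) else 0) +
      (if ⌊Real.sqrt y⌋₊ < l then (al l * y + 1)^2 else 0) := by
  set L := Real.log y with hL
  set e := Real.log L with he
  set z := al l * y + 1 with hz
  have hl1 : (1:ℝ) ≤ l := by exact_mod_cast hl
  have ha0 := al_nonneg l
  have hz1 : 0 ≤ z := by positivity
  have p1 : 0 ≤ z^2 * (1 / (4 * L) + (1 + 4 * C) * e / L ^ 2) := by positivity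
  have p2 : 0 ≤ (if ⌊L⌋₊ < l then z^2 * (4 * (1 + C) / L) else 0) := by split_ifs <;> positivity
  have p3 : 0 ≤ (if ⌊Real.sqrt y⌋₊ < l then z^2 else 0) := by split_ifs <;> positivity
  by_cases hc : ⌊Real.sqrt y⌋₊ < l
  · have := W1_le_sq hz1
    rw [if_pos hc]; linarith
  have hs0 : 0 < Real.sqrt y := Real.sqrt_pos.2 (by linarith)
  have hls : (l:ℝ) ≤ Real.sqrt y := by
    rw [← Nat.le_floor_iff hs0.le]; omega
  have hyy : Real.sqrt y * Real.sqrt y = y := Real.mul_self_sqrt (by linarith)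
  have hzlow : ∀ b : ℝ, 0 < b → (l:ℝ) ≤ b → y / (2 * b) ≤ z := by
    intro b hb hlb
    have q1 := al_ge hl
    have q2 : 1 / (2 * b) ≤ 1 / (2 * (l:ℝ)) := by gcongr
    have q3 : 1 / (2 * b) * y ≤ al l * y := by gcongr; linarith
    have q4 : y / (2 * b) = 1 / (2 * b) * y := by ring
    linarith
  have hzs : Real.sqrt y / 2 ≤ z := by
    have := hzlow _ hs0 hls
    have e1 : y / (2 * Real.sqrt y) = Real.sqrt y / 2 := by
      rw [div_eq_div_iff (by positivity) (by norm_num)]; linarith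
    linarith
  have hzz0 : z0 ≤ z := by linarith
  have hzee : Real.exp (Real.exp 1) ≤ z := by linarith
  have hzp : 0 < z := (Real.exp_pos _).trans_le hzee
  have hlz : Real.exp 1 ≤ Real.log z := by rwa [Real.le_log_iff_exp_le hzp]
  have hlz0 : 0 < Real.log z := (Real.exp_pos _).trans_le hlz
  have hllz : 1 ≤ Real.log (Real.log z) := by rwa [Real.le_log_iff_exp_le hlz0]
  have hzy : z ≤ y := by
    have := al_le_one hl
    have : al l * y ≤ 7/10 * y := by gcongr
    linarith
  have hlzL : Real.log z ≤ L := Real.log_le_log hzp hzy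
  have hllze : Real.log (Real.log z) ≤ e := Real.log_le_log hlz0 hlzL
  have hWz := (abs_le.1 (hW z hzz0)).2
  have hWz2 : W1 z ≤ z^2 * (1 / Real.log z / 4 + C * Real.log (Real.log z) * (1 / Real.log z)^2) := by
    have : z^2 * (1 / Real.log z / 4 + C * Real.log (Real.log z) * (1 / Real.log z)^2) = z^2/(4*Real.log z) + C*z^2*Real.log (Real.log z)/Real.log z^2 := by
      field_simp
    linarith
  by_cases hd : ⌊L⌋₊ < l
  · -- middle range
    rw [if_pos hd]
    have q1 : L / 4 ≤ Real.log z := by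
      have := Real.log_le_log (by positivity) hzs
      rw [Real.log_div hs0.ne' (by norm_num), Real.log_sqrt (by linarith)] at this
      have := Real.log_two_lt_d9
      linarith
    have q2 : Real.log (Real.log z) ≤ Real.log z := (Real.log_le_sub_one_of_pos hlz0).trans (by linarith)
    have q3 : 1 / Real.log z ≤ 4 / L := by
      rw [div_le_div_iff₀ hlz0 (by linarith)]; linarith
    have q4 : C * Real.log (Real.log z) * (1 / Real.log z)^2 ≤ C * (1 / Real.log z) := by
      calc _ ≤ C * Real.log z * (1 / Real.log z)^2 := by gcongr
        _ = _ := by field_simp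
    have q5 : 1 / Real.log z / 4 + C * Real.log (Real.log z) * (1 / Real.log z)^2 ≤ 4 * (1 + C) / L := by
      have r0 : 0 < 1 / Real.log z := by positivity
      have : C * (1 / Real.log z) ≤ C * (4 / L) := by gcongr
      have r2 : 4 * (1 + C) / L = 4 / L + C * (4 / L) := by ring
      linarith
    have := mul_le_mul_of_nonneg_left q5 (sq_nonneg z)
    linarith
  · have hlL : (l:ℝ) ≤ L := by
      rw [← Nat.le_floor_iff (by linarith)]; omega
    have q1 : L - 2 * e ≤ Real.log z := by
      have := Real.log_le_log (by positivity) (hzlow L (by linarith) hlL)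
      rw [Real.log_div (by linarith) (by positivity), Real.log_mul (by norm_num) (by linarith)] at this
      have := Real.log_two_lt_d9
      linarith
    have q2 : 1 / Real.log z ≤ 1 / L + 2 * (2 * e) / L^2 := inv_pert (by linarith) (by linarith) (by linarith) q1
    have q3 : 1 / Real.log z ≤ 2 / L := by
      rw [div_le_div_iff₀ hlz0 (by linarith)]; linarith
    have q4 : C * Real.log (Real.log z) * (1 / Real.log z)^2 ≤ C * e * (2 / L)^2 := by gcongr
    have q5 : 1 / Real.log z / 4 + C * Real.log (Real.log z) * (1 / Real.log z)^2 ≤ 1 / (4 * L) + (1 + 4 * C) * e / L ^ 2 := by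
      have r2 : 1 / (4 * L) + (1 + 4 * C) * e / L ^ 2 = (1 / L + 2 * (2 * e) / L^2) / 4 + C * e * (2 / L)^2 := by
        field_simp; ring
      linarith
    have := mul_le_mul_of_nonneg_left q5 (sq_nonneg z)
    linarith

set_option maxHeartbeats 800000 in
lemma W_sum : ∃ C : ℝ, 0 < C ∧ ∀ᶠ y : ℝ in atTop, ∃ N : ℕ, y ≤ N ∧
    ∑ l ∈ Finset.Icc 1 N, W1 (al l * y + 1) ≤ SS * y^2 / (4 * Real.log y) + C * y^2 * Real.log (Real.log y) / Real.log y^2 := by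
  obtain ⟨C, hC, hW⟩ := W_asym
  obtain ⟨z1, hz1⟩ := eventually_atTop.1 hW
  have hSS := SS_pos
  refine ⟨SS * (1 + 4 * C) + (2 + 4 * C) + 12 * (1 + C) + 2, by positivity, ?_⟩
  filter_upwards [ev_y (max z1 (Real.exp (Real.exp 1)))] with y hy
  obtain ⟨h1, h2, h3, h4, h5, h6, h7⟩ := hy
  have hy0 : 0 < y := by linarith
  refine ⟨⌈y⌉₊, Nat.le_ceil y, ?_⟩
  set N := ⌈y⌉₊ with hN
  have hNy : (N:ℝ) ≤ y + 1 := (Nat.ceil_lt_add_one hy0.le).le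
  have hpt : ∀ l ∈ Finset.Icc 1 N, _ := fun l hl => W_pt C hC _ (le_max_right z1 (Real.exp (Real.exp 1))) (fun z hz => hz1 z ((le_max_left _ _).trans hz)) h1 h2 h3 h4 h7 (Finset.mem_Icc.1 hl).1
  refine (Finset.sum_le_sum hpt).trans ?_
  rw [Finset.sum_add_distrib, Finset.sum_add_distrib, ← Finset.sum_mul, ← Finset.sum_filter, ← Finset.sum_filter, ← Finset.sum_mul]
  have hfil : ∀ k : ℕ, (Finset.Icc 1 N).filter (fun l => k < l) = Finset.Ioc k N := by
    intro k; ext l; simp only [Finset.mem_filter, Finset.mem_Icc, Finset.mem_Ioc]; omega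
  rw [hfil, hfil]
  set L := Real.log y with hL
  set e := Real.log L with he
  set E := 2 * y * Real.log (1 + N) + N with hE
  have hL0 : 0 < L := by linarith
  have hE0 : 0 ≤ E := by
    have : 0 ≤ Real.log (1 + N) := Real.log_nonneg (by have : (0:ℝ) ≤ N := by positivity
                                                       linarith)
    positivity
  have hEle : E ≤ y^2 / L^2 := by
    have a1 : Real.log (1 + N) ≤ 2 * L := by
      have : Real.log (1 + N) ≤ Real.log (y^2) := Real.log_le_log (by positivity) (by nlinarith)
      rwa [Real.log_pow] at this
    have a2 : E ≤ 6 * y * L := by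
      have : 2 * y * Real.log (1 + N) ≤ 2 * y * (2 * L) := by gcongr
      nlinarith
    refine a2.trans ?_
    rw [le_div_iff₀ (by positivity)]
    nlinarith
  have hfl : L / 2 ≤ ⌊L⌋₊ := by have := Nat.lt_floor_add_one L; linarith
  have hfl0 : ⌊L⌋₊ ≠ 0 := by
    intro h; rw [h] at hfl; simp at hfl; linarith
  have hs16 : (4:ℝ) ≤ Real.sqrt y := Real.le_sqrt_of_sq_le (by norm_num; linarith)
  have hfs : Real.sqrt y / 2 ≤ ⌊Real.sqrt y⌋₊ := by have := Nat.lt_floor_add_one (Real.sqrt y); linarith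
  have hfs0 : ⌊Real.sqrt y⌋₊ ≠ 0 := by
    intro h; rw [h] at hfs; simp at hfs; linarith
  have s1 := sum_z hy0 N (Finset.Icc 1 N) (Finset.Subset.refl _)
  have s2 := sum_z hy0 N (Finset.Ioc ⌊L⌋₊ N) (by intro l; simp only [Finset.mem_Icc, Finset.mem_Ioc]; omega)
  have s3 := sum_z hy0 N (Finset.Ioc ⌊Real.sqrt y⌋₊ N) (by intro l; simp only [Finset.mem_Icc, Finset.mem_Ioc]; omega)
  rw [← hE] at s1 s2 s3
  have t1 := sum_al_le N
  have t2 : ∑ l ∈ Finset.Ioc ⌊L⌋₊ N, al l ^ 2 ≤ 2 / L := by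
    refine (tail_al hfl0 N).trans ?_
    rw [div_le_div_iff₀ (by linarith) hL0]; linarith
  have t3 : ∑ l ∈ Finset.Ioc ⌊Real.sqrt y⌋₊ N, al l ^ 2 ≤ 1 / L^2 := by
    refine (tail_al hfs0 N).trans ?_
    rw [div_le_div_iff₀ (by linarith) (by positivity)]; nlinarith
  have u1 : ∑ l ∈ Finset.Icc 1 N, (al l * y + 1)^2 ≤ y^2 * SS + y^2 / L^2 := by
    refine s1.trans ?_; gcongr
  have u2 : ∑ l ∈ Finset.Ioc ⌊L⌋₊ N, (al l * y + 1)^2 ≤ y^2 * (2 / L) + y^2 / L^2 := by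
    refine s2.trans ?_; gcongr
  have u3 : ∑ l ∈ Finset.Ioc ⌊Real.sqrt y⌋₊ N, (al l * y + 1)^2 ≤ y^2 * (1 / L^2) + y^2 / L^2 := by
    refine s3.trans ?_; gcongr
  have v1 : (∑ l ∈ Finset.Icc 1 N, (al l * y + 1)^2) * (1 / (4 * L) + (1 + 4 * C) * e / L ^ 2) ≤ (y^2 * SS + y^2 / L^2) * (1 / (4 * L) + (1 + 4 * C) * e / L ^ 2) := by
    gcongr
  have v2 : (∑ l ∈ Finset.Ioc ⌊L⌋₊ N, (al l * y + 1)^2) * (4 * (1 + C) / L) ≤ (y^2 * (2 / L) + y^2 / L^2) * (4 * (1 + C) / L) := by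
    gcongr
  have w1 : 1 / (4 * L) + (1 + 4 * C) * e / L ^ 2 ≤ 2 + 4 * C := by
    have a1 : 1 / (4 * L) ≤ 1 := by rw [div_le_one (by positivity)]; linarith
    have a2 : (1 + 4 * C) * e / L ^ 2 ≤ 1 + 4 * C := by
      rw [div_le_iff₀ (by positivity)]
      gcongr
      nlinarith
    linarith
  have w2 : 4 * (1 + C) / L ≤ 4 * (1 + C) := div_le_self (by positivity) (by linarith)
  have x1 : y^2 / L^2 * (1 / (4 * L) + (1 + 4 * C) * e / L ^ 2) ≤ y^2 / L^2 * e * (2 + 4 * C) := by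
    rw [mul_assoc]
    exact mul_le_mul_of_nonneg_left (w1.trans (le_mul_of_one_le_left (by positivity) h2)) (by positivity)
  have x2 : y^2 / L^2 * (4 * (1 + C) / L) ≤ y^2 / L^2 * e * (4 * (1 + C)) := by
    rw [mul_assoc]
    exact mul_le_mul_of_nonneg_left (w2.trans (le_mul_of_one_le_left (by positivity) h2)) (by positivity)
  have x3 : y^2 / L^2 * 1 ≤ y^2 / L^2 * e := by gcongr
  have x4 : y^2 * (2 / L) * (4 * (1 + C) / L) = y^2 / L^2 * (8 * (1 + C)) := by field_simp; ring
  have x5 : y^2 / L^2 * (8 * (1 + C)) ≤ y^2 / L^2 * e * (8 * (1 + C)) := by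
    rw [mul_assoc]
    exact mul_le_mul_of_nonneg_left (le_mul_of_one_le_left (by positivity) h2) (by positivity)
  have x6 : y^2 * SS * (1 / (4 * L) + (1 + 4 * C) * e / L ^ 2) = SS * y^2 / (4 * L) + y^2 / L^2 * e * (SS * (1 + 4 * C)) := by
    field_simp
  have x7 : (SS * (1 + 4 * C) + (2 + 4 * C) + 12 * (1 + C) + 2) * y^2 * e / L^2 = y^2 / L^2 * e * (SS * (1 + 4 * C) + (2 + 4 * C) + 12 * (1 + C) + 2) := by ring
  have x8 : y^2 * (1 / L^2) = y^2 / L^2 := by ring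
  rw [x7]
  rw [x8] at u3
  rw [add_mul (y^2 * SS), x6] at v1
  rw [add_mul (y^2 * (2 / L)), x4] at v2
  linarith

end BEFS

namespace BEFS
set_option linter.unusedSectionVars false

noncomputable def kap : ℝ := 2 / Real.sqrt SS
lemma kap_pos : 0 < kap := div_pos (by norm_num) (Real.sqrt_pos.2 SS_pos)
lemma kap_SS : kap * SS = 2 * Real.sqrt SS := by
  have h := Real.mul_self_sqrt SS_pos.le
  have h0 := Real.sqrt_pos.2 SS_pos
  unfold kap
  rw [div_mul_eq_mul_div, div_eq_iff h0.ne']; nlinarith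
lemma kap_inv : 1 / kap = Real.sqrt SS / 2 := by unfold kap; simp

lemma ev_X (B : ℝ) : ∀ᶠ X : ℝ in atTop, 16 ≤ Real.log X ∧ 1 ≤ Real.log (Real.log X) ∧ B ≤ Real.log (Real.log X) ∧
    B * Real.log (Real.log X) ≤ Real.log X ∧ 16 ≤ X := by
  have h1 := Real.tendsto_log_atTop
  have h2 := h1.comp h1
  have h3 := Real.isLittleO_log_id_atTop.comp_tendsto h1
  have h5 := h3.bound (show (0:ℝ) < 1/(|B| + 1) by positivity)
  filter_upwards [h1.eventually_ge_atTop 16, h2.eventually_ge_atTop 1, h2.eventually_ge_atTop B, h5, eventually_ge_atTop 16] with y a1 a2 a3 a4 a6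
  simp only [Function.comp, id, Real.norm_eq_abs] at a2 a3 a4
  rw [abs_of_nonneg (show 0 ≤ Real.log (Real.log y) by linarith), abs_of_nonneg (show 0 ≤ Real.log y by linarith)] at a4
  refine ⟨a1, a2, a3, ?_, a6⟩
  have : (|B| + 1) * Real.log (Real.log y) ≤ Real.log y := by
    rw [one_div_mul_eq_div, le_div_iff₀ (by positivity)] at a4; linarith
  have h9 := le_abs_self B
  nlinarith

lemma upper : ∃ C : ℝ, 0 < C ∧ ∀ᶠ X : ℝ in atTop, ∀ n : ℕ, 1 ≤ n → Real.log n ≤ X →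
    Real.log (delta (delta (n : ℝ))) ≤ 2 * Real.sqrt SS * Real.sqrt X / Real.log X +
      C * Real.sqrt X * Real.log (Real.log X) / Real.log X ^ 2 := by
  obtain ⟨C, hC, hW⟩ := W_sum
  have hS0 := SS_pos
  have hs0 := Real.sqrt_pos.2 SS_pos
  have hk := kap_pos
  refine ⟨2 + 12 * Real.sqrt SS + 4 * Real.sqrt SS + 16 * C * kap, by positivity, ?_⟩
  have hty : Tendsto (fun X : ℝ => kap * Real.sqrt X) atTop atTop := Real.tendsto_sqrt_atTop.const_mul_atTop hk
  filter_upwards [hty.eventually hW, ev_X (|Real.log kap| + 12)] with X hWX hX n hn hnX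
  obtain ⟨h1, h2, h3, h4, h5⟩ := hX
  obtain ⟨N, hN, hWN⟩ := hWX
  have hX0 : 0 < X := by linarith
  set L := Real.log X with hL
  set e := Real.log L with he
  set R := Real.sqrt X with hR
  have hL0 : 0 < L := by linarith
  have hR0 : 0 < R := Real.sqrt_pos.2 hX0
  have hRR : R * R = X := Real.mul_self_sqrt hX0.le
  have hlR : Real.log R = L / 2 := by rw [hR, Real.log_sqrt hX0.le]
  set y := kap * R with hy
  have hy0 : 0 < y := by positivity
  have habs := abs_nonneg (Real.log kap)
  have h12 : 12 * e ≤ L := by nlinarith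
  have hlk : |Real.log kap| ≤ e := by linarith
  set Q := R / L^3 with hQ
  have hQ0 : 0 < Q := by positivity
  have hlQ : Real.log Q = L / 2 - 3 * e := by
    rw [hQ, Real.log_div hR0.ne' (by positivity), Real.log_pow, hlR]; norm_num [← he]
  have hQ1 : 1 < Q := by rw [← Real.log_pos_iff hQ0.le, hlQ]; linarith
  have hxn : (n:ℝ) ≤ Real.exp X := by
    rw [← Real.log_le_iff_le_exp (by exact_mod_cast hn)]; exact hnX
  have hub := upper_comb hn hxn hQ1 hy0 N hN
  rw [Real.log_exp] at hub
  have T1 : Q * Real.log (2 * X + 1) ≤ 2 * (R * e / L^2) := by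
    have a1 : Real.log (2 * X + 1) ≤ 2 * L := by
      have : Real.log (2 * X + 1) ≤ Real.log (X^2) := Real.log_le_log (by positivity) (by nlinarith)
      rwa [Real.log_pow] at this
    calc Q * Real.log (2 * X + 1) ≤ Q * (2 * L) := by gcongr
      _ = 2 * (R * 1 / L^2) := by rw [hQ]; field_simp
      _ ≤ _ := by gcongr
  have T2 : X / (y * Real.log Q) ≤ Real.sqrt SS * R / L + 12 * Real.sqrt SS * (R * e / L^2) := by
    have a1 : 1 / Real.log Q ≤ 1 / (L/2) + 2 * (3 * e) / (L/2)^2 := inv_pert (by linarith) (by linarith) (by linarith) hlQ.ge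
    have a2 : X / (y * Real.log Q) = R * (1 / kap) * (1 / Real.log Q) := by
      rw [hy, ← hRR]; field_simp
    rw [a2, kap_inv]
    calc _ ≤ R * (Real.sqrt SS / 2) * (1 / (L/2) + 2 * (3 * e) / (L/2)^2) := by gcongr
      _ = _ := by field_simp; ring
  have T3 : (1 / y) * ∑ l ∈ Finset.Icc 1 N, W1 (al l * y + 1) ≤ Real.sqrt SS * R / L + (4 * Real.sqrt SS + 16 * C * kap) * (R * e / L^2) := by
    have hly : Real.log y = L / 2 + Real.log kap := by
      rw [hy, Real.log_mul hk.ne' hR0.ne', hlR]; ring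
    have b1 := (abs_le.1 hlk).1
    have b2 := (abs_le.1 hlk).2
    have hlyL : Real.log y ≤ L := by linarith
    have hly4 : L / 4 ≤ Real.log y := by linarith
    have hlly : Real.log (Real.log y) ≤ e := Real.log_le_log (by linarith) hlyL
    have hlly0 : 0 ≤ Real.log (Real.log y) := Real.log_nonneg (by linarith)
    have hly0 : 0 < Real.log y := by linarith
    have a1 : 1 / Real.log y ≤ 1 / (L/2) + 2 * e / (L/2)^2 := inv_pert (by linarith) (by linarith) (by linarith) (by linarith)
    have a2 : 1 / Real.log y ≤ 4 / L := by rw [div_le_div_iff₀ hly0 hL0]; linarith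
    calc _ ≤ (1 / y) * (SS * y^2 / (4 * Real.log y) + C * y^2 * Real.log (Real.log y) / Real.log y^2) := by gcongr
      _ = y * (SS / 4 * (1 / Real.log y) + C * Real.log (Real.log y) * (1 / Real.log y)^2) := by field_simp
      _ ≤ y * (SS / 4 * (1 / (L/2) + 2 * e / (L/2)^2) + C * e * (4 / L)^2) := by gcongr
      _ = (kap * SS) * (R * (1 / (2 * L) + 2 * e / L^2)) + 16 * C * kap * (R * e / L^2) := by
          rw [hy]; field_simp; ring
      _ = _ := by rw [kap_SS]; field_simp; ring
  have e1 : 2 * Real.sqrt SS * R / L = Real.sqrt SS * R / L + Real.sqrt SS * R / L := by ring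
  have e2 : (2 + 12 * Real.sqrt SS + 4 * Real.sqrt SS + 16 * C * kap) * R * e / L ^ 2 = (2 + 12 * Real.sqrt SS + 4 * Real.sqrt SS + 16 * C * kap) * (R * e / L^2) := by ring
  rw [e1, e2]
  linarith

end BEFS

namespace BEFS
set_option linter.unusedSectionVars false

lemma gg_prod {ι : Type*} (s : Finset ι) (q k : ι → ℕ) (hq : ∀ i ∈ s, (q i).Prime ∧ q i % 4 = 1)
    (hinj : Set.InjOn q s) : gg (∏ i ∈ s, q i ^ k i) = ∏ i ∈ s, (k i + 1) := by
  classical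
  induction s using Finset.induction_on with
  | empty => simp [gg]
  | insert i s hi ih =>
    rw [Finset.prod_insert hi, Finset.prod_insert hi]
    have hqi := hq i (Finset.mem_insert_self _ _)
    have hqs : ∀ j ∈ s, (q j).Prime ∧ q j % 4 = 1 := fun j hj => hq j (Finset.mem_insert_of_mem hj)
    rw [gg_prime_pow _ _ _ hqi.1, ih hqs (hinj.mono (by simp))]
    · unfold ef; rw [if_pos hqi.2]
    · rw [hqi.1.prime.dvd_finsetProd_iff]
      rintro ⟨j, hj, hd⟩
      have := hqi.1.dvd_of_dvd_pow hd
      rw [Nat.prime_dvd_prime_iff_eq hqi.1 (hqs j hj).1] at this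
      have := hinj (by simp) (by simp [hj]) this
      exact hi (this ▸ hj)
    · exact Finset.prod_ne_zero_iff.2 fun j hj => pow_ne_zero _ (hqs j hj).1.ne_zero

lemma filter_init (P : ℕ → Prop) [DecidablePred P] (hP : ∀ l m, 1 ≤ l → l ≤ m → P m → P l) (k : ℕ) :
    (Finset.Icc 1 k).filter P = Finset.Icc 1 (((Finset.Icc 1 k).filter P).card) := by
  induction k with
  | zero => simp
  | succ k ih =>
    by_cases h : P (k + 1)
    · have : (Finset.Icc 1 (k+1)).filter P = Finset.Icc 1 (k+1) := by
        apply Finset.filter_true_of_mem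
        intro l hl
        rw [Finset.mem_Icc] at hl
        exact hP l _ hl.1 hl.2 h
      rw [this]; simp
    · have : (Finset.Icc 1 (k+1)).filter P = (Finset.Icc 1 k).filter P := by
        ext l
        simp only [Finset.mem_filter, Finset.mem_Icc]
        constructor
        · rintro ⟨⟨a, b⟩, c⟩
          refine ⟨⟨a, ?_⟩, c⟩
          rcases Nat.lt_or_eq_of_le b with b | b
          · omega
          · rw [b] at c; exact absurd c h
        · rintro ⟨⟨a, b⟩, c⟩; exact ⟨⟨a, by omega⟩, c⟩
      rw [this]; exact ih

lemma al_anti {l m : ℕ} (hl : 1 ≤ l) (h : l ≤ m) : al m ≤ al l := by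
  unfold al
  have h1 : (1:ℝ) ≤ l := by exact_mod_cast hl
  have h2 : (l:ℝ) ≤ m := by exact_mod_cast h
  have h3 : 1 / (m:ℝ) ≤ 1 / (l:ℝ) := by gcongr
  apply Real.log_le_log (by positivity)
  linarith

lemma pi1_eq (z : ℝ) : pi1 z = (PF ⌊z⌋₊).card := by
  unfold pi1 Su PF f1
  rw [Finset.card_filter]; push_cast; rfl

lemma th_eq (z : ℝ) : ∑ p ∈ PF ⌊z⌋₊, (p:ℝ) = z * pi1 z - W1 z := by
  unfold pi1 Su PF W1 Sm f1
  rw [Finset.sum_filter, Finset.mul_sum, ← Finset.sum_sub_distrib]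
  apply Finset.sum_congr rfl
  intro p _
  split_ifs <;> ring

/-- the multiplicity -/
noncomputable def mult (k : ℕ) (y : ℝ) (p : ℕ) : ℕ := ((Finset.Icc 1 k).filter (fun l => (p:ℝ) ≤ al l * y)).card

lemma mult_sum {k : ℕ} {y : ℝ} (hy : 0 < y) (g : ℕ → ℝ) (h : ℕ → ℝ) :
    ∑ p ∈ PF ⌊y⌋₊, g p * ∑ l ∈ Finset.Icc 1 (mult k y p), h l = ∑ l ∈ Finset.Icc 1 k, h l * ∑ p ∈ PF ⌊al l * y⌋₊, g p := by
  have e1 : ∀ p ∈ PF ⌊y⌋₊, g p * ∑ l ∈ Finset.Icc 1 (mult k y p), h l = ∑ l ∈ Finset.Icc 1 k, if (p:ℝ) ≤ al l * y then h l * g p else 0 := by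
    intro p _
    unfold mult
    rw [← filter_init, Finset.sum_filter, Finset.mul_sum]
    · apply Finset.sum_congr rfl; intro l _; split_ifs <;> ring
    · intro l m hl hlm hm
      refine hm.trans ?_
      have := al_anti hl hlm
      gcongr
  rw [Finset.sum_congr rfl e1, Finset.sum_comm]
  apply Finset.sum_congr rfl
  intro l hl
  rw [← Finset.sum_filter, Finset.mul_sum]
  apply Finset.sum_congr _ (fun _ _ => rfl)
  ext p
  have hl1 := (Finset.mem_Icc.1 hl).1
  have := al_le_one hl1
  have ha := al_nonneg l
  have h3 : al l * y ≤ y := by nlinarith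
  have h4 : 0 ≤ al l * y := by positivity
  rw [Finset.mem_filter, mem_PF, mem_PF, Nat.le_floor_iff hy.le, Nat.le_floor_iff h4]
  constructor
  · rintro ⟨⟨_, b⟩, c⟩; exact ⟨c, b⟩
  · rintro ⟨c, b⟩; exact ⟨⟨c.trans h3, b⟩, c⟩

lemma lower_comb {k : ℕ} {y Q : ℝ} (hy : 0 < y) (hQ : 1 ≤ Q) (hK : ∑ l ∈ Finset.Icc 1 k, pi1 (al l * y) ≤ pi1 Q) :
    ∃ n : ℕ, 1 ≤ n ∧ Real.log n ≤ Real.log Q * ∑ l ∈ Finset.Icc 1 k, (al l * y * pi1 (al l * y) - W1 (al l * y)) ∧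
      Real.log (delta (delta (n:ℝ))) = ∑ l ∈ Finset.Icc 1 k, al l * pi1 (al l * y) := by
  classical
  set P := PF ⌊y⌋₊ with hP
  set I : Finset (Σ _ : ℕ, ℕ) := P.sigma (fun p => Finset.range (mult k y p)) with hI
  have hIc : (I.card : ℝ) = ∑ l ∈ Finset.Icc 1 k, pi1 (al l * y) := by
    rw [hI, Finset.card_sigma]
    have := mult_sum (k := k) hy (fun _ => 1) (fun _ => 1)
    simp only [Finset.sum_const, Nat.card_Icc, Nat.add_sub_cancel, nsmul_eq_mul, mul_one, one_mul] at this
    simp only [Finset.card_range, pi1_eq]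
    push_cast
    exact this
  have hcard : Fintype.card I ≤ Fintype.card (PF ⌊Q⌋₊) := by
    rw [Fintype.card_coe, Fintype.card_coe]
    rw [← hIc, pi1_eq] at hK
    exact_mod_cast hK
  obtain ⟨f⟩ := Function.Embedding.nonempty_of_card_le hcard
  have hfm : ∀ i : I, ((f i : ℕ) ≤ ⌊Q⌋₊ ∧ (f i : ℕ).Prime ∧ (f i : ℕ) % 4 = 1) := fun i => mem_PF.1 (f i).2
  have hIp : ∀ i : I, (i.1.1).Prime ∧ i.1.1 % 4 = 1 := by
    intro i
    have := (Finset.mem_sigma.1 i.2).1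
    exact (mem_PF.1 this).2
  set n := ∏ i : I, (f i : ℕ) ^ (i.1.1 - 1) with hn
  have hn0 : n ≠ 0 := Finset.prod_ne_zero_iff.2 fun j _ => pow_ne_zero _ (hfm j).2.1.ne_zero
  have hg1 : gg n = ∏ p ∈ P, p ^ (mult k y p) := by
    rw [hn, gg_prod Finset.univ (fun i : I => (f i : ℕ)) (fun i => i.1.1 - 1) (fun i _ => (hfm i).2)]
    · have : ∀ i ∈ (Finset.univ : Finset I), i.1.1 - 1 + 1 = i.1.1 := fun i _ => by have := (hIp i).1.pos; omega
      rw [Finset.prod_congr rfl this]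
      rw [Finset.prod_coe_sort I (fun i => i.1), hI, Finset.prod_sigma]
      simp
    · intro i _ j _ hij
      exact f.injective (Subtype.ext hij)
  have hPp : ∀ p ∈ P, p.Prime ∧ p % 4 = 1 := fun p hp => (mem_PF.1 hp).2
  have hg2 : gg (gg n) = ∏ p ∈ P, (mult k y p + 1) := by
    rw [hg1]; exact gg_prod P id _ hPp (Function.injective_id.injOn)
  have hg0 : gg n ≠ 0 := by
    rw [hg1]; exact Finset.prod_ne_zero_iff.2 fun j hj => pow_ne_zero _ (hPp j hj).1.ne_zero
  refine ⟨n, Nat.pos_of_ne_zero hn0, ?_, ?_⟩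
  · have hlQ : 0 ≤ Real.log Q := Real.log_nonneg hQ
    have e1 : Real.log n = ∑ i : I, ((i.1.1 - 1 : ℕ) : ℝ) * Real.log (f i : ℕ) := by
      rw [hn]; push_cast
      rw [Real.log_prod]
      · simp [Real.log_pow]
      · intro i _
        have : (f i : ℕ) ≠ 0 := (hfm i).2.1.ne_zero
        exact pow_ne_zero _ (by exact_mod_cast this)
    have e2 : Real.log n ≤ ∑ i : I, (i.1.1 : ℝ) * Real.log Q := by
      rw [e1]
      apply Finset.sum_le_sum
      intro i _
      have h1 : ((i.1.1 - 1 : ℕ) : ℝ) ≤ i.1.1 := by exact_mod_cast Nat.sub_le _ _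
      have h2 : Real.log (f i : ℕ) ≤ Real.log Q := by
        apply Real.log_le_log
        · exact_mod_cast (hfm i).2.1.pos
        · exact (Nat.le_floor_iff (by linarith)).1 (hfm i).1
      exact mul_le_mul h1 h2 (Real.log_natCast_nonneg _) (by positivity)
    refine e2.trans (le_of_eq ?_)
    rw [← Finset.sum_mul, mul_comm]
    congr 1
    rw [Finset.sum_coe_sort I (fun i => (i.1:ℝ)), hI, Finset.sum_sigma]
    have := mult_sum (k := k) hy (fun p => (p:ℝ)) (fun _ => 1)
    simp only [Finset.sum_const, Nat.card_Icc, Nat.add_sub_cancel, nsmul_eq_mul, mul_one, one_mul, th_eq] at this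
    rw [← this]
    simp [hP, mul_comm]
  · rw [delta_gg n hn0, delta_gg _ hg0, hg2]
    push_cast
    rw [Real.log_prod (fun p _ => by positivity)]
    have := mult_sum (k := k) hy (fun _ => 1) al
    simp only [one_mul, Finset.sum_const, nsmul_eq_mul, mul_one] at this
    simp only [pi1_eq]
    rw [← this]
    apply Finset.sum_congr rfl
    intro p _
    rw [← log_one_add, add_comm]

end BEFS

namespace BEFS
set_option linter.unusedSectionVars false

lemma pi1_le {z : ℝ} (hz : 0 ≤ z) : pi1 z ≤ z := by
  rw [pi1_eq]
  have : (PF ⌊z⌋₊).card ≤ ⌊z⌋₊ := by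
    have := Finset.card_filter_le (Finset.Icc 1 ⌊z⌋₊) (fun p => p.Prime ∧ p % 4 = 1)
    rwa [Nat.card_Icc, Nat.add_sub_cancel] at this
  exact (by exact_mod_cast this : ((PF ⌊z⌋₊).card : ℝ) ≤ ⌊z⌋₊).trans (Nat.floor_le hz)

lemma pi1_low : ∀ᶠ z : ℝ in atTop, z / (4 * Real.log z) ≤ pi1 z := by
  obtain ⟨C, hC, h⟩ := pi_asym
  filter_upwards [h, ev_X (4 * C)] with z hz hX
  obtain ⟨h1, h2, h3, h4, h5⟩ := hX
  have := (abs_le.1 hz).1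
  have hL : 0 < Real.log z := by linarith
  have e1 : C*z*Real.log (Real.log z)/Real.log z^2 ≤ z / (4 * Real.log z) := by
    rw [div_le_div_iff₀ (by positivity) (by positivity)]
    have := mul_le_mul_of_nonneg_left h4 (show 0 ≤ z * Real.log z by positivity)
    nlinarith
  have e2 : z / (2 * Real.log z) = z / (4 * Real.log z) + z / (4 * Real.log z) := by field_simp; norm_num
  linarith

lemma pt_low (C D z0 : ℝ) (hC : 0 < C) (hD : 0 < D) (hz0 : Real.exp (Real.exp 1) ≤ z0)
    (hW : ∀ z, z0 ≤ z → |W1 z - z^2/(4*Real.log z)| ≤ C*z^2*Real.log (Real.log z)/Real.log z^2)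
    (hpi : ∀ z, z0 ≤ z → |pi1 z - z/(2*Real.log z)| ≤ D*z*Real.log (Real.log z)/Real.log z^2)
    {y : ℝ} (h1 : 16 ≤ Real.log y) (h2 : 1 ≤ Real.log (Real.log y)) (h3 : 8 * Real.log (Real.log y) ≤ Real.log y)
    (h4 : z0 ≤ Real.sqrt y / 4) (h5 : 4 * Real.log y ^ 2 ≤ Real.sqrt y) (h7 : 16 ≤ y) {l : ℕ} (hl : 1 ≤ l) (hlL : (l:ℝ) ≤ Real.log y) :
    al l * y * (1 / (2 * Real.log y) - 4 * D * Real.log (Real.log y) / Real.log y^2) ≤ pi1 (al l * y) ∧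
    al l * y * pi1 (al l * y) - W1 (al l * y) ≤ (al l * y)^2 * (1 / (4 * Real.log y) + (1 + 4 * (C + D)) * Real.log (Real.log y) / Real.log y ^ 2) := by
  set L := Real.log y with hL
  set e := Real.log L with he
  set z := al l * y with hz
  have hl1 : (1:ℝ) ≤ l := by exact_mod_cast hl
  have hs0 : 0 < Real.sqrt y := Real.sqrt_pos.2 (by linarith)
  have hyy : Real.sqrt y * Real.sqrt y = y := Real.mul_self_sqrt (by linarith)
  have hzlow : y / (2 * L) ≤ z := by
    have q1 := al_ge hl
    have q2 : 1 / (2 * L) ≤ 1 / (2 * (l:ℝ)) := by gcongr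
    have q3 : 1 / (2 * L) * y ≤ al l * y := by gcongr; linarith
    have q4 : y / (2 * L) = 1 / (2 * L) * y := by ring
    linarith
  have hzs : Real.sqrt y / 2 ≤ z := by
    refine le_trans ?_ hzlow
    rw [div_le_div_iff₀ (by norm_num) (by positivity)]
    nlinarith
  have hzz0 : z0 ≤ z := by linarith
  have hzee : Real.exp (Real.exp 1) ≤ z := by linarith
  have hzp : 0 < z := (Real.exp_pos _).trans_le hzee
  have hlz : Real.exp 1 ≤ Real.log z := by rwa [Real.le_log_iff_exp_le hzp]
  have hlz0 : 0 < Real.log z := (Real.exp_pos _).trans_le hlz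
  have hllz : 1 ≤ Real.log (Real.log z) := by rwa [Real.le_log_iff_exp_le hlz0]
  have hzy : z ≤ y := by
    have := al_le_one hl
    have : al l * y ≤ 7/10 * y := by gcongr
    linarith
  have hlzL : Real.log z ≤ L := Real.log_le_log hzp hzy
  have hllze : Real.log (Real.log z) ≤ e := Real.log_le_log hlz0 hlzL
  have hWz := (abs_le.1 (hW z hzz0)).1
  have hpz := abs_le.1 (hpi z hzz0)
  have q1 : L - 2 * e ≤ Real.log z := by
    have := Real.log_le_log (by positivity) hzlow
    rw [Real.log_div (by linarith) (by positivity), Real.log_mul (by norm_num) (by linarith)] at this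
    have := Real.log_two_lt_d9
    linarith
  have q2 : 1 / Real.log z ≤ 1 / L + 2 * (2 * e) / L^2 := inv_pert (by linarith) (by linarith) (by linarith) q1
  have q3 : 1 / Real.log z ≤ 2 / L := by
    rw [div_le_div_iff₀ hlz0 (by linarith)]; linarith
  have q6 : 1 / L ≤ 1 / Real.log z := one_div_le_one_div_of_le hlz0 hlzL
  have q4 : Real.log (Real.log z) * (1 / Real.log z)^2 ≤ e * (2 / L)^2 := by gcongr
  constructor
  · have r1 : z/(2*Real.log z) - D*z*Real.log (Real.log z)/Real.log z^2 = z * (1 / Real.log z / 2 - D * (Real.log (Real.log z) * (1 / Real.log z)^2)) := by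
      field_simp
    have r2 : z * (1 / (2 * L) - 4 * D * e / L^2) = z * (1 / L / 2 - D * (e * (2 / L)^2)) := by field_simp; ring
    have r3 : z * (1 / L / 2 - D * (e * (2 / L)^2)) ≤ z * (1 / Real.log z / 2 - D * (Real.log (Real.log z) * (1 / Real.log z)^2)) := by
      gcongr
    linarith
  · have r0 : z * pi1 z ≤ z * (z/(2*Real.log z) + D*z*Real.log (Real.log z)/Real.log z^2) := by
      gcongr; linarith
    have r1 : z * (z/(2*Real.log z) + D*z*Real.log (Real.log z)/Real.log z^2) - (z^2/(4*Real.log z) - C*z^2*Real.log (Real.log z)/Real.log z^2) = z^2 * (1 / Real.log z / 4 + (C + D) * (Real.log (Real.log z) * (1 / Real.log z)^2)) := by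
      field_simp; ring
    have r2 : z^2 * (1 / (4 * L) + (1 + 4 * (C + D)) * e / L ^ 2) = z^2 * ((1 / L + 2 * (2 * e) / L^2) / 4 + (C + D) * (e * (2 / L)^2)) := by
      field_simp; ring
    have r3 : z^2 * (1 / Real.log z / 4 + (C + D) * (Real.log (Real.log z) * (1 / Real.log z)^2)) ≤ z^2 * ((1 / L + 2 * (2 * e) / L^2) / 4 + (C + D) * (e * (2 / L)^2)) := by
      gcongr
    linarith

set_option maxHeartbeats 800000 in
lemma low_y : ∃ D D' : ℝ, 0 < D ∧ 0 < D' ∧ ∀ᶠ y : ℝ in atTop, ∃ n : ℕ, 1 ≤ n ∧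
    Real.log n ≤ SS * y^2 / 4 * (1 + D * Real.log (Real.log y) / Real.log y) ∧
    SS * y / (2 * Real.log y) - D' * y * Real.log (Real.log y) / Real.log y^2 ≤ Real.log (delta (delta (n:ℝ))) := by
  obtain ⟨C, hC, hW⟩ := W_asym
  obtain ⟨D, hD, hpi⟩ := pi_asym
  obtain ⟨z1, hz1⟩ := eventually_atTop.1 (hW.and (hpi.and pi1_low))
  have hSS := SS_pos
  have hB : ∃ B, B = 1 + 4 * (C + D) := ⟨_, rfl⟩
  obtain ⟨B, hB⟩ := hB
  have hB0 : 0 < B := by rw [hB]; positivity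
  refine ⟨4 * (1 + 4 * B), 1 + 4 * D * SS, by positivity, by positivity, ?_⟩
  filter_upwards [ev_y (max z1 (Real.exp (Real.exp 1)))] with y hy
  obtain ⟨h1, h2, h3, h4, h5, h6, h7⟩ := hy
  have hpt := fun (l : ℕ) hl hlL => pt_low C D _ hC hD (le_max_right z1 (Real.exp (Real.exp 1))) (fun z hz => (hz1 z ((le_max_left _ _).trans hz)).1) (fun z hz => (hz1 z ((le_max_left _ _).trans hz)).2.1) h1 h2 h3 h4 h5 h7 (l := l) hl hlL
  set L := Real.log y with hL
  set e := Real.log L with he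
  have hy0 : 0 < y := by linarith
  have hL0 : 0 < L := by linarith
  have hfl : L / 2 ≤ ⌊L⌋₊ := by have := Nat.lt_floor_add_one L; linarith
  have hfl0 : ⌊L⌋₊ ≠ 0 := by
    intro h; rw [h] at hfl; simp at hfl; linarith
  have hlL : ∀ l ∈ Finset.Icc 1 ⌊L⌋₊, (l:ℝ) ≤ L := fun l hl => (Nat.le_floor_iff hL0.le).1 (Finset.mem_Icc.1 hl).2
  set Q := y * L^3 with hQ
  have hL1 : 1 ≤ L^3 := one_le_pow₀ (by linarith)
  have hQy : y ≤ Q := by nlinarith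
  have hQ0 : 0 < Q := by positivity
  have hlQ : Real.log Q = L + 3 * e := by
    rw [hQ, Real.log_mul hy0.ne' (by positivity), Real.log_pow]; norm_num [← he, ← hL]
  have hsy : Real.sqrt y ≤ y := Real.sqrt_le_iff.2 ⟨by linarith, by nlinarith⟩
  have hz1Q : z1 ≤ Q := by
    have := le_max_left z1 (Real.exp (Real.exp 1))
    have : 0 ≤ Real.sqrt y := Real.sqrt_nonneg y
    linarith
  have hpQ := (hz1 Q hz1Q).2.2
  have hK : ∑ l ∈ Finset.Icc 1 ⌊L⌋₊, pi1 (al l * y) ≤ pi1 Q := by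
    refine le_trans ?_ hpQ
    calc _ ≤ ∑ l ∈ Finset.Icc 1 ⌊L⌋₊, al l * y := Finset.sum_le_sum fun l _ => pi1_le (mul_nonneg (al_nonneg l) hy0.le)
      _ = Real.log (1 + ⌊L⌋₊) * y := by rw [← Finset.sum_mul, log_one_add]
      _ ≤ L * y := by
          gcongr
          have := Real.log_le_sub_one_of_pos (show (0:ℝ) < 1 + ⌊L⌋₊ by positivity)
          have := Nat.floor_le hL0.le
          linarith
      _ ≤ Q / (8 * L) := by
          rw [hQ, le_div_iff₀ (by positivity)]
          have : L * y * (8 * L) = (y * L^2) * 8 := by ring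
          have : y * L^3 = (y * L^2) * L := by ring
          have : 0 < y * L^2 := by positivity
          nlinarith
      _ ≤ _ := by
          rw [hlQ]
          exact div_le_div_of_nonneg_left hQ0.le (by positivity) (by linarith)
  obtain ⟨n, hn1, hn2, hn3⟩ := lower_comb hy0 (show 1 ≤ Q by linarith) hK
  refine ⟨n, hn1, hn2.trans ?_, ?_⟩
  · have a1 : ∑ l ∈ Finset.Icc 1 ⌊L⌋₊, (al l * y * pi1 (al l * y) - W1 (al l * y)) ≤ y^2 * SS * (1 / (4 * L) + B * e / L^2) := by
      calc _ ≤ ∑ l ∈ Finset.Icc 1 ⌊L⌋₊, (al l * y)^2 * (1 / (4 * L) + B * e / L^2) := by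
            apply Finset.sum_le_sum
            intro l hl
            rw [hB]
            exact (hpt l (Finset.mem_Icc.1 hl).1 (hlL l hl)).2
        _ = y^2 * (∑ l ∈ Finset.Icc 1 ⌊L⌋₊, al l ^2) * (1 / (4 * L) + B * e / L^2) := by
            rw [← Finset.sum_mul, Finset.mul_sum]
            congr 1
            apply Finset.sum_congr rfl; intro l _; ring
        _ ≤ _ := by
            have := sum_al_le ⌊L⌋₊
            gcongr
    rw [hlQ]
    have a2 : (L + 3 * e) * (1 / (4 * L) + B * e / L^2) ≤ 1 / 4 * (1 + 4 * (1 + 4 * B) * e / L) := by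
      have b1 : (L + 3 * e) * (1 / (4 * L) + B * e / L^2) = 1 / 4 + (3 / 4 + B) * (e / L) + 3 * B * ((e / L) * (e / L)) := by field_simp; ring
      have b2 : 1 / 4 * (1 + 4 * (1 + 4 * B) * e / L) = 1 / 4 + (1 + 4 * B) * (e / L) := by ring
      have b3 : e / L ≤ 1 := by rw [div_le_one hL0]; linarith
      have b4 : 0 ≤ e / L := by positivity
      have b5 : (e / L) * (e / L) ≤ e / L := by nlinarith
      rw [b1, b2]
      have b6 : 3 * B * ((e / L) * (e / L)) ≤ 3 * B * (e / L) := by gcongr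
      nlinarith
    calc _ ≤ (L + 3 * e) * (y^2 * SS * (1 / (4 * L) + B * e / L^2)) := by gcongr
      _ = y^2 * SS * ((L + 3 * e) * (1 / (4 * L) + B * e / L^2)) := by ring
      _ ≤ y^2 * SS * (1 / 4 * (1 + 4 * (1 + 4 * B) * e / L)) := by gcongr
      _ = _ := by ring
  · rw [hn3]
    have a1 : ∑ l ∈ Finset.Icc 1 ⌊L⌋₊, al l * (al l * y * (1 / (2 * L) - 4 * D * e / L^2)) ≤ ∑ l ∈ Finset.Icc 1 ⌊L⌋₊, al l * pi1 (al l * y) := by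
      apply Finset.sum_le_sum
      intro l hl
      exact mul_le_mul_of_nonneg_left (hpt l (Finset.mem_Icc.1 hl).1 (hlL l hl)).1 (al_nonneg l)
    refine le_trans ?_ a1
    have a2 : ∑ l ∈ Finset.Icc 1 ⌊L⌋₊, al l * (al l * y * (1 / (2 * L) - 4 * D * e / L^2)) = (∑ l ∈ Finset.Icc 1 ⌊L⌋₊, al l ^2) * (y / (2 * L)) - (∑ l ∈ Finset.Icc 1 ⌊L⌋₊, al l ^2) * (4 * D * y * e / L^2) := by
      rw [← mul_sub, Finset.sum_mul]
      apply Finset.sum_congr rfl; intro l _; ring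
    rw [a2]
    have s1 := sum_al_le ⌊L⌋₊
    have s2 := SS_le hfl0
    have s3 : 1 / (⌊L⌋₊ : ℝ) ≤ 2 / L := by
      rw [div_le_div_iff₀ (by linarith) hL0]; linarith
    have t1 : (SS - 2 / L) * (y / (2 * L)) ≤ (∑ l ∈ Finset.Icc 1 ⌊L⌋₊, al l ^2) * (y / (2 * L)) := by
      gcongr; linarith
    have t2 : (∑ l ∈ Finset.Icc 1 ⌊L⌋₊, al l ^2) * (4 * D * y * e / L^2) ≤ SS * (4 * D * y * e / L^2) := by
      gcongr
    have t3 : (SS - 2 / L) * (y / (2 * L)) = SS * y / (2 * L) - y * 1 / L^2 := by field_simp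
    have t4 : y * 1 / L^2 ≤ y * e / L^2 := by gcongr
    have t5 : (1 + 4 * D * SS) * y * e / L^2 = y * e / L^2 + SS * (4 * D * y * e / L^2) := by ring
    linarith

set_option maxHeartbeats 1000000 in
lemma lower : ∃ C : ℝ, 0 < C ∧ ∀ᶠ X : ℝ in atTop, ∃ n : ℕ, 1 ≤ n ∧ Real.log n ≤ X ∧
    2 * Real.sqrt SS * Real.sqrt X / Real.log X - C * Real.sqrt X * Real.log (Real.log X) / Real.log X ^ 2
      ≤ Real.log (delta (delta (n : ℝ))) := by
  obtain ⟨D, D', hD, hD', hlow⟩ := low_y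
  obtain ⟨y0, hy0⟩ := eventually_atTop.1 hlow
  have hS0 := SS_pos
  have hs0 := Real.sqrt_pos.2 SS_pos
  have hk := kap_pos
  refine ⟨2 * Real.sqrt SS * (4 * D + 2) + 16 * D' * kap, by positivity, ?_⟩
  have hty : Tendsto (fun X : ℝ => kap / 2 * Real.sqrt X) atTop atTop := Real.tendsto_sqrt_atTop.const_mul_atTop (by positivity)
  filter_upwards [hty.eventually_ge_atTop y0, ev_X (|Real.log kap| + 12 + 8 * D)] with X hyX hX
  obtain ⟨h1, h2, h3, h4, h5⟩ := hX
  have hX0 : 0 < X := by linarith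
  set L := Real.log X with hL
  set e := Real.log L with he
  set R := Real.sqrt X with hR
  have hL0 : 0 < L := by linarith
  have hR0 : 0 < R := Real.sqrt_pos.2 hX0
  have hRR : R * R = X := Real.mul_self_sqrt hX0.le
  have hlR : Real.log R = L / 2 := by rw [hR, Real.log_sqrt hX0.le]
  have habs := abs_nonneg (Real.log kap)
  have h12 : 12 * e ≤ L := by
    have : 0 ≤ (|Real.log kap| + 8 * D) * e := by positivity
    nlinarith
  have h8 : 8 * D * e ≤ L := by
    have : 0 ≤ (|Real.log kap| + 12) * e := by positivity
    nlinarith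
  have hlk : |Real.log kap| + 12 ≤ e := by linarith
  have b1 := neg_abs_le (Real.log kap)
  have b2 := le_abs_self (Real.log kap)
  set η := 4 * D * (e / L) with hη
  have hη0 : 0 ≤ η := by positivity
  have hη1 : η ≤ 1 / 2 := by
    have : η = 4 * D * e / L := by rw [hη]; ring
    rw [this, div_le_iff₀ hL0]; linarith
  set y := kap * R * (1 - η) with hy
  have hkR : 0 < kap * R := by positivity
  have hylow : kap / 2 * R ≤ y := by
    have : kap / 2 * R = kap * R * (1 / 2) := by ring
    rw [this, hy]; gcongr; linarith
  have hyup : y ≤ kap * R := by nlinarith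
  have hyp : 0 < y := lt_of_lt_of_le (by positivity) hylow
  obtain ⟨n, hn1, hn2, hn3⟩ := hy0 y (hyX.trans hylow)
  have c1 : L / 2 - e ≤ Real.log y := by
    have := Real.log_le_log (by positivity) hylow
    rw [Real.log_mul (by positivity) hR0.ne', Real.log_div hk.ne' (by norm_num), hlR] at this
    have := Real.log_two_lt_d9
    linarith
  have c2 : Real.log y ≤ L / 2 + e := by
    have := Real.log_le_log hyp hyup
    rw [Real.log_mul hk.ne' hR0.ne', hlR] at this
    linarith
  have c3 : L / 4 ≤ Real.log y := by linarith
  have c4 : 0 < Real.log y := by linarith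
  have c5 : Real.log (Real.log y) ≤ e := Real.log_le_log c4 (by linarith)
  have c6 : 0 ≤ Real.log (Real.log y) := Real.log_nonneg (by linarith)
  have c7 : 1 / Real.log y ≤ 4 / L := by rw [div_le_div_iff₀ c4 hL0]; linarith
  refine ⟨n, hn1, hn2.trans ?_, le_trans ?_ hn3⟩
  · have d1 : D * Real.log (Real.log y) / Real.log y ≤ η := by
      calc _ = D * Real.log (Real.log y) * (1 / Real.log y) := by ring
        _ ≤ D * e * (4 / L) := by gcongr
        _ = _ := by rw [hη]; ring
    have d2 : SS * y^2 / 4 = X * (1 - η)^2 := by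
      have : SS * y^2 / 4 = (kap * SS) * kap / 4 * (R * R) * (1 - η)^2 := by rw [hy]; ring
      rw [this, hRR, kap_SS]
      unfold kap
      field_simp; ring
    rw [d2]
    calc _ ≤ X * (1 - η)^2 * (1 + η) := by gcongr
      _ = X * ((1 - η) * (1 - η^2)) := by ring
      _ ≤ X * 1 := by
          gcongr
          nlinarith [sq_nonneg η]
      _ = X := by ring
  · have d1 : D' * y * Real.log (Real.log y) / Real.log y^2 ≤ 16 * D' * kap * R * e / L^2 := by
      calc _ = D' * y * Real.log (Real.log y) * (1 / Real.log y)^2 := by field_simp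
        _ ≤ D' * (kap * R) * e * (4 / L)^2 := by gcongr
        _ = _ := by ring
    have d2 : 2 / L * (1 - 2 * (e / L)) ≤ 1 / Real.log y := by
      refine le_trans ?_ (one_div_le_one_div_of_le c4 c2)
      rw [le_div_iff₀ (by linarith)]
      have : 2 / L * (1 - 2 * (e / L)) * (L / 2 + e) = 1 - 4 * (e / L)^2 := by field_simp; ring
      rw [this]; nlinarith [sq_nonneg (e / L)]
    have d3 : Real.sqrt SS * R * (2 / L) * (1 - η - 2 * (e / L)) ≤ SS * y / (2 * Real.log y) := by
      have f1 : SS * y / (2 * Real.log y) = Real.sqrt SS * R * (1 - η) * (1 / Real.log y) := by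
        have : SS * y / (2 * Real.log y) = (kap * SS) / 2 * R * (1 - η) * (1 / Real.log y) := by rw [hy]; field_simp
        rw [this, kap_SS]; ring
      rw [f1]
      have h1η : 0 ≤ 1 - η := by linarith
      calc _ ≤ Real.sqrt SS * R * (2 / L) * ((1 - η) * (1 - 2 * (e / L))) := by
            gcongr
            have : 0 ≤ η * (e / L) := by positivity
            nlinarith
        _ = Real.sqrt SS * R * (1 - η) * (2 / L * (1 - 2 * (e / L))) := by ring
        _ ≤ _ := by gcongr
    have d4 : Real.sqrt SS * R * (2 / L) * (1 - η - 2 * (e / L)) = 2 * Real.sqrt SS * R / L - 2 * Real.sqrt SS * (4 * D + 2) * R * e / L^2 := by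
      rw [hη]; field_simp; ring
    have d5 : (2 * Real.sqrt SS * (4 * D + 2) + 16 * D' * kap) * R * e / L ^ 2 = 2 * Real.sqrt SS * (4 * D + 2) * R * e / L^2 + 16 * D' * kap * R * e / L^2 := by ring
    linarith

end BEFS

/-- `max_{n ≤ x} log δ(δ(n)) = (√(log x)/log₂ x)·(c/√2 + O(log₃ x/log₂ x))` as `x → ∞`. -/
theorem maxOrder_iterated_delta :
    ∃ C : ℝ, 0 < C ∧ ∀ᶠ x : ℕ in atTop,
      |(⨆ n ∈ Finset.Icc 1 x, Real.log (delta (delta (n : ℝ)))) -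
          Real.sqrt (Real.log x) / Real.log (Real.log x) * (cBEFS / Real.sqrt 2)| ≤
        C * (Real.sqrt (Real.log x) / Real.log (Real.log x)) *
          (Real.log (Real.log (Real.log x)) / Real.log (Real.log x)) := by
  obtain ⟨C1, hC1, hU⟩ := BEFS.upper
  obtain ⟨C2, hC2, hL⟩ := BEFS.lower
  have hc : cBEFS / Real.sqrt 2 = 2 * Real.sqrt BEFS.SS := by
    have h1 : cBEFS = Real.sqrt (8 * BEFS.SS) := by
      unfold cBEFS BEFS.SS BEFS.al
      push_cast
      rfl
    rw [h1, ← Real.sqrt_div (by have := BEFS.SS_pos; positivity), show 8 * BEFS.SS / 2 = 2 ^ 2 * BEFS.SS by ring,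
      Real.sqrt_mul (by norm_num), Real.sqrt_sq (by norm_num)]
  have ht : Tendsto (fun x : ℕ => Real.log (x : ℝ)) atTop atTop := Real.tendsto_log_atTop.comp tendsto_natCast_atTop_atTop
  refine ⟨C1 + C2, by positivity, ?_⟩
  filter_upwards [ht.eventually hU, ht.eventually hL, ht.eventually (BEFS.ev_X 0), eventually_ge_atTop 1] with x hUx hLx hX hx1
  obtain ⟨h1, h2, -, -, h5⟩ := hX
  rw [hc]
  have hs := Real.sqrt_nonneg BEFS.SS
  generalize hXd : Real.log (x : ℝ) = X at *
  have hR := Real.sqrt_nonneg X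
  have hE : 0 ≤ Real.sqrt X * Real.log (Real.log X) / Real.log X ^ 2 := by positivity
  have hM : 0 ≤ 2 * Real.sqrt BEFS.SS * Real.sqrt X / Real.log X := by positivity
  have e1 : Real.sqrt X / Real.log X * (2 * Real.sqrt BEFS.SS) = 2 * Real.sqrt BEFS.SS * Real.sqrt X / Real.log X := by ring
  have e2 : (C1 + C2) * (Real.sqrt X / Real.log X) * (Real.log (Real.log X) / Real.log X) = C1 * Real.sqrt X * Real.log (Real.log X) / Real.log X ^ 2 + C2 * Real.sqrt X * Real.log (Real.log X) / Real.log X ^ 2 := by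
    ring
  have e3 : C1 * Real.sqrt X * Real.log (Real.log X) / Real.log X ^ 2 = C1 * (Real.sqrt X * Real.log (Real.log X) / Real.log X ^ 2) := by ring
  have e4 : C2 * Real.sqrt X * Real.log (Real.log X) / Real.log X ^ 2 = C2 * (Real.sqrt X * Real.log (Real.log X) / Real.log X ^ 2) := by ring
  have hE1 := mul_nonneg hC1.le hE
  have hE2 := mul_nonneg hC2.le hE
  rw [e1, e2]
  have hin : ∀ n : ℕ, (⨆ (_ : n ∈ Finset.Icc 1 x), Real.log (delta (delta (n : ℝ)))) ≤
      2 * Real.sqrt BEFS.SS * Real.sqrt X / Real.log X + C1 * Real.sqrt X * Real.log (Real.log X) / Real.log X ^ 2 := by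
    intro n
    by_cases hn : n ∈ Finset.Icc 1 x
    · rw [ciSup_pos hn]
      rw [Finset.mem_Icc] at hn
      apply hUx n hn.1
      rw [← hXd]
      exact Real.log_le_log (by exact_mod_cast hn.1) (by exact_mod_cast hn.2)
    · have : IsEmpty (n ∈ Finset.Icc 1 x) := ⟨hn⟩
      rw [Real.iSup_of_isEmpty]
      linarith
  have hup := ciSup_le hin
  obtain ⟨n, hn1, hn2, hn3⟩ := hLx
  have hnx : n ≤ x := by
    rw [← hXd] at hn2
    have := (Real.log_le_log_iff (by exact_mod_cast hn1) (by exact_mod_cast hx1)).1 hn2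
    exact_mod_cast this
  have hmem : n ∈ Finset.Icc 1 x := Finset.mem_Icc.2 ⟨hn1, hnx⟩
  have hlo : Real.log (delta (delta (n : ℝ))) ≤ ⨆ n ∈ Finset.Icc 1 x, Real.log (delta (delta (n : ℝ))) := by
    have := le_ciSup (f := fun n : ℕ => ⨆ (_ : n ∈ Finset.Icc 1 x), Real.log (delta (delta (n : ℝ)))) ⟨_, Set.forall_mem_range.2 hin⟩ n
    rwa [ciSup_pos hmem] at this
  rw [abs_le]
  constructor <;> linarith
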